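/- Let (s_1,…,s_m) = N(σ_1,…,σ_m) be a Nikishin system and let n = (n_0,n_1,…,n_m) ∈ ℤ₊^{m+1}(*). Then the system of functions (1, ŝ_1,…,ŝ_m) is an AT-system for n on every closed interval Δ disjoint from Co(supp(σ_1)): for any polynomials h_0,…,h_m with deg h_i ≤ n_i − 1 for all i (deg ≤ −1 meaning h_i ≡ 0), not all identically zero, the function h_0(x) + Σ_{k=1}^m h_k(x)·ŝ_k(x) has at most |n| − 1 zeros on Δ, counting multiplicities, where |n| = n_0 + … + n_m. -/

import Mathlib

open MeasureTheory Polynomial Set Filter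

noncomputable section

/-- The support of a Borel measure on `ℝ`. -/
def msupport (μ : Measure ℝ) : Set ℝ :=
  {x : ℝ | ∀ U : Set ℝ, IsOpen U → x ∈ U → μ U ≠ 0}

/-- The copy of a real set inside `ℂ`. -/
def cpx (s : Set ℝ) : Set ℂ := (fun x : ℝ => (x : ℂ)) '' s

/-- `nikhat μ e j g` is the Cauchy transform of the measure `⟨σ_j, …, σ_{j+g}⟩`,
where `σ_i = (e i) • (μ i)` is a measure of constant sign. -/
def nikhat (μ : ℕ → Measure ℝ) (e : ℕ → ℝ) : ℕ → ℕ → ℂ → ℂ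
  | j, 0, z => (e j : ℂ) * ∫ t, 1 / (z - (t : ℂ)) ∂(μ j)
  | j, g + 1, z => (e j : ℂ) * ∫ t, nikhat μ e (j + 1) g (t : ℂ) / (z - (t : ℂ)) ∂(μ j)

/-- `f` has at most `N` zeros, counting multiplicities, on `D ⊆ ℂ`
(multiplicities measured through vanishing of iterated derivatives). -/
def CZerosLE (f : ℂ → ℂ) (D : Set ℂ) (N : ℕ) : Prop :=
  ∀ (S : Finset ℂ) (ord : ℂ → ℕ), ↑S ⊆ D →
    (∀ x ∈ S, ∀ i < ord x, iteratedDeriv i f x = 0) → ∑ x ∈ S, ord x ≤ N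

/-- `f` has fewer than `N` zeros, counting multiplicities, on `D ⊆ ℂ`. -/
def CZerosLT (f : ℂ → ℂ) (D : Set ℂ) (N : ℕ) : Prop :=
  ∀ (S : Finset ℂ) (ord : ℂ → ℕ), ↑S ⊆ D →
    (∀ x ∈ S, ∀ i < ord x, iteratedDeriv i f x = 0) → ∑ x ∈ S, ord x < N

/-- The class `ℤ₊^{m+1}(*)`: there are no `i < k < j ≤ m` with `n_i < n_j < n_k`. -/
def StarIdx (m : ℕ) (n : ℕ → ℕ) : Prop :=
  ¬ ∃ i k j, i < k ∧ k < j ∧ j ≤ m ∧ n i < n j ∧ n j < n k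



namespace Nik
open scoped Topology

/-- finite measure carried by `[a,b]`, not finitely supported -/
structure GM (κ : Measure ℝ) (a b : ℝ) : Prop where
  fin : IsFiniteMeasure κ
  null : κ (Icc a b)ᶜ = 0
  inf : ∀ Z : Finset ℝ, κ (↑Z : Set ℝ)ᶜ ≠ 0

/-- Cauchy transform with density -/
def CT (κ : Measure ℝ) (φ : ℝ → ℂ) (z : ℂ) : ℂ := ∫ t, φ t / (z - (t : ℂ)) ∂κ

/-- the interval in the complex plane -/
def KK (a b : ℝ) : Set ℂ := cpx (Icc a b)

lemma mem_KK {a b : ℝ} {z : ℂ} : z ∈ KK a b ↔ ∃ t ∈ Icc a b, (t : ℂ) = z := Iff.rfl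

lemma ofReal_mem_KK {a b t : ℝ} : (t : ℂ) ∈ KK a b ↔ t ∈ Icc a b := by
  rw [mem_KK]
  constructor
  · rintro ⟨s, hs, h⟩
    have : s = t := by exact_mod_cast h
    exact this ▸ hs
  · intro h; exact ⟨t, h, rfl⟩

lemma isCompact_KK (a b : ℝ) : IsCompact (KK a b) :=
  isCompact_Icc.image Complex.continuous_ofReal

lemma isOpen_KKc (a b : ℝ) : IsOpen (KK a b)ᶜ := (isCompact_KK a b).isClosed.isOpen_compl

lemma sub_ne_of_notMem {a b t : ℝ} {z : ℂ} (hz : z ∉ KK a b) (ht : t ∈ Icc a b) :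
    z - (t : ℂ) ≠ 0 := by
  intro h
  exact hz ⟨t, ht, (sub_eq_zero.1 h).symm⟩

namespace GM
variable {κ : Measure ℝ} {a b : ℝ}

lemma ae_mem (h : GM κ a b) : ∀ᵐ t ∂κ, t ∈ Icc a b := by
  have := h.null
  rw [ae_iff]; exact this

lemma restrict_eq (h : GM κ a b) : κ.restrict (Icc a b) = κ :=
  Measure.restrict_eq_self_of_ae_mem h.ae_mem

lemma integrable {E : Type*} [NormedAddCommGroup E] (h : GM κ a b) {φ : ℝ → E}
    (hφ : ContinuousOn φ (Icc a b)) : Integrable φ κ := by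
  have := h.fin
  have := hφ.integrableOn_compact (μ := κ) isCompact_Icc
  rwa [IntegrableOn, h.restrict_eq] at this

lemma integral_congr {E : Type*} [NormedAddCommGroup E] [NormedSpace ℝ E] (h : GM κ a b)
    {f g : ℝ → E} (hfg : ∀ t ∈ Icc a b, f t = g t) : ∫ t, f t ∂κ = ∫ t, g t ∂κ :=
  integral_congr_ae (h.ae_mem.mono fun t ht => hfg t ht)

lemma nonempty (h : GM κ a b) : (Icc a b).Nonempty := by
  by_contra hne
  rw [not_nonempty_iff_eq_empty] at hne
  have := h.null
  rw [hne] at this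
  exact h.inf ∅ (by simpa using this)

/-- strict positivity -/
lemma integral_ne_zero (h : GM κ a b) {f : ℝ → ℝ} (hf : ContinuousOn f (Icc a b))
    (hpos : ∀ t ∈ Icc a b, 0 ≤ f t) (Z : Finset ℝ) (hZ : ∀ t ∈ Icc a b, f t = 0 → t ∈ Z) :
    ∫ t, f t ∂κ ≠ 0 := by
  intro h0
  have hnn : 0 ≤ᵐ[κ] f := h.ae_mem.mono fun t ht => hpos t ht
  have := (integral_eq_zero_iff_of_nonneg_ae hnn (h.integrable hf)).1 h0
  apply h.inf Z
  have h2 : ∀ᵐ t ∂κ, t ∈ Z := by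
    filter_upwards [this, h.ae_mem] with t ht ht2
    exact hZ t ht2 ht
  rw [ae_iff] at h2
  exact h2

end GM

lemma PI {κ : Measure ℝ} [IsFiniteMeasure κ] {O : Set ℂ} (hO : IsOpen O) (k : ℂ → ℝ → ℂ)
    (S : Set ℝ) (hS : ∀ᵐ t ∂κ, t ∈ S) (meas : ∀ z ∈ O, AEStronglyMeasurable (k z) κ)
    (diff : ∀ t ∈ S, DifferentiableOn ℂ (fun z => k z t) O)
    (bd : ∀ z0 ∈ O, ∃ r > 0, ∃ C, ∀ z ∈ Metric.ball z0 r, ∀ t ∈ S, ‖k z t‖ ≤ C) :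
    DifferentiableOn ℂ (fun z => ∫ t, k z t ∂κ) O := by
  intro z0 hz0
  obtain ⟨r1, hr1, C, hC⟩ := bd z0 hz0
  obtain ⟨r2, hr2, hr2O⟩ := Metric.isOpen_iff.1 hO z0 hz0
  set r := min r1 r2 / 4 with hr
  have hrp : 0 < r := by positivity
  have hr1' : 4 * r ≤ r1 := by rw [hr]; linarith [min_le_left r1 r2]
  have hr2' : 4 * r ≤ r2 := by rw [hr]; linarith [min_le_right r1 r2]
  have hsub : ∀ z ∈ Metric.ball z0 r, Metric.closedBall z r ⊆ Metric.ball z0 r1 ∩ O := by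
    intro z hz y hy
    have hd : dist y z0 < 2 * r := by
      have := dist_triangle y z z0
      have h1 := Metric.mem_ball.1 hz
      have h2 := Metric.mem_closedBall.1 hy
      linarith
    exact ⟨Metric.mem_ball.2 (by linarith), hr2O (Metric.mem_ball.2 (by linarith))⟩
  have hball : ∀ z ∈ Metric.ball z0 r, z ∈ O := fun z hz =>
    (hsub z hz (Metric.mem_closedBall_self hrp.le)).2
  have hz0b : z0 ∈ Metric.ball z0 r := Metric.mem_ball_self hrp
  have hder : ∀ t ∈ S, ∀ z ∈ Metric.ball z0 r, HasDerivAt (fun z => k z t) (deriv (fun z => k z t) z) z := by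
    intro t ht z hz
    exact ((diff t ht).differentiableAt (hO.mem_nhds (hball z hz))).hasDerivAt
  have hF'm : AEStronglyMeasurable (fun t => deriv (fun z => k z t) z0) κ := by
    have hseq : Tendsto (fun n : ℕ => (r / 2 / ((n : ℝ) + 1))) atTop (𝓝 0) :=
      Tendsto.const_div_atTop (tendsto_atTop_add_const_right _ _ tendsto_natCast_atTop_atTop) _
    have hpos : ∀ n : ℕ, 0 < r / 2 / ((n : ℝ) + 1) := fun n => by positivity
    have hlt : ∀ n : ℕ, r / 2 / ((n : ℝ) + 1) < r := fun n => by
      rw [div_lt_iff₀ (by positivity)]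
      have : (0:ℝ) ≤ n := n.cast_nonneg
      nlinarith
    let s : ℕ → ℂ := fun n => ((r / 2 / ((n : ℝ) + 1) : ℝ) : ℂ)
    have hs0 : ∀ n, s n ≠ 0 := fun n => by
      simpa only [s, ne_eq, Complex.ofReal_eq_zero] using (hpos n).ne'
    have hsb : ∀ n, z0 + s n ∈ O := fun n => hball _ (by
      rw [Metric.mem_ball, dist_eq_norm, add_sub_cancel_left, Complex.norm_real, Real.norm_eq_abs,
        abs_of_pos (hpos n)]
      exact hlt n)
    refine aestronglyMeasurable_of_tendsto_ae atTop
      (f := fun n t => (s n)⁻¹ * (k (z0 + s n) t - k z0 t)) (fun n => ?_) ?_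
    · exact ((meas _ (hsb n)).sub (meas _ hz0)).const_mul _
    · filter_upwards [hS] with t ht
      have hd := hder t ht z0 hz0b
      rw [hasDerivAt_iff_tendsto_slope_zero] at hd
      have hst : Tendsto s atTop (𝓝[≠] 0) := by
        rw [tendsto_nhdsWithin_iff]
        refine ⟨?_, Eventually.of_forall hs0⟩
        have := (Complex.continuous_ofReal.tendsto 0).comp hseq
        rw [Complex.ofReal_zero] at this
        exact this
      have := hd.comp hst
      simpa [smul_eq_mul, Function.comp_def] using this
  have key := hasDerivAt_integral_of_dominated_loc_of_deriv_le (μ := κ) (F := k) (x₀ := z0)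
    (s := Metric.ball z0 r) (F' := fun z t => deriv (fun z => k z t) z) (bound := fun _ => C / r)
    (Metric.ball_mem_nhds _ hrp) ?_ ?_ hF'm ?_ (integrable_const _) ?_
  · exact key.2.differentiableAt.differentiableWithinAt
  · filter_upwards [hO.mem_nhds hz0] with z hz using meas z hz
  · refine Integrable.of_bound (meas z0 hz0) C ?_
    filter_upwards [hS] with t ht
    exact hC z0 (Metric.mem_ball_self hr1) t ht
  · filter_upwards [hS] with t ht z hz
    refine Complex.norm_deriv_le_of_forall_mem_sphere_norm_le hrp ?_ ?_
    · refine DifferentiableOn.diffContOnCl ?_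
      rw [closure_ball _ hrp.ne']
      exact (diff t ht).mono fun y hy => (hsub z hz hy).2
    · intro y hy
      exact hC y (hsub z hz (Metric.sphere_subset_closedBall hy)).1 t ht
  · filter_upwards [hS] with t ht z hz using hder t ht z hz

lemma exists_bound_Icc {a b : ℝ} {φ : ℝ → ℂ} (hφ : ContinuousOn φ (Icc a b)) :
    ∃ C, 0 ≤ C ∧ ∀ t ∈ Icc a b, ‖φ t‖ ≤ C := by
  obtain ⟨C, hC⟩ := isCompact_Icc.exists_bound_of_continuousOn hφ
  exact ⟨max C 0, le_max_right _ _, fun t ht => (hC t ht).trans (le_max_left _ _)⟩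

lemma continuousOn_kernel {a b : ℝ} {φ : ℝ → ℂ} (hφ : ContinuousOn φ (Icc a b)) {z : ℂ}
    (hz : z ∉ KK a b) : ContinuousOn (fun t : ℝ => φ t / (z - (t : ℂ))) (Icc a b) :=
  hφ.div (by fun_prop) fun t ht => sub_ne_of_notMem hz ht

lemma CT_diff {κ : Measure ℝ} {a b : ℝ} (h : GM κ a b) {φ : ℝ → ℂ}
    (hφ : ContinuousOn φ (Icc a b)) : DifferentiableOn ℂ (CT κ φ) (KK a b)ᶜ := by
  have := h.fin
  refine PI (isOpen_KKc a b) _ (Icc a b) h.ae_mem ?_ ?_ ?_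
  · intro z hz
    exact (h.integrable (continuousOn_kernel hφ hz)).aestronglyMeasurable
  · intro t ht z hz
    have h0 := sub_ne_of_notMem hz ht
    have : DifferentiableAt ℂ (fun z : ℂ => φ t / (z - (t : ℂ))) z := by
      fun_prop (disch := exact h0)
    exact this.differentiableWithinAt
  · intro z0 hz0
    obtain ⟨r, hr, hrs⟩ := Metric.isOpen_iff.1 (isOpen_KKc a b) z0 hz0
    obtain ⟨C, hC0, hC⟩ := exists_bound_Icc hφ
    refine ⟨r / 2, by positivity, C / (r / 2), fun z hz t ht => ?_⟩
    have h1 : r / 2 ≤ ‖z - t‖ := by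
      by_contra hlt
      push Not at hlt
      have : (t : ℂ) ∈ Metric.ball z0 r := by
        rw [Metric.mem_ball]
        have h1 := dist_triangle (t : ℂ) z z0
        rw [dist_comm (t : ℂ) z, dist_eq_norm z] at h1
        have := Metric.mem_ball.1 hz
        linarith
      exact hrs this (ofReal_mem_KK.2 ht)
    rw [norm_div]
    exact div_le_div₀ hC0 (hC t ht) (by positivity) h1

lemma eventually_notMem_KK (a b : ℝ) : ∀ᶠ z in cocompact ℂ, z ∉ KK a b :=
  (isCompact_KK a b).compl_mem_cocompact

lemma CT_tendsto_zero {κ : Measure ℝ} {a b : ℝ} (h : GM κ a b) {φ : ℝ → ℂ}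
    (hφ : ContinuousOn φ (Icc a b)) : Tendsto (CT κ φ) (cocompact ℂ) (𝓝 0) := by
  have := h.fin
  obtain ⟨C, hC0, hC⟩ := exists_bound_Icc hφ
  set R := max |a| |b| with hR
  have hRt : ∀ t ∈ Icc a b, |t| ≤ R := fun t ht => abs_le_max_abs_abs ht.1 ht.2
  have hnorm : Tendsto (fun z : ℂ => ‖z‖ - R) (cocompact ℂ) atTop :=
    tendsto_atTop_add_const_right _ _ (tendsto_norm_cocompact_atTop)
  have hb : Tendsto (fun z : ℂ => (C / (‖z‖ - R)) * κ.real univ) (cocompact ℂ) (𝓝 0) := by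
    have := (hnorm.const_div_atTop C).mul_const (κ.real univ)
    simpa using this
  refine squeeze_zero_norm' ?_ hb
  filter_upwards [hnorm.eventually_gt_atTop 0] with z hz
  refine norm_integral_le_of_norm_le_const ?_
  filter_upwards [h.ae_mem] with t ht
  rw [norm_div]
  refine div_le_div₀ hC0 (hC t ht) hz ?_
  have := norm_sub_norm_le z (t : ℂ)
  rw [Complex.norm_real, Real.norm_eq_abs] at this
  linarith [hRt t ht]

lemma CT_mul {κ : Measure ℝ} {a b : ℝ} (h : GM κ a b) {φ : ℝ → ℂ}
    (hφ : ContinuousOn φ (Icc a b)) {z : ℂ} (hz : z ∉ KK a b) :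
    z * CT κ φ z = ∫ t, φ t ∂κ + CT κ (fun t => t * φ t) z := by
  have h2 : ContinuousOn (fun t : ℝ => (t : ℂ) * φ t) (Icc a b) :=
    (Complex.continuous_ofReal.continuousOn).mul hφ
  rw [CT, CT, ← integral_const_mul, ← integral_add (h.integrable hφ)
    (h.integrable (continuousOn_kernel h2 hz))]
  refine h.integral_congr fun t ht => ?_
  have := sub_ne_of_notMem hz ht
  field_simp
  ring

lemma CT_mul_tendsto {κ : Measure ℝ} {a b : ℝ} (h : GM κ a b) {φ : ℝ → ℂ}
    (hφ : ContinuousOn φ (Icc a b)) :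
    Tendsto (fun z => z * CT κ φ z) (cocompact ℂ) (𝓝 (∫ t, φ t ∂κ)) := by
  have h2 : ContinuousOn (fun t : ℝ => (t : ℂ) * φ t) (Icc a b) :=
    (Complex.continuous_ofReal.continuousOn).mul hφ
  have := (CT_tendsto_zero h h2).const_add (∫ t, φ t ∂κ)
  rw [add_zero] at this
  refine this.congr' ?_
  filter_upwards [eventually_notMem_KK a b] with z hz
  exact (CT_mul h hφ hz).symm

lemma CT_congr {κ : Measure ℝ} {a b : ℝ} (h : GM κ a b) {φ ψ : ℝ → ℂ}
    (hφ : ∀ t ∈ Icc a b, φ t = ψ t) (z : ℂ) : CT κ φ z = CT κ ψ z :=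
  h.integral_congr fun t ht => by rw [hφ t ht]

lemma CT_add {κ : Measure ℝ} {a b : ℝ} (h : GM κ a b) {φ ψ : ℝ → ℂ}
    (hφ : ContinuousOn φ (Icc a b)) (hψ : ContinuousOn ψ (Icc a b)) {z : ℂ} (hz : z ∉ KK a b) :
    CT κ (fun t => φ t + ψ t) z = CT κ φ z + CT κ ψ z := by
  rw [CT, CT, CT, ← integral_add (h.integrable (continuousOn_kernel hφ hz))
    (h.integrable (continuousOn_kernel hψ hz))]
  exact integral_congr_ae (Eventually.of_forall fun t => by simp only [add_div])

lemma CT_const_mul {κ : Measure ℝ} (c : ℂ) (φ : ℝ → ℂ) (z : ℂ) :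
    CT κ (fun t => c * φ t) z = c * CT κ φ z := by
  rw [CT, CT, ← integral_const_mul]
  simp only [mul_div_assoc]

lemma CT_sum {κ : Measure ℝ} {a b : ℝ} (h : GM κ a b) {ι : Type*} (s : Finset ι) {φ : ι → ℝ → ℂ}
    (hφ : ∀ i ∈ s, ContinuousOn (φ i) (Icc a b)) {z : ℂ} (hz : z ∉ KK a b) :
    CT κ (fun t => ∑ i ∈ s, φ i t) z = ∑ i ∈ s, CT κ (φ i) z := by
  simp only [CT]
  rw [← integral_finsetSum s fun i hi => h.integrable (continuousOn_kernel (hφ i hi) hz)]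
  simp only [Finset.sum_div]

/-- conjugation symmetric functions -/
def CS (f : ℂ → ℂ) : Prop := ∀ z, f ((starRingEnd ℂ) z) = (starRingEnd ℂ) (f z)

lemma CS.im {f : ℂ → ℂ} (h : CS f) (x : ℝ) : (f x).im = 0 := by
  have := h x
  rw [Complex.conj_ofReal] at this
  exact Complex.conj_eq_iff_im.1 this.symm

lemma CT_CS {κ : Measure ℝ} {φ : ℝ → ℂ} (hφ : ∀ t, (φ t).im = 0) : CS (CT κ φ) := by
  intro z
  rw [CT, CT, ← integral_conj]
  congr 1
  funext t
  rw [map_div₀, map_sub, Complex.conj_ofReal, Complex.conj_eq_iff_im.2 (hφ t)]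

end Nik

namespace Nik
open scoped Topology

lemma dslope_bound {V : ℂ → ℂ} {O : Set ℂ} (hO : IsOpen O) (hV : DifferentiableOn ℂ V O)
    {a b : ℝ} (hK : KK a b ⊆ O) {z0 : ℂ} (hz0 : z0 ∈ O) :
    ∃ r > 0, ∃ C, ∀ z ∈ Metric.ball z0 r, ∀ t ∈ Icc a b, ‖dslope V z (t : ℂ)‖ ≤ C := by
  obtain ⟨R, hR, hRO⟩ := Metric.isOpen_iff.1 hO z0 hz0
  set r := R / 4 with hr
  have hrp : 0 < r := by positivity
  have hcb : Metric.closedBall z0 (3 * r) ⊆ O := fun y hy =>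
    hRO (Metric.mem_ball.2 (lt_of_le_of_lt (Metric.mem_closedBall.1 hy) (by rw [hr]; linarith)))
  obtain ⟨C1, hC1⟩ := (isCompact_closedBall z0 (3 * r)).exists_bound_of_continuousOn
    (hV.continuousOn.mono hcb)
  obtain ⟨C2, hC2⟩ := (isCompact_KK a b).exists_bound_of_continuousOn (hV.continuousOn.mono hK)
  have far : ∀ z ∈ Metric.closedBall z0 (3 * r), ∀ t ∈ Icc a b, r ≤ ‖z - t‖ →
      ‖dslope V (t : ℂ) z‖ ≤ (C1 + C2) / r := by
    intro z hz t ht hzt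
    have hne : z ≠ t := by
      intro h; rw [h, sub_self, norm_zero] at hzt; linarith
    rw [dslope_of_ne _ hne, slope_def_field, norm_div]
    have h1 : ‖V z - V t‖ ≤ C1 + C2 :=
      (norm_sub_le _ _).trans (add_le_add (hC1 z hz) (hC2 t (ofReal_mem_KK.2 ht)))
    exact div_le_div₀ ((norm_nonneg _).trans h1) h1 hrp hzt
  have symm : ∀ z w : ℂ, dslope V z w = dslope V w z := by
    intro z w
    rcases eq_or_ne z w with h | h
    · rw [h]
    · rw [dslope_of_ne _ h, dslope_of_ne _ h.symm, slope_comm]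
  refine ⟨r, hrp, (C1 + C2) / r, fun z hz t ht => ?_⟩
  have hzr := Metric.mem_ball.1 hz
  rw [symm]
  by_cases hcase : dist (t : ℂ) z0 < 2 * r
  · have hd : DifferentiableOn ℂ (dslope V (t : ℂ)) O :=
      (Complex.differentiableOn_dslope (hO.mem_nhds (hK (ofReal_mem_KK.2 ht)))).2 hV
    refine Complex.norm_le_of_forall_mem_frontier_norm_le (U := Metric.ball z0 (3 * r))
      Metric.isBounded_ball ?_ ?_ (subset_closure (Metric.mem_ball.2 (by linarith)))
    · refine DifferentiableOn.diffContOnCl ?_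
      rw [closure_ball _ (by positivity)]
      exact hd.mono hcb
    · intro y hy
      rw [frontier_ball _ (by positivity)] at hy
      refine far y (Metric.sphere_subset_closedBall hy) t ht ?_
      have h1 := Metric.mem_sphere.1 hy
      have h2 := dist_triangle y (t : ℂ) z0
      rw [dist_eq_norm y (t : ℂ)] at h2
      linarith
  · refine far z (Metric.mem_closedBall.2 (by linarith)) t ht ?_
    have h2 := dist_triangle (t : ℂ) z z0
    rw [dist_comm (t : ℂ) z, dist_eq_norm z (t : ℂ)] at h2
    linarith

lemma Glue {κ : Measure ℝ} {a b : ℝ} (h : GM κ a b) {O : Set ℂ} (hO : IsOpen O)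
    (hK : KK a b ⊆ O) {V E ent G : ℂ → ℂ} (hV : DifferentiableOn ℂ V O)
    (hE : DifferentiableOn ℂ E O) (hent : Differentiable ℂ ent) {ψ : ℝ → ℂ}
    (hψ : ContinuousOn ψ (Icc a b)) (hG : DifferentiableOn ℂ G (KK a b)ᶜ)
    (heq : ∀ z ∈ O, z ∉ KK a b → G z = V z * (ent z + CT κ ψ z) + E z) :
    ∃ E1 : ℂ → ℂ, Differentiable ℂ E1 ∧
      ∀ z ∉ KK a b, G z = E1 z + CT κ (fun t => V t * ψ t) z := by
  classical
  have := h.fin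
  have hVc : ContinuousOn (fun t : ℝ => V t) (Icc a b) :=
    hV.continuousOn.comp Complex.continuous_ofReal.continuousOn
      fun t ht => hK (ofReal_mem_KK.2 ht)
  have hVψ : ContinuousOn (fun t : ℝ => V t * ψ t) (Icc a b) := hVc.mul hψ
  have hds : ∀ z ∈ O, ContinuousOn (fun t : ℝ => dslope V z (t : ℂ) * ψ t) (Icc a b) := by
    intro z hz
    refine ContinuousOn.mul ?_ hψ
    have h1 : ContinuousOn (dslope V z) O :=
      (continuousOn_dslope (hO.mem_nhds hz)).2 ⟨hV.continuousOn,
        hV.differentiableAt (hO.mem_nhds hz)⟩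
    exact h1.comp Complex.continuous_ofReal.continuousOn
      fun t ht => hK (ofReal_mem_KK.2 ht)
  let J : ℂ → ℂ := fun z => ∫ t, dslope V z (t : ℂ) * ψ t ∂κ
  have hJ : DifferentiableOn ℂ J O := by
    refine PI hO _ (Icc a b) h.ae_mem ?_ ?_ ?_
    · intro z hz
      exact (h.integrable (hds z hz)).aestronglyMeasurable
    · intro t ht
      have hd : DifferentiableOn ℂ (dslope V (t : ℂ)) O :=
        (Complex.differentiableOn_dslope (hO.mem_nhds (hK (ofReal_mem_KK.2 ht)))).2 hV
      refine (hd.mul_const (ψ t)).congr fun z hz => ?_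
      rcases eq_or_ne z t with h | h
      · rw [h]
      · simp only [dslope_of_ne _ h, dslope_of_ne _ h.symm, slope_comm]
    · intro z0 hz0
      obtain ⟨r, hr, C, hC⟩ := dslope_bound hO hV hK hz0
      obtain ⟨C', hC0', hC'⟩ := exists_bound_Icc hψ
      refine ⟨r, hr, C * C', fun z hz t ht => ?_⟩
      rw [norm_mul]
      have := hC z hz t ht
      exact mul_le_mul this (hC' t ht) (norm_nonneg _) ((norm_nonneg _).trans this)
  have hJeq : ∀ z ∈ O, z ∉ KK a b →
      J z = V z * CT κ ψ z - CT κ (fun t => V t * ψ t) z := by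
    intro z hz hzK
    simp only [J, CT]
    rw [← integral_const_mul, ← integral_sub ((h.integrable (continuousOn_kernel hψ hzK)).const_mul _)
      (h.integrable (continuousOn_kernel hVψ hzK))]
    refine h.integral_congr fun t ht => ?_
    have h0 := sub_ne_of_notMem hzK ht
    have hne : (t : ℂ) ≠ z := fun h => h0 (by rw [h, sub_self])
    rw [dslope_of_ne _ hne, slope_def_field]
    have h1 : (t : ℂ) - z ≠ 0 := sub_ne_zero.2 hne
    field_simp
    ring
  let E1 : ℂ → ℂ := fun z => if z ∈ KK a b then V z * ent z + E z + J z
    else G z - CT κ (fun t => V t * ψ t) z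
  refine ⟨E1, fun z => ?_, fun z hz => by simp only [E1, if_neg hz]; ring⟩
  by_cases hz : z ∈ KK a b
  · have hd : DifferentiableAt ℂ (fun z => V z * ent z + E z + J z) z :=
      (((hV.mul hent.differentiableOn).add hE).add hJ).differentiableAt (hO.mem_nhds (hK hz))
    refine hd.congr_of_eventuallyEq ?_
    filter_upwards [hO.mem_nhds (hK hz)] with y hy
    by_cases hyK : y ∈ KK a b
    · simp only [E1, if_pos hyK]
    · simp only [E1, if_neg hyK]
      rw [heq y hy hyK, hJeq y hy hyK]; ring
  · have hd : DifferentiableAt ℂ (fun z => G z - CT κ (fun t => V t * ψ t) z) z :=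
      (hG.sub (CT_diff h hVψ)).differentiableAt ((isOpen_KKc a b).mem_nhds hz)
    refine hd.congr_of_eventuallyEq ?_
    filter_upwards [(isOpen_KKc a b).mem_nhds hz] with y hy
    simp only [E1]
    rw [if_neg hy]

lemma Engine0 {κ : Measure ℝ} {a b : ℝ} (h : GM κ a b) {w H E : ℂ → ℂ}
    (hw : Differentiable ℂ w) (hw0 : ∀ z ∈ KK a b, w z ≠ 0)
    (hH : DifferentiableOn ℂ H (KK a b)ᶜ) (hE : Differentiable ℂ E) {φ : ℝ → ℂ}
    (hφ : ContinuousOn φ (Icc a b))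
    (heq : ∀ z ∉ KK a b, w z * H z = E z + CT κ φ z)
    (hlim : Tendsto H (cocompact ℂ) (𝓝 0)) :
    ∀ z ∉ KK a b, H z = CT κ (fun t => φ t / w t) z := by
  classical
  have hwc : ContinuousOn (fun t : ℝ => w t) (Icc a b) :=
    (hw.continuous.comp Complex.continuous_ofReal).continuousOn
  have hθ : ContinuousOn (fun t : ℝ => φ t / w t) (Icc a b) :=
    hφ.div hwc fun t ht => hw0 _ (ofReal_mem_KK.2 ht)
  obtain ⟨E1, hE1, hE1eq⟩ := Glue h isOpen_univ (subset_univ _) (V := w) (E := fun _ => 0)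
    (ent := fun _ => 0) (G := fun z => w z * CT κ (fun t => φ t / w t) z) hw.differentiableOn
    (differentiableOn_const _) (differentiable_const _) hθ
    (hw.differentiableOn.mul (CT_diff h hθ)) (fun z _ _ => by ring)
  have hE1' : ∀ z ∉ KK a b, w z * CT κ (fun t => φ t / w t) z = E1 z + CT κ φ z := by
    intro z hz
    rw [hE1eq z hz]
    congr 1
    refine CT_congr h (fun t ht => ?_) z
    have := hw0 _ (ofReal_mem_KK.2 ht)
    field_simp
  let L : ℂ → ℂ := fun z => if w z = 0 then H z - CT κ (fun t => φ t / w t) z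
    else (E z - E1 z) / w z
  have hL2 : ∀ z ∉ KK a b, L z = H z - CT κ (fun t => φ t / w t) z := by
    intro z hz
    by_cases hwz : w z = 0
    · simp only [L, if_pos hwz]
    · simp only [L, if_neg hwz]
      rw [div_eq_iff hwz]
      linear_combination (-1 : ℂ) * heq z hz + hE1' z hz
  have hLd : Differentiable ℂ L := by
    intro z
    by_cases hz : z ∈ KK a b
    · have hwz := hw0 z hz
      have hd : DifferentiableAt ℂ (fun z => (E z - E1 z) / w z) z :=
        ((hE z).sub (hE1 z)).div (hw z) hwz
      refine hd.congr_of_eventuallyEq ?_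
      filter_upwards [hw.continuous.continuousAt.eventually_ne hwz] with y hy
      simp only [L, if_neg hy]
    · have hd : DifferentiableAt ℂ (fun z => H z - CT κ (fun t => φ t / w t) z) z :=
        (hH.sub (CT_diff h hθ)).differentiableAt ((isOpen_KKc a b).mem_nhds hz)
      refine hd.congr_of_eventuallyEq ?_
      filter_upwards [(isOpen_KKc a b).mem_nhds hz] with y hy
      exact hL2 y hy
  have hLlim : Tendsto L (cocompact ℂ) (𝓝 0) := by
    have := hlim.sub (CT_tendsto_zero h hθ)
    rw [sub_zero] at this
    refine this.congr' ?_
    filter_upwards [eventually_notMem_KK a b] with z hz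
    exact (hL2 z hz).symm
  intro z hz
  have := hLd.apply_eq_of_tendsto_cocompact z hLlim
  rw [hL2 z hz] at this
  exact sub_eq_zero.1 this

lemma sign_lemma (Z : Finset ℝ) : ∀ (s : Set ℝ), s.OrdConnected → ∀ g : ℝ → ℝ,
    ContinuousOn g s → (∀ x ∈ s, g x = 0 → x ∈ Z) → (∀ x ∈ s, x ∈ Z → g x = 0) →
    ∃ Y ⊆ Z, ∃ ε : ℝ, (ε = 1 ∨ ε = -1) ∧ ∀ x ∈ s, 0 ≤ ε * (∏ y ∈ Y, (x - y)) * g x := by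
  have const : ∀ (s : Set ℝ), s.OrdConnected → ∀ g : ℝ → ℝ, ContinuousOn g s →
      (∀ x ∈ s, g x ≠ 0) → (∀ x ∈ s, 0 ≤ g x) ∨ (∀ x ∈ s, g x ≤ 0) := by
    intro s hs g hg hg0
    by_contra hcon
    push Not at hcon
    obtain ⟨⟨x, hx, hx0⟩, ⟨y, hy, hy0⟩⟩ := hcon
    have := hs.isPreconnected.intermediate_value hx hy hg
    obtain ⟨c, hc, hc0⟩ := this ⟨hx0.le, hy0.le⟩
    exact hg0 c hc hc0
  induction Z using Finset.induction_on_max with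
  | empty =>
    intro s hs g hg hz _
    rcases const s hs g hg (fun x hx h => by simpa using hz x hx h) with h | h
    · exact ⟨∅, subset_rfl, 1, Or.inl rfl, fun x hx => by simpa using h x hx⟩
    · exact ⟨∅, subset_rfl, -1, Or.inr rfl, fun x hx => by simpa using h x hx⟩
  | insert m Z0 hm ih =>
    intro s hs g hg hz hz'
    obtain ⟨Y, hY, ε, hε, hsgn⟩ := ih (s ∩ Iio m) (hs.inter ordConnected_Iio) g
      (hg.mono inter_subset_left)
      (fun x hx h => by
        rcases Finset.mem_insert.1 (hz x hx.1 h) with h1 | h1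
        · exact absurd h1 (ne_of_lt hx.2)
        · exact h1)
      (fun x hx h => hz' x hx.1 (Finset.mem_insert_of_mem h))
    have hmY : m ∉ Y := fun h => lt_irrefl _ (hm m (hY h))
    have hprod : ∀ x, m < x → 0 < ∏ y ∈ Y, (x - y) := fun x hx =>
      Finset.prod_pos fun y hy => sub_pos.2 ((hm y (hY hy)).trans hx)
    have hc := const (s ∩ Ioi m) (hs.inter ordConnected_Ioi) (fun x => ε * g x)
      (continuousOn_const.mul (hg.mono inter_subset_left)) (fun x hx h => by
        have hε0 : ε ≠ 0 := by rcases hε with h | h <;> rw [h] <;> norm_num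
        have h0 := (mul_eq_zero.1 h).resolve_left hε0
        rcases Finset.mem_insert.1 (hz x hx.1 h0) with h1 | h1
        · exact absurd h1 (ne_of_gt hx.2)
        · exact absurd (hm x h1) (not_lt.2 (le_of_lt hx.2)))
    rcases hc with hc | hc
    · refine ⟨Y, hY.trans (Finset.subset_insert _ _), ε, hε, fun x hx => ?_⟩
      rcases lt_trichotomy x m with h | h | h
      · exact hsgn x ⟨hx, h⟩
      · rw [hz' x hx (by rw [h]; exact Finset.mem_insert_self _ _), mul_zero]
      · have := mul_nonneg (hprod x h).le (hc x ⟨hx, h⟩)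
        linarith
    · refine ⟨insert m Y, Finset.insert_subset_insert _ hY, -ε, ?_, fun x hx => ?_⟩
      · rcases hε with h | h <;> rw [h] <;> norm_num
      · rw [Finset.prod_insert hmY]
        rcases lt_trichotomy x m with h | h | h
        · have := mul_nonneg (sub_pos.2 h).le (hsgn x ⟨hx, h⟩)
          linarith
        · rw [h]; simp
        · have h1 := hc x ⟨hx, h⟩
          have := mul_nonneg (mul_nonneg (sub_pos.2 h).le (hprod x h).le) (neg_nonneg.2 h1)
          linarith

lemma zeros_of_orth {κ : Measure ℝ} {a b : ℝ} (h : GM κ a b) {θ : ℝ → ℝ}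
    (hθ : ContinuousOn θ (Icc a b)) (M : ℕ) (hM : ∀ ν < M, ∫ t, t ^ ν * θ t ∂κ = 0) :
    ∃ T : Finset ℝ, ↑T ⊆ Icc a b ∧ T.card = M ∧ ∀ t ∈ T, θ t = 0 := by
  by_contra hcon
  set Zs : Set ℝ := {t ∈ Icc a b | θ t = 0} with hZs
  have hfin : Zs.Finite := by
    by_contra hinf
    obtain ⟨T, hT, hTc⟩ := Set.Infinite.exists_subset_card_eq hinf M
    exact hcon ⟨T, fun t ht => (hT ht).1, hTc, fun t ht => (hT ht).2⟩
  have hcard : hfin.toFinset.card < M := by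
    by_contra hle
    obtain ⟨T, hT, hTc⟩ := Finset.exists_subset_card_eq (not_lt.1 hle)
    have hT' : ∀ t ∈ T, t ∈ Zs := fun t ht => hfin.mem_toFinset.1 (hT ht)
    exact hcon ⟨T, fun t ht => (hT' t ht).1, hTc, fun t ht => (hT' t ht).2⟩
  obtain ⟨Y, hY, ε, hε, hsgn⟩ := sign_lemma hfin.toFinset (Icc a b) ordConnected_Icc θ hθ
    (fun x hx h0 => hfin.mem_toFinset.2 ⟨hx, h0⟩) (fun x hx h0 => (hfin.mem_toFinset.1 h0).2)
  set p : ℝ[X] := ∏ y ∈ Y, (X - C y) with hp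
  have hpd : p.natDegree < M := by
    rw [hp, natDegree_prod_of_monic _ _ fun y _ => monic_X_sub_C y]
    simp only [natDegree_X_sub_C, Finset.sum_const, smul_eq_mul, mul_one]
    exact lt_of_le_of_lt (Finset.card_le_card hY) hcard
  have hpe : ∀ x, p.eval x = ∏ y ∈ Y, (x - y) := fun x => by
    rw [hp, eval_prod]; simp
  have hIntg : ∫ t, p.eval t * θ t ∂κ = 0 := by
    have : ∀ t, p.eval t * θ t = ∑ i ∈ Finset.range M, p.coeff i * (t ^ i * θ t) := by
      intro t
      rw [eval_eq_sum_range' hpd, Finset.sum_mul]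
      exact Finset.sum_congr rfl fun i _ => by ring
    simp_rw [this]
    rw [integral_finsetSum]
    · refine Finset.sum_eq_zero fun i hi => ?_
      rw [integral_const_mul, hM i (Finset.mem_range.1 hi), mul_zero]
    · intro i _
      exact (h.integrable ((continuous_pow i).continuousOn.mul hθ)).const_mul _
  refine h.integral_ne_zero (f := fun t => ε * (∏ y ∈ Y, (t - y)) * θ t) ?_ hsgn hfin.toFinset ?_ ?_
  · refine ContinuousOn.mul ?_ hθ
    fun_prop
  · intro t ht h0
    have hε0 : ε ≠ 0 := by rcases hε with h | h <;> rw [h] <;> norm_num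
    rcases mul_eq_zero.1 h0 with h1 | h1
    · obtain ⟨y, hy, hy0⟩ := Finset.prod_eq_zero_iff.1 ((mul_eq_zero.1 h1).resolve_left hε0)
      rw [sub_eq_zero.1 hy0]; exact hY hy
    · exact hfin.mem_toFinset.2 ⟨ht, h1⟩
  · simp_rw [mul_assoc, ← hpe]
    rw [integral_const_mul, hIntg, mul_zero]

lemma moments {κ : Measure ℝ} {a b : ℝ} (h : GM κ a b) {θ : ℝ → ℂ}
    (hθ : ContinuousOn θ (Icc a b)) (M : ℕ)
    (hlim : Tendsto (fun z => z ^ M * CT κ θ z) (cocompact ℂ) (𝓝 0)) :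
    ∀ ν < M, ∫ t, (t : ℂ) ^ ν * θ t ∂κ = 0 := by
  have hc : ∀ ν : ℕ, ContinuousOn (fun t : ℝ => (t : ℂ) ^ ν * θ t) (Icc a b) := fun ν =>
    ContinuousOn.mul (by fun_prop) hθ
  have hpow : ∀ j, (∀ ν < j, ∫ t, (t : ℂ) ^ ν * θ t ∂κ = 0) → ∀ z ∉ KK a b,
      z ^ j * CT κ θ z = CT κ (fun t => (t : ℂ) ^ j * θ t) z := by
    intro j
    induction j with
    | zero => intro _ z _; simp
    | succ j ih =>
      intro hj z hz
      rw [pow_succ', mul_assoc, ih (fun ν hν => hj ν (by omega)) z hz, CT_mul h (hc j) hz,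
        hj j (by omega), zero_add]
      congr 1
      funext t
      ring
  intro ν
  induction ν using Nat.strong_induction_on with
  | _ j ih =>
    intro hj
    have h1 := CT_mul_tendsto h (hc j)
    have h2 : Tendsto (fun z : ℂ => z ^ (j + 1) * CT κ θ z) (cocompact ℂ) (𝓝 0) := by
      refine squeeze_zero_norm' ?_ (tendsto_zero_iff_norm_tendsto_zero.1 hlim)
      filter_upwards [(tendsto_norm_cocompact_atTop (E := ℂ)).eventually_ge_atTop 1] with z hz
      rw [norm_mul, norm_mul, norm_pow, norm_pow]
      exact mul_le_mul_of_nonneg_right (pow_le_pow_right₀ hz (by omega)) (norm_nonneg _)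
    have h3 := h2.congr' (f₂ := fun z : ℂ => z * CT κ (fun t => (t : ℂ) ^ j * θ t) z) (by
      filter_upwards [eventually_notMem_KK a b] with z hz
      rw [← hpow j (fun ν hν => ih ν hν (by omega)) z hz, pow_succ', mul_assoc])
    exact tendsto_nhds_unique h1 h3

lemma Engine {κ : Measure ℝ} {a b : ℝ} (h : GM κ a b) {w H E : ℂ → ℂ}
    (hw : Differentiable ℂ w) (hw0 : ∀ z ∈ KK a b, w z ≠ 0) (hwr : ∀ x : ℝ, (w x).im = 0)
    (hH : DifferentiableOn ℂ H (KK a b)ᶜ) (hE : Differentiable ℂ E) {φ : ℝ → ℂ}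
    (hφ : ContinuousOn φ (Icc a b)) (hφr : ∀ x ∈ Icc a b, (φ x).im = 0)
    (heq : ∀ z ∉ KK a b, w z * H z = E z + CT κ φ z) (M : ℕ)
    (hlim0 : Tendsto H (cocompact ℂ) (𝓝 0))
    (hlim : Tendsto (fun z => z ^ M * H z) (cocompact ℂ) (𝓝 0)) :
    ∃ T : Finset ℝ, ↑T ⊆ Icc a b ∧ T.card = M ∧ ∀ t ∈ T, φ t = 0 := by
  have hwc : ContinuousOn (fun t : ℝ => w t) (Icc a b) :=
    (hw.continuous.comp Complex.continuous_ofReal).continuousOn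
  have hθ : ContinuousOn (fun t : ℝ => φ t / w t) (Icc a b) :=
    hφ.div hwc fun t ht => hw0 _ (ofReal_mem_KK.2 ht)
  have h0 := Engine0 h hw hw0 hH hE hφ heq hlim0
  have hm := moments h hθ M (hlim.congr' (by
    filter_upwards [eventually_notMem_KK a b] with z hz
    rw [h0 z hz]))
  have hre : ∀ t ∈ Icc a b, φ t / w t = (((φ t / w t).re : ℝ) : ℂ) := by
    intro t ht
    apply Complex.ext
    · simp
    · rw [Complex.ofReal_im, Complex.div_im, hφr t ht, hwr t]; simp
  obtain ⟨T, hT, hTc, hT0⟩ := zeros_of_orth h (θ := fun t => (φ t / w t).re)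
    (Complex.continuous_re.comp_continuousOn hθ) M (fun ν hν => by
      have h1 := hm ν hν
      rw [h.integral_congr (g := fun t => ((t ^ ν * (φ t / w t).re : ℝ) : ℂ)) (fun t ht => by
        rw [hre t ht]; push_cast; simp), integral_complex_ofReal] at h1
      exact_mod_cast h1)
  refine ⟨T, hT, hTc, fun t ht => ?_⟩
  have h1 := hre t (hT ht)
  rw [hT0 t ht, Complex.ofReal_zero] at h1
  exact (div_eq_zero_iff.1 h1).resolve_right (hw0 _ (ofReal_mem_KK.2 (hT ht)))

end Nik

namespace Nik
open scoped Topology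

lemma poly_lim (p : ℝ[X]) (n : ℕ) (h : p.natDegree ≤ n) :
    Tendsto (fun z : ℂ => aeval z p / z ^ n) (cocompact ℂ) (𝓝 ((p.coeff n : ℝ) : ℂ)) := by
  have hne : ∀ᶠ z : ℂ in cocompact ℂ, z ≠ 0 := by
    filter_upwards [(tendsto_norm_cocompact_atTop (E := ℂ)).eventually_gt_atTop 0] with z hz
    exact norm_pos_iff.1 hz
  have hinv : Tendsto (fun z : ℂ => z⁻¹) (cocompact ℂ) (𝓝 0) := by
    rw [← Metric.cobounded_eq_cocompact]; exact tendsto_inv₀_cobounded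
  have h1 : Tendsto (fun z : ℂ => ∑ i ∈ Finset.range (n + 1), ((p.coeff i : ℝ) : ℂ) * (z⁻¹) ^ (n - i))
      (cocompact ℂ) (𝓝 (∑ i ∈ Finset.range (n + 1), ((p.coeff i : ℝ) : ℂ) * (0 : ℂ) ^ (n - i))) :=
    tendsto_finsetSum _ fun i _ => (hinv.pow (n - i)).const_mul _
  have h2 : ∑ i ∈ Finset.range (n + 1), ((p.coeff i : ℝ) : ℂ) * (0 : ℂ) ^ (n - i) = p.coeff n := by
    rw [Finset.sum_range_succ, Finset.sum_eq_zero]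
    · simp
    · intro i hi
      rw [zero_pow (by have := Finset.mem_range.1 hi; omega), mul_zero]
  rw [h2] at h1
  refine h1.congr' ?_
  filter_upwards [hne] with z hz
  rw [aeval_eq_sum_range' (by omega : p.natDegree < n + 1), Finset.sum_div]
  refine Finset.sum_congr rfl fun i hi => ?_
  have hi' : i ≤ n := by have := Finset.mem_range.1 hi; omega
  rw [Complex.real_smul, inv_pow, mul_div_assoc]
  congr 1
  rw [eq_div_iff (pow_ne_zero _ hz), inv_mul_eq_div, div_eq_iff (pow_ne_zero _ hz), ← pow_add]
  congr 1; omega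

lemma eventually_aeval_ne {w : ℝ[X]} (hw : w ≠ 0) : ∀ᶠ z : ℂ in cocompact ℂ, aeval z w ≠ 0 := by
  have := (poly_lim w w.natDegree le_rfl).eventually_ne
    (show ((w.coeff w.natDegree : ℝ) : ℂ) ≠ 0 by
      rw [coeff_natDegree]; exact_mod_cast leadingCoeff_ne_zero.2 hw)
  filter_upwards [this] with z hz h0
  rw [h0, zero_div] at hz; exact hz rfl

lemma H_lim {w : ℝ[X]} (hw : w ≠ 0) {H F : ℂ → ℂ} (M : ℕ)
    (heq : ∀ᶠ z in cocompact ℂ, aeval z w * H z = F z)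
    (hlim : Tendsto (fun z => z ^ M * F z / z ^ w.natDegree) (cocompact ℂ) (𝓝 0)) :
    Tendsto (fun z => z ^ M * H z) (cocompact ℂ) (𝓝 0) := by
  have hne : ∀ᶠ z : ℂ in cocompact ℂ, z ≠ 0 := by
    filter_upwards [(tendsto_norm_cocompact_atTop (E := ℂ)).eventually_gt_atTop 0] with z hz
    exact norm_pos_iff.1 hz
  have hl : ((w.coeff w.natDegree : ℝ) : ℂ) ≠ 0 := by
    rw [coeff_natDegree]; exact_mod_cast leadingCoeff_ne_zero.2 hw
  have h1 := hlim.div (poly_lim w w.natDegree le_rfl) hl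
  rw [zero_div] at h1
  refine h1.congr' ?_
  filter_upwards [heq, hne, eventually_aeval_ne hw] with z h1 h2 h3
  have := pow_ne_zero w.natDegree h2
  simp only [Pi.div_apply]
  rw [← h1]
  field_simp

lemma tendsto_zero_of_pow {H : ℂ → ℂ} {M : ℕ}
    (h : Tendsto (fun z => z ^ M * H z) (cocompact ℂ) (𝓝 0)) : Tendsto H (cocompact ℂ) (𝓝 0) := by
  refine squeeze_zero_norm' ?_ (tendsto_zero_iff_norm_tendsto_zero.1 h)
  filter_upwards [(tendsto_norm_cocompact_atTop (E := ℂ)).eventually_ge_atTop 1] with z hz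
  rw [norm_mul, norm_pow]
  exact le_mul_of_one_le_left (norm_nonneg _) (one_le_pow₀ hz)

lemma aeval_diff (w : ℝ[X]) : Differentiable ℂ (fun z : ℂ => aeval z w) :=
  Polynomial.differentiable_aeval w

lemma aeval_CS (w : ℝ[X]) : CS (fun z : ℂ => aeval z w) := fun z => by
  simp only [aeval_conj]

lemma Div {O : Set ℂ} (hO : IsOpen O) (T : Finset ℝ) : ∀ (Φ : ℂ → ℂ), DifferentiableOn ℂ Φ O →
    (∀ t ∈ T, (t : ℂ) ∈ O ∧ Φ t = 0) →
    ∃ H : ℂ → ℂ, DifferentiableOn ℂ H O ∧ ∀ z ∈ O,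
      Φ z = aeval z (∏ t ∈ T, (X - C t)) * H z := by
  induction T using Finset.induction_on with
  | empty => intro Φ hΦ _; exact ⟨Φ, hΦ, fun z _ => by simp⟩
  | insert t T ht ih =>
    intro Φ hΦ hT
    obtain ⟨H, hH, hHeq⟩ := ih Φ hΦ fun s hs => hT s (Finset.mem_insert_of_mem hs)
    obtain ⟨htO, ht0⟩ := hT t (Finset.mem_insert_self _ _)
    have hH0 : H t = 0 := by
      have h1 := hHeq t htO
      rw [ht0] at h1
      refine (mul_eq_zero.1 h1.symm).resolve_left ?_
      rw [map_prod]
      refine Finset.prod_ne_zero_iff.2 ?_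
      intro s hs h0
      simp only [map_sub, aeval_X, aeval_C, Complex.coe_algebraMap, sub_eq_zero] at h0
      have : t = s := by exact_mod_cast h0
      exact ht (this ▸ hs)
    refine ⟨dslope H t, (Complex.differentiableOn_dslope (hO.mem_nhds htO)).2 hH, fun z hz => ?_⟩
    rw [hHeq z hz, Finset.prod_insert ht, map_mul]
    have h2 := sub_smul_dslope H (t : ℂ) z
    rw [hH0, sub_zero, smul_eq_mul] at h2
    simp only [map_sub, aeval_X, aeval_C, Complex.coe_algebraMap]
    rw [← h2]; ring

lemma DivM {O : Set ℂ} (hO : IsOpen O) (ord : ℂ → ℕ) (S : Finset ℂ) : ∀ (Φ : ℂ → ℂ),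
    DifferentiableOn ℂ Φ O →
    (∀ x ∈ S, x ∈ O ∧ ∀ i < ord x, iteratedDeriv i Φ x = 0) →
    ∃ H : ℂ → ℂ, DifferentiableOn ℂ H O ∧ ∀ z ∈ O,
      Φ z = (∏ x ∈ S, (z - x) ^ ord x) * H z := by
  classical
  induction S using Finset.induction_on with
  | empty => intro Φ hΦ _; exact ⟨Φ, hΦ, fun z _ => by simp⟩
  | insert t T ht ih =>
    intro Φ hΦ hT
    obtain ⟨H, hH, hHeq⟩ := ih Φ hΦ fun s hs => hT s (Finset.mem_insert_of_mem hs)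
    obtain ⟨htO, ht0⟩ := hT t (Finset.mem_insert_self _ _)
    have hΦa : AnalyticAt ℂ Φ t := hΦ.analyticAt (hO.mem_nhds htO)
    have hHa : AnalyticAt ℂ H t := hH.analyticAt (hO.mem_nhds htO)
    have hord := (natCast_le_analyticOrderAt_iff_iteratedDeriv_eq_zero hΦa).2 ht0
    let p : ℂ → ℂ := fun z => ∏ x ∈ T, (z - x) ^ ord x
    have hpd : Differentiable ℂ p := by
      intro z; simp only [p]; fun_prop
    have hp : AnalyticAt ℂ p t := hpd.analyticAt t
    have hp0 : analyticOrderAt p t = 0 := by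
      rw [hp.analyticOrderAt_eq_zero]
      simp only [p]
      rw [Finset.prod_ne_zero_iff]
      intro s hs
      refine pow_ne_zero _ (sub_ne_zero.2 ?_)
      rintro rfl; exact ht hs
    have heq : Φ =ᶠ[𝓝 t] p * H := by
      filter_upwards [hO.mem_nhds htO] with z hz
      exact hHeq z hz
    rw [analyticOrderAt_congr heq, analyticOrderAt_mul hp hHa, hp0, zero_add,
      natCast_le_analyticOrderAt hHa] at hord
    obtain ⟨g, hg, hgeq⟩ := hord
    let H2 : ℂ → ℂ := fun z => if z = t then g t else H z / (z - t) ^ ord t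
    have hmul : ∀ z ∈ O, H z = (z - t) ^ ord t * H2 z := by
      intro z _
      by_cases hz : z = t
      · simp only [H2, if_pos hz]
        rw [hz]
        have := hgeq.self_of_nhds
        simpa [smul_eq_mul] using this
      · simp only [H2, if_neg hz]
        rw [mul_div_cancel₀]
        exact pow_ne_zero _ (sub_ne_zero.2 hz)
    refine ⟨H2, fun z hz => ?_, fun z hz => ?_⟩
    · by_cases hzt : z = t
      · rw [hzt]
        refine (hg.differentiableAt.congr_of_eventuallyEq ?_).differentiableWithinAt
        filter_upwards [hgeq] with y hy
        by_cases hyt : y = t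
        · simp [H2, hyt]
        · simp only [H2, if_neg hyt]
          rw [hy, smul_eq_mul, mul_div_cancel_left₀]
          exact pow_ne_zero _ (sub_ne_zero.2 hyt)
      · have hd : DifferentiableAt ℂ (fun z => H z / (z - t) ^ ord t) z :=
          (hH.differentiableAt (hO.mem_nhds hz)).div (by fun_prop)
            (pow_ne_zero _ (sub_ne_zero.2 hzt))
        refine (hd.congr_of_eventuallyEq ?_).differentiableWithinAt
        filter_upwards [isOpen_ne.mem_nhds hzt] with y hy
        simp only [H2, if_neg hy]
    · rw [hHeq z hz, Finset.prod_insert ht, hmul z hz]; ring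

lemma real_of_div {O : Set ℂ} (hO : IsOpen O) {Φ H : ℂ → ℂ} (hΦ : ∀ x : ℝ, (Φ x).im = 0)
    (T : Finset ℝ) (hH : ContinuousOn H O)
    (heq : ∀ z ∈ O, Φ z = aeval z (∏ t ∈ T, (X - C t)) * H z) :
    ∀ x : ℝ, (x : ℂ) ∈ O → (H x).im = 0 := by
  set U : Set ℝ := (fun x : ℝ => (x : ℂ)) ⁻¹' O with hU
  have hUo : IsOpen U := hO.preimage Complex.continuous_ofReal
  have hc : ContinuousOn (fun x : ℝ => (H x).im) U :=
    Complex.continuous_im.comp_continuousOn (hH.comp Complex.continuous_ofReal.continuousOn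
      fun x hx => hx)
  intro x hx
  by_contra hne
  have hV : IsOpen (U ∩ (fun x : ℝ => (H x).im) ⁻¹' {0}ᶜ) :=
    hc.isOpen_inter_preimage hUo isOpen_compl_singleton
  have hdense : Dense ((T : Set ℝ)ᶜ) := T.finite_toSet.countable.dense_compl ℝ
  obtain ⟨y, hy, hyT⟩ := hdense.inter_open_nonempty _ hV ⟨x, hx, hne⟩
  apply hy.2
  have h1 := heq y hy.1
  have hp : aeval (y : ℂ) (∏ t ∈ T, (X - C t)) = ((∏ t ∈ T, (y - t) : ℝ) : ℂ) := by
    rw [map_prod]; simp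
  have hp0 : (∏ t ∈ T, (y - t) : ℝ) ≠ 0 := by
    rw [Finset.prod_ne_zero_iff]
    intro t ht h0
    rw [sub_eq_zero.1 h0] at hyT
    exact hyT ht
  have h2 := hΦ y
  rw [h1, hp, Complex.im_ofReal_mul] at h2
  exact (mul_eq_zero.1 h2).resolve_left hp0

/-- Nikishin functions -/
def NU : ℕ → (ℕ → Measure ℝ) → (ℕ → ℝ) → ℂ → ℂ
  | 0, _, _, _ => 1
  | g + 1, ν, e, z => (e 0 : ℂ) * CT (ν 0) (fun t => NU g (fun i => ν (i + 1)) (fun i => e (i + 1)) t) z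

lemma NU_zero (ν e) (z : ℂ) : NU 0 ν e z = 1 := by simp only [NU]
lemma NU_succ (g : ℕ) (ν e) (z : ℂ) : NU (g + 1) ν e z =
    (e 0 : ℂ) * CT (ν 0) (fun t => NU g (fun i => ν (i + 1)) (fun i => e (i + 1)) t) z := by
  simp only [NU]

lemma NU_CS (g : ℕ) : ∀ ν e, CS (NU g ν e) := by
  induction g with
  | zero => intro ν e z; simp [NU_zero]
  | succ g ih =>
    intro ν e z
    rw [NU_succ, NU_succ, map_mul, Complex.conj_ofReal, CT_CS fun t => (ih _ _).im t]

/-- Nikishin data of length `M` -/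
structure NS (M : ℕ) (ν : ℕ → Measure ℝ) (e a b : ℕ → ℝ) : Prop where
  gm : ∀ l < M, GM (ν l) (a l) (b l)
  sg : ∀ l < M, e l ≠ 0
  dj : ∀ l < M, Disjoint (Icc (a l) (b l)) (Icc (a (l + 1)) (b (l + 1)))

lemma NS.shift {M : ℕ} {ν : ℕ → Measure ℝ} {e a b : ℕ → ℝ} (h : NS (M + 1) ν e a b) :
    NS M (fun i => ν (i + 1)) (fun i => e (i + 1)) (fun i => a (i + 1)) (fun i => b (i + 1)) :=
  ⟨fun l hl => h.gm (l + 1) (by omega), fun l hl => h.sg (l + 1) (by omega),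
    fun l hl => h.dj (l + 1) (by omega)⟩

lemma notMem_KK_of_disjoint {a b c d : ℝ} (h : Disjoint (Icc a b) (Icc c d)) {t : ℝ}
    (ht : t ∈ Icc a b) : (t : ℂ) ∉ KK c d := fun h2 =>
  Set.disjoint_left.1 h ht (ofReal_mem_KK.1 h2)

lemma NU_diff (k : ℕ) : ∀ (M : ℕ) (ν : ℕ → Measure ℝ) (e a b : ℕ → ℝ), NS M ν e a b → k ≤ M →
    DifferentiableOn ℂ (NU k ν e) (KK (a 0) (b 0))ᶜ := by
  induction k with
  | zero =>
    intro M ν e a b h _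
    exact (differentiableOn_const (1 : ℂ)).congr fun z _ => NU_zero _ _ z
  | succ k ih =>
    intro M ν e a b h hk
    obtain ⟨M, rfl⟩ : ∃ M', M = M' + 1 := ⟨M - 1, by omega⟩
    have h1 := ih M _ _ _ _ h.shift (by omega)
    have hc : ContinuousOn (fun t : ℝ => NU k (fun i => ν (i + 1)) (fun i => e (i + 1)) t)
        (Icc (a 0) (b 0)) :=
      h1.continuousOn.comp Complex.continuous_ofReal.continuousOn fun t ht =>
        notMem_KK_of_disjoint (h.dj 0 (by omega)) ht
    exact ((CT_diff (h.gm 0 (by omega)) hc).const_mul _).congr fun z _ => NU_succ _ _ _ z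

lemma no_roots {w : ℝ[X]} (h : ∀ z : ℂ, aeval z w ≠ 0) : w.natDegree = 0 := by
  by_contra hd
  have hd' : 0 < (w.map (algebraMap ℝ ℂ)).degree := by
    rw [degree_map]
    exact natDegree_pos_iff_degree_pos.1 (Nat.pos_of_ne_zero hd)
  obtain ⟨z, hz⟩ := Complex.exists_root hd'
  apply h z
  rw [IsRoot, eval_map, ← aeval_def] at hz
  exact hz

end Nik

namespace Nik
open scoped Topology

lemma natDegree_prodT (T : Finset ℝ) : (∏ t ∈ T, (X - C t) : ℝ[X]).natDegree = T.card := by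
  rw [natDegree_prod_of_monic _ _ fun y _ => monic_X_sub_C y]
  simp

lemma aeval_prodT (T : Finset ℝ) (z : ℂ) :
    aeval z (∏ t ∈ T, (X - C t) : ℝ[X]) = ∏ t ∈ T, (z - (t : ℂ)) := by
  rw [map_prod]; simp

lemma prodT_ne {T : Finset ℝ} {z : ℂ} (h : ∀ t ∈ T, (t : ℂ) ≠ z) :
    aeval z (∏ t ∈ T, (X - C t) : ℝ[X]) ≠ 0 := by
  rw [aeval_prodT]
  exact Finset.prod_ne_zero_iff.2 fun t ht => sub_ne_zero.2 (h t ht).symm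

lemma lemC (M : ℕ) : ∀ (ν : ℕ → Measure ℝ) (e a b : ℕ → ℝ), NS M ν e a b →
    ∀ (Q : Finset ℕ), Q ⊆ Finset.range (M + 1) → ∀ c : ℕ → ℝ, (∃ k ∈ Q, c k ≠ 0) →
    ∀ (w : ℝ[X]) (H : ℂ → ℂ), (∀ z ∈ KK (a 0) (b 0), aeval z w ≠ 0) →
    DifferentiableOn ℂ H (KK (a 0) (b 0))ᶜ →
    (∀ z ∉ KK (a 0) (b 0), aeval z w * H z = ∑ k ∈ Q, (c k : ℂ) * NU k ν e z) →
    w.natDegree < Q.card := by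
  have triv : ∀ (ν : ℕ → Measure ℝ) (e a b : ℕ → ℝ) (Q : Finset ℕ) (c : ℕ → ℝ), 
      (∃ k ∈ Q, c k ≠ 0) → (∀ k ∈ Q, c k ≠ 0 → k = 0) → 
      ∀ (w : ℝ[X]) (H : ℂ → ℂ), (∀ z ∈ KK (a 0) (b 0), aeval z w ≠ 0) →
      (∀ z ∉ KK (a 0) (b 0), aeval z w * H z = ∑ k ∈ Q, (c k : ℂ) * NU k ν e z) →
      w.natDegree < Q.card := by
    intro ν e a b Q c hc h0 w H hw hH
    obtain ⟨k, hk, hck⟩ := hc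
    obtain rfl := h0 k hk hck
    have : w.natDegree = 0 := no_roots fun z hz => by
      by_cases hzK : z ∈ KK (a 0) (b 0)
      · exact hw z hzK hz
      · have h1 := hH z hzK
        rw [hz, zero_mul, Finset.sum_eq_single 0, NU_zero, mul_one] at h1
        · exact hck (by exact_mod_cast h1.symm)
        · intro k hk hk0
          have : c k = 0 := by
            by_contra h; exact hk0 (h0 k hk h)
          rw [this]; simp
        · exact fun h => absurd hk h
    rw [this]
    exact Finset.card_pos.2 ⟨0, hk⟩
  induction M with
  | zero =>
    intro ν e a b h Q hQ c hc w H hw _ hH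
    exact triv ν e a b Q c hc (fun k hk _ => by
      have := Finset.mem_range.1 (hQ hk); omega) w H hw hH
  | succ M ih =>
    intro ν e a b h Q hQ c hc w H hw hHd hH
    by_cases htr : ∀ k ∈ Q, c k ≠ 0 → k = 0
    · exact triv ν e a b Q c hc htr w H hw hH
    push Not at htr
    obtain ⟨k0, hk0, hck0, hk00⟩ := htr
    by_contra hN
    have hg := h.gm 0 (by omega)
    have he := h.sg 0 (by omega)
    set ν' : ℕ → Measure ℝ := fun i => ν (i + 1) with hν'
    set e' : ℕ → ℝ := fun i => e (i + 1) with he'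
    set Q' : Finset ℕ := (Q.erase 0).image (fun k => k - 1) with hQ'
    have hinj : Set.InjOn (fun k : ℕ => k - 1) (Q.erase 0 : Finset ℕ) := by
      intro x hx y hy hxy
      have h1 := (Finset.mem_erase.1 hx).1
      have h2 := (Finset.mem_erase.1 hy).1
      simp only at hxy; omega
    have hQ'c : Q'.card = (Q.erase 0).card := Finset.card_image_of_injOn hinj
    have hQ'r : Q' ⊆ Finset.range (M + 1) := by
      intro k hk
      obtain ⟨j, hj, rfl⟩ := Finset.mem_image.1 hk
      have h1 := Finset.mem_range.1 (hQ (Finset.mem_erase.1 hj).2)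
      have h2 := (Finset.mem_erase.1 hj).1
      rw [Finset.mem_range]; omega
    let Φ : ℂ → ℂ := fun z => ∑ k ∈ Q', (c (k + 1) : ℂ) * NU k ν' e' z
    have hΦeq : ∀ z, Φ z = ∑ k ∈ Q.erase 0, (c k : ℂ) * NU (k - 1) ν' e' z := by
      intro z
      simp only [Φ]
      rw [hQ', Finset.sum_image hinj]
      refine Finset.sum_congr rfl fun k hk => ?_
      have h2 := (Finset.mem_erase.1 hk).1
      rw [Nat.sub_add_cancel (by omega)]
    have hNd : ∀ k ∈ Q', DifferentiableOn ℂ (NU k ν' e') (KK (a 1) (b 1))ᶜ := fun k hk =>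
      NU_diff k M _ _ _ _ h.shift (by have := Finset.mem_range.1 (hQ'r hk); omega)
    have hΦd : DifferentiableOn ℂ Φ (KK (a 1) (b 1))ᶜ :=
      DifferentiableOn.fun_sum fun k hk => (hNd k hk).const_mul _
    have hsub : ∀ t ∈ Icc (a 0) (b 0), (t : ℂ) ∈ (KK (a 1) (b 1))ᶜ := fun t ht =>
      notMem_KK_of_disjoint (h.dj 0 (by omega)) ht
    have hΦc : ContinuousOn (fun t : ℝ => Φ t) (Icc (a 0) (b 0)) :=
      hΦd.continuousOn.comp Complex.continuous_ofReal.continuousOn hsub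
    have hΦr : ∀ x : ℝ, (Φ x).im = 0 := by
      intro x
      simp only [Φ, Complex.im_sum]
      refine Finset.sum_eq_zero fun k _ => ?_
      rw [Complex.im_ofReal_mul, (NU_CS k _ _).im, mul_zero]
    let φ : ℝ → ℂ := fun t => (e 0 : ℂ) * Φ t
    have hφc : ContinuousOn φ (Icc (a 0) (b 0)) := continuousOn_const.mul hΦc
    set c0 : ℂ := if 0 ∈ Q then (c 0 : ℂ) else 0 with hc0
    have hform : ∀ z ∉ KK (a 0) (b 0), ∑ k ∈ Q, (c k : ℂ) * NU k ν e z = c0 + CT (ν 0) φ z := by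
      intro z hz
      have h1 : ∑ k ∈ Q.erase 0, (c k : ℂ) * NU k ν e z = CT (ν 0) φ z := by
        have h2 : CT (ν 0) φ z = CT (ν 0) (fun t => ∑ k ∈ Q.erase 0,
            (e 0 : ℂ) * (c k : ℂ) * NU (k - 1) ν' e' t) z := by
          refine CT_congr hg (fun t ht => ?_) z
          simp only [φ]
          rw [hΦeq, Finset.mul_sum]
          exact Finset.sum_congr rfl fun k _ => by ring
        rw [h2, CT_sum hg]
        · refine Finset.sum_congr rfl fun k hk => ?_
          have h2 := (Finset.mem_erase.1 hk).1
          obtain ⟨j, rfl⟩ : ∃ j, k = j + 1 := ⟨k - 1, by omega⟩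
          rw [NU_succ, CT_const_mul]
          simp only [Nat.add_sub_cancel]
          ring
        · intro k hk
          refine continuousOn_const.mul ?_
          exact (hNd (k - 1) (Finset.mem_image_of_mem _ hk)).continuousOn.comp
            Complex.continuous_ofReal.continuousOn hsub
        · exact hz
      by_cases h0 : 0 ∈ Q
      · rw [← Finset.add_sum_erase Q _ h0, h1, hc0, if_pos h0, NU_zero, mul_one]
      · rw [hc0, if_neg h0, zero_add, ← h1, Finset.erase_eq_of_notMem h0]
    have hQpos : 0 < (Q.erase 0).card := Finset.card_pos.2 ⟨k0, Finset.mem_erase.2 ⟨hk00, hk0⟩⟩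
    have hwne : w ≠ 0 := by
      rintro rfl
      obtain ⟨t, ht⟩ := hg.nonempty
      exact hw t (ofReal_mem_KK.2 ht) (by simp)
    have hle : (Q.erase 0).card ≤ Q.card := Finset.card_le_card (Finset.erase_subset _ _)
    set N := w.natDegree with hNdef
    -- the number of orthogonality conditions
    have hlimF : Tendsto (fun z => z ^ ((Q.erase 0).card) * (∑ k ∈ Q, (c k : ℂ) * NU k ν e z) / z ^ N)
        (cocompact ℂ) (𝓝 0) := by
      have hct := CT_tendsto_zero hg hφc
      have hinv : Tendsto (fun z : ℂ => z⁻¹) (cocompact ℂ) (𝓝 0) := by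
        rw [← Metric.cobounded_eq_cocompact]; exact tendsto_inv₀_cobounded
      have hne : ∀ᶠ z : ℂ in cocompact ℂ, z ≠ 0 := by
        filter_upwards [(tendsto_norm_cocompact_atTop (E := ℂ)).eventually_gt_atTop 0] with z hz
        exact norm_pos_iff.1 hz
      have key : Tendsto (fun z : ℂ => (z⁻¹) ^ (N - (Q.erase 0).card) * (c0 + CT (ν 0) φ z))
          (cocompact ℂ) (𝓝 0) := by
        by_cases h0 : 0 ∈ Q
        · have h1 := (hinv.pow (N - (Q.erase 0).card)).mul (hct.const_add c0)
          have : N - (Q.erase 0).card ≠ 0 := by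
            rw [Finset.card_erase_of_mem h0]
            have := Finset.card_pos.2 ⟨0, h0⟩
            omega
          rw [zero_pow this, zero_mul] at h1
          exact h1
        · have h1 := (hinv.pow (N - (Q.erase 0).card)).mul (hct.const_add c0)
          have : c0 = 0 := by rw [hc0, if_neg h0]
          rw [this, add_zero, mul_zero] at h1
          rw [this]; exact h1
      refine key.congr' ?_
      filter_upwards [hne, eventually_notMem_KK (a 0) (b 0)] with z hz hzK
      rw [hform z hzK, inv_pow, eq_div_iff (pow_ne_zero _ hz)]
      have : z ^ N = z ^ (N - (Q.erase 0).card) * z ^ (Q.erase 0).card := by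
        rw [← pow_add]; congr 1; omega
      rw [this]
      have := pow_ne_zero (N - (Q.erase 0).card) hz
      field_simp
    have hlim := H_lim hwne (Q.erase 0).card (by
      filter_upwards [eventually_notMem_KK (a 0) (b 0)] with z hzK
      exact hH z hzK) hlimF
    obtain ⟨T, hT, hTc, hT0⟩ := Engine hg (aeval_diff w) hw (aeval_CS w).im hHd
      (differentiable_const c0) hφc (fun x _ => by
        simp only [φ]; rw [Complex.im_ofReal_mul, hΦr, mul_zero])
      (fun z hz => by rw [hH z hz, hform z hz]) _ (tendsto_zero_of_pow hlim) hlim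
    obtain ⟨H', hH'd, hH'⟩ := Div (isOpen_KKc (a 1) (b 1)) T Φ hΦd fun t ht =>
      ⟨hsub t (hT ht), (mul_eq_zero.1 (hT0 t ht)).resolve_left (by exact_mod_cast he)⟩
    have hfin := ih ν' e' (fun i => a (i + 1)) (fun i => b (i + 1)) h.shift Q' hQ'r
      (fun k => c (k + 1)) ⟨k0 - 1, Finset.mem_image_of_mem _ (Finset.mem_erase.2 ⟨hk00, hk0⟩), by
        rwa [Nat.sub_add_cancel (by omega)]⟩ (∏ t ∈ T, (X - C t)) H'
      (fun z hz => prodT_ne fun t ht htz => hsub t (hT ht) (htz ▸ hz)) hH'd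
      (fun z hz => (hH' z hz).symm)
    rw [natDegree_prodT, hTc, hQ'c] at hfin
    exact lt_irrefl _ hfin

/-- fewer than `|Q|` zeros -/
lemma lemC_zeros {M : ℕ} {ν : ℕ → Measure ℝ} {e a b : ℕ → ℝ} (h : NS M ν e a b)
    (Q : Finset ℕ) (hQ : Q ⊆ Finset.range (M + 1)) (c : ℕ → ℝ) (hc : ∃ k ∈ Q, c k ≠ 0)
    (T : Finset ℝ) (hT : ∀ t ∈ T, (t : ℂ) ∉ KK (a 0) (b 0))
    (hT0 : ∀ t ∈ T, ∑ k ∈ Q, (c k : ℂ) * NU k ν e t = 0) : T.card < Q.card := by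
  have hΦd : DifferentiableOn ℂ (fun z => ∑ k ∈ Q, (c k : ℂ) * NU k ν e z) (KK (a 0) (b 0))ᶜ :=
    DifferentiableOn.fun_sum fun k hk => (NU_diff k M _ _ _ _ h
      (by have := Finset.mem_range.1 (hQ hk); omega)).const_mul _
  obtain ⟨H', hH'd, hH'⟩ := Div (isOpen_KKc (a 0) (b 0)) T _ hΦd fun t ht =>
      ⟨hT t ht, hT0 t ht⟩
  have := lemC M ν e a b h Q hQ c hc (∏ t ∈ T, (X - C t)) H'
      (fun z hz => prodT_ne fun t ht htz => hT t ht (htz ▸ hz)) hH'd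
      (fun z hz => (hH' z hz).symm)
  rwa [natDegree_prodT] at this

/-- if a form vanishes at `|Q|-1` points, the quotient does not vanish on the real line -/
lemma lemC_quot {M : ℕ} {ν : ℕ → Measure ℝ} {e a b : ℕ → ℝ} (h : NS M ν e a b)
    (Q : Finset ℕ) (hQ : Q ⊆ Finset.range (M + 1)) (c : ℕ → ℝ) (hc : ∃ k ∈ Q, c k ≠ 0)
    (T : Finset ℝ) (hT : ∀ t ∈ T, (t : ℂ) ∉ KK (a 0) (b 0)) (hTc : Q.card ≤ T.card + 1)
    (hT0 : ∀ t ∈ T, ∑ k ∈ Q, (c k : ℂ) * NU k ν e t = 0) :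
    ∃ g : ℝ → ℝ, ContinuousOn g {x : ℝ | (x : ℂ) ∉ KK (a 0) (b 0)} ∧
      (∀ x : ℝ, (x : ℂ) ∉ KK (a 0) (b 0) → g x ≠ 0 ∧
        ∑ k ∈ Q, (c k : ℂ) * NU k ν e x = (((∏ t ∈ T, (x - t)) * g x : ℝ) : ℂ)) := by
  have hΦd : DifferentiableOn ℂ (fun z => ∑ k ∈ Q, (c k : ℂ) * NU k ν e z) (KK (a 0) (b 0))ᶜ :=
    DifferentiableOn.fun_sum fun k hk => (NU_diff k M _ _ _ _ h
      (by have := Finset.mem_range.1 (hQ hk); omega)).const_mul _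
  obtain ⟨H, hHd, hH⟩ := Div (isOpen_KKc (a 0) (b 0)) T _ hΦd fun t ht =>
      ⟨hT t ht, hT0 t ht⟩
  have hHr := real_of_div (isOpen_KKc (a 0) (b 0)) (Φ := fun z => ∑ k ∈ Q, (c k : ℂ) * NU k ν e z)
    (fun x => by
      simp only [Complex.im_sum]
      refine Finset.sum_eq_zero fun k _ => ?_
      rw [Complex.im_ofReal_mul, (NU_CS k _ _).im, mul_zero]) T hHd.continuousOn hH
  refine ⟨fun x => (H x).re, ?_, fun x hx => ?_⟩
  · exact Complex.continuous_re.comp_continuousOn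
      (hHd.continuousOn.comp Complex.continuous_ofReal.continuousOn fun x hx => hx)
  have hre : H x = ((H x).re : ℂ) := Complex.ext (by simp) (by simpa using hHr x hx)
  refine ⟨fun h0 => ?_, ?_⟩
  · simp only at h0
    rw [h0, Complex.ofReal_zero] at hre
    have h2 : ∀ z : ℂ, H z = (z - x) * dslope H x z := by
      intro z
      have := sub_smul_dslope H (x : ℂ) z
      rw [hre, sub_zero, smul_eq_mul] at this
      exact this.symm
    have := lemC M ν e a b h Q hQ c hc ((∏ t ∈ T, (X - C t)) * (X - C x)) (dslope H x)
      (fun z hz => by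
        rw [map_mul]
        refine mul_ne_zero (prodT_ne fun t ht htz => hT t ht (htz ▸ hz)) ?_
        simp only [map_sub, aeval_X, aeval_C, Complex.coe_algebraMap]
        exact sub_ne_zero.2 fun h => hx (h ▸ hz))
      ((Complex.differentiableOn_dslope ((isOpen_KKc _ _).mem_nhds hx)).2 hHd)
      (fun z hz => by
        rw [hH z hz, h2 z]
        simp only [map_mul, map_sub, aeval_X, aeval_C, Complex.coe_algebraMap]
        ring)
    rw [Monic.natDegree_mul (monic_prod_of_monic _ _ fun t _ => monic_X_sub_C t)
      (monic_X_sub_C x), natDegree_prodT, natDegree_X_sub_C] at this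
    omega
  · have := hH x hx
    rw [this, aeval_prodT, hre]
    push_cast
    simp

end Nik

namespace Nik
open scoped Topology

/-- positivity certificates on `[a,b]` -/
inductive Pr (a b : ℝ) : ℝ[X] → Prop
  | sq (q : ℝ[X]) : Pr a b (q ^ 2)
  | add {p q : ℝ[X]} : Pr a b p → Pr a b q → Pr a b (p + q)
  | mulA {p : ℝ[X]} : Pr a b p → Pr a b ((X - C a) * p)
  | mulB {p : ℝ[X]} : Pr a b p → Pr a b ((C b - X) * p)
  | mulsq (q : ℝ[X]) {p : ℝ[X]} : Pr a b p → Pr a b (q ^ 2 * p)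

lemma Pr_nonneg {a b : ℝ} (hab : a < b) (Λ : ℝ[X] →ₗ[ℝ] ℝ) (h1 : ∀ q, 0 ≤ Λ (q ^ 2))
    (h2 : ∀ q, 0 ≤ Λ (q ^ 2 * (X - C a))) (h3 : ∀ q, 0 ≤ Λ (q ^ 2 * (C b - X))) {p : ℝ[X]}
    (hp : Pr a b p) : ∀ q, 0 ≤ Λ (q ^ 2 * p) ∧ 0 ≤ Λ (q ^ 2 * ((X - C a) * p)) ∧
      0 ≤ Λ (q ^ 2 * ((C b - X) * p)) ∧ 0 ≤ Λ (q ^ 2 * ((X - C a) * (C b - X) * p)) := by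
  have h4 : ∀ q : ℝ[X], 0 ≤ Λ (q ^ 2 * ((X - C a) * (C b - X))) := by
    intro q
    have e1 : (b - a) • (q ^ 2 * ((X - C a) * (C b - X))) =
        ((X - C a) * q) ^ 2 * (C b - X) + ((C b - X) * q) ^ 2 * (X - C a) := by
      rw [smul_eq_C_mul, C_sub]; ring
    have e2 := congrArg Λ e1
    rw [map_smul, map_add, smul_eq_mul] at e2
    have := add_nonneg (h3 ((X - C a) * q)) (h2 ((C b - X) * q))
    rw [← e2] at this
    exact nonneg_of_mul_nonneg_right this (sub_pos.2 hab)
  induction hp with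
  | sq r =>
    intro q
    refine ⟨?_, ?_, ?_, ?_⟩
    · convert h1 (q * r) using 2; ring
    · convert h2 (q * r) using 2; ring
    · convert h3 (q * r) using 2; ring
    · convert h4 (q * r) using 2; ring
  | add _ _ ih1 ih2 =>
    intro q
    obtain ⟨a1, a2, a3, a4⟩ := ih1 q
    obtain ⟨b1, b2, b3, b4⟩ := ih2 q
    simp only [mul_add, map_add]
    exact ⟨add_nonneg a1 b1, add_nonneg a2 b2, add_nonneg a3 b3, add_nonneg a4 b4⟩
  | mulA _ ih =>
    intro q
    obtain ⟨a1, a2, a3, a4⟩ := ih q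
    obtain ⟨b1, b2, b3, b4⟩ := ih ((X - C a) * q)
    refine ⟨a2, ?_, ?_, ?_⟩
    · convert b1 using 2; ring
    · convert a4 using 2; ring
    · convert b3 using 2; ring
  | mulB _ ih =>
    intro q
    obtain ⟨a1, a2, a3, a4⟩ := ih q
    obtain ⟨b1, b2, b3, b4⟩ := ih ((C b - X) * q)
    refine ⟨a3, ?_, ?_, ?_⟩
    · convert a4 using 2; ring
    · convert b1 using 2; ring
    · convert b2 using 2; ring
  | mulsq r _ ih =>
    intro q
    obtain ⟨a1, a2, a3, a4⟩ := ih (q * r)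
    refine ⟨?_, ?_, ?_, ?_⟩
    · convert a1 using 2; ring
    · convert a2 using 2; ring
    · convert a3 using 2; ring
    · convert a4 using 2; ring

lemma poly_nonneg_closure {a b : ℝ} (hab : a < b) (p : ℝ[X]) (ρ : ℝ)
    (h : ∀ t ∈ Icc a b, t ≠ ρ → 0 ≤ p.eval t) : ∀ t ∈ Icc a b, 0 ≤ p.eval t := by
  intro t ht
  by_contra hneg
  push Not at hneg
  have hV : IsOpen {x : ℝ | p.eval x < 0} := isOpen_lt p.continuous continuous_const
  have htc : t ∈ closure (Ioo a b) := by rwa [closure_Ioo hab.ne]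
  obtain ⟨y, hy, hyI⟩ := mem_closure_iff.1 htc _ hV hneg
  have hd : Dense (({ρ} : Set ℝ)ᶜ) := dense_compl_singleton ρ
  obtain ⟨x, hx, hxρ⟩ := hd.inter_open_nonempty _ (hV.inter isOpen_Ioo) ⟨y, hy, hyI⟩
  exact absurd (h x ⟨hx.2.1.le, hx.2.2.le⟩ hxρ) (not_le.2 hx.1)

lemma Pr_of_nonneg {a b : ℝ} (hab : a < b) (n : ℕ) : ∀ p : ℝ[X], p.natDegree ≤ n →
    (∀ t ∈ Icc a b, 0 ≤ p.eval t) → Pr a b p := by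
  induction n with
  | zero =>
    intro p hp h
    have hpC := eq_C_of_natDegree_eq_zero (Nat.le_zero.1 hp)
    have h0 := h a ⟨le_rfl, hab.le⟩
    rw [hpC, eval_C] at h0
    have := Pr.sq (a := a) (b := b) (C (Real.sqrt (p.coeff 0)))
    rw [← C_pow, Real.sq_sqrt h0, ← hpC] at this
    exact this
  | succ n ih =>
    intro p hp h
    by_cases hp0 : p.natDegree = 0
    · exact ih p (by omega) h
    have hpne : p ≠ 0 := by rintro rfl; simp at hp0
    have : ∃ z : ℂ, aeval z p = 0 := by
      by_contra hcon
      push Not at hcon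
      exact hp0 (no_roots hcon)
    obtain ⟨z, hz⟩ := this
    by_cases him : z.im = 0
    · -- real root
      set ρ := z.re with hρ
      have hzρ : z = (ρ : ℂ) := Complex.ext (by simp [hρ]) (by simpa using him)
      have hroot : p.eval ρ = 0 := by
        rw [hzρ] at hz
        have h2 : aeval (ρ : ℂ) p = ((p.eval ρ : ℝ) : ℂ) := by
          rw [← Complex.coe_algebraMap, aeval_algebraMap_apply]; simp
        rw [h2] at hz; exact_mod_cast hz
      obtain ⟨p1, hp1⟩ := dvd_iff_isRoot.2 hroot
      have hp1ne : p1 ≠ 0 := by rintro rfl; simp at hp1; exact hpne hp1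
      have hdeg : p1.natDegree ≤ n := by
        have := natDegree_mul (X_sub_C_ne_zero ρ) hp1ne
        rw [← hp1, natDegree_X_sub_C] at this; omega
      have hev : ∀ t, p.eval t = (t - ρ) * p1.eval t := fun t => by rw [hp1]; simp
      rcases le_or_gt ρ a with hle | hgt
      · have hpos : ∀ t ∈ Icc a b, 0 ≤ p1.eval t := poly_nonneg_closure hab p1 ρ fun t ht hne => by
          have h1 := h t ht
          rw [hev] at h1
          have : 0 < t - ρ := lt_of_le_of_ne (by linarith [ht.1]) (sub_ne_zero.2 hne).symm
          exact nonneg_of_mul_nonneg_right h1 this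
        have hP := ih p1 hdeg hpos
        have := (Pr.mulA hP).add (Pr.mulsq (C (Real.sqrt (a - ρ))) hP)
        convert this using 1
        rw [← C_pow, Real.sq_sqrt (sub_nonneg.2 hle), hp1, C_sub]; ring
      rcases le_or_gt b ρ with hge | hlt
      · have hpos : ∀ t ∈ Icc a b, 0 ≤ (-p1).eval t := poly_nonneg_closure hab (-p1) ρ fun t ht hne => by
          have h1 := h t ht
          rw [hev] at h1
          have : 0 < ρ - t := lt_of_le_of_ne (by linarith [ht.2]) (sub_ne_zero.2 hne.symm).symm
          rw [eval_neg]
          exact nonneg_of_mul_nonneg_right (by linarith : 0 ≤ (ρ - t) * -eval t p1) this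
        have hP := ih (-p1) (by rwa [natDegree_neg]) hpos
        have := (Pr.mulB hP).add (Pr.mulsq (C (Real.sqrt (ρ - b))) hP)
        convert this using 1
        rw [← C_pow, Real.sq_sqrt (sub_nonneg.2 hge), hp1, C_sub]; ring
      · have hρI : ρ ∈ Icc a b := ⟨hgt.le, hlt.le⟩
        have hp1r : p1.eval ρ = 0 := by
          apply le_antisymm
          · have : ∀ t ∈ Icc a ρ, 0 ≤ (-p1).eval t :=
              poly_nonneg_closure hgt (-p1) ρ fun t ht hne => by
                have h1 := h t ⟨ht.1, ht.2.trans hlt.le⟩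
                rw [hev] at h1
                have : 0 < ρ - t := lt_of_le_of_ne (by linarith [ht.2]) (sub_ne_zero.2 hne.symm).symm
                rw [eval_neg]
                exact nonneg_of_mul_nonneg_right (by linarith : 0 ≤ (ρ - t) * -eval t p1) this
            have := this ρ ⟨hgt.le, le_rfl⟩
            rw [eval_neg] at this; linarith
          · have : ∀ t ∈ Icc ρ b, 0 ≤ p1.eval t :=
              poly_nonneg_closure hlt p1 ρ fun t ht hne => by
                have h1 := h t ⟨hgt.le.trans ht.1, ht.2⟩
                rw [hev] at h1
                have : 0 < t - ρ := lt_of_le_of_ne (by linarith [ht.1]) (sub_ne_zero.2 hne).symm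
                exact nonneg_of_mul_nonneg_right h1 this
            exact this ρ ⟨le_rfl, hlt.le⟩
        obtain ⟨p2, hp2⟩ := dvd_iff_isRoot.2 hp1r
        have hp2ne : p2 ≠ 0 := by rintro rfl; simp at hp2; exact hp1ne hp2
        have hdeg2 : p2.natDegree ≤ n := by
          have := natDegree_mul (X_sub_C_ne_zero ρ) hp2ne
          rw [← hp2, natDegree_X_sub_C] at this; omega
        have hpos : ∀ t ∈ Icc a b, 0 ≤ p2.eval t := poly_nonneg_closure hab p2 ρ fun t ht hne => by
          have h1 := h t ht
          rw [hev, hp2] at h1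
          have h2 : 0 < (t - ρ) ^ 2 := by
            have := sub_ne_zero.2 hne
            positivity
          refine nonneg_of_mul_nonneg_right (b := p2.eval t) ?_ h2
          simp only [eval_mul, eval_sub, eval_X, eval_C] at h1
          linarith
        have := Pr.mulsq (X - C ρ) (ih p2 hdeg2 hpos)
        convert this using 1
        rw [hp1, hp2]; ring
    · obtain ⟨p1, hp1⟩ := p.quadratic_dvd_of_aeval_eq_zero_im_ne_zero hz him
      have hq : (X ^ 2 - C (2 * z.re) * X + C (‖z‖ ^ 2) : ℝ[X]) =
          (X - C z.re) ^ 2 + (C z.im) ^ 2 := by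
        have : ‖z‖ ^ 2 = z.re ^ 2 + z.im ^ 2 := by
          rw [← Complex.normSq_eq_norm_sq, Complex.normSq_apply]; ring
        rw [this, C_add, C_pow, C_pow, C_mul, show (C (2:ℝ) : ℝ[X]) = 2 by rfl]; ring
      rw [hq] at hp1
      have hp1ne : p1 ≠ 0 := by rintro rfl; simp at hp1; exact hpne hp1
      have hqd : ((X - C z.re) ^ 2 + (C z.im) ^ 2 : ℝ[X]).natDegree = 2 := by
        rw [← C_pow, natDegree_add_C, natDegree_pow, natDegree_X_sub_C]
      have hqne : ((X - C z.re) ^ 2 + (C z.im) ^ 2 : ℝ[X]) ≠ 0 := by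
        intro h0; rw [h0] at hqd; simp at hqd
      have hdeg : p1.natDegree ≤ n := by
        have := natDegree_mul hqne hp1ne
        rw [← hp1, hqd] at this; omega
      have hpos : ∀ t ∈ Icc a b, 0 ≤ p1.eval t := by
        intro t ht
        have h1 := h t ht
        rw [hp1] at h1
        simp only [eval_mul, eval_add, eval_pow, eval_sub, eval_X, eval_C] at h1
        exact nonneg_of_mul_nonneg_right h1 (by positivity)
      have hP := ih p1 hdeg hpos
      have := (Pr.mulsq (X - C z.re) hP).add (Pr.mulsq (C z.im) hP)
      convert this using 1
      rw [hp1]; ring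

lemma hausdorff {a b : ℝ} (hab : a < b) (Λ : ℝ[X] →ₗ[ℝ] ℝ) (h1 : ∀ q, 0 ≤ Λ (q ^ 2))
    (h2 : ∀ q, 0 ≤ Λ (q ^ 2 * (X - C a))) (h3 : ∀ q, 0 ≤ Λ (q ^ 2 * (C b - X))) :
    ∃ τ : Measure ℝ, IsFiniteMeasure τ ∧ τ (Icc a b)ᶜ = 0 ∧ ∀ p : ℝ[X], Λ p = ∫ t, p.eval t ∂τ := by
  have hpos : ∀ p : ℝ[X], (∀ t ∈ Icc a b, 0 ≤ p.eval t) → 0 ≤ Λ p := by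
    intro p hp
    have := (Pr_nonneg hab Λ h1 h2 h3 (Pr_of_nonneg hab _ p le_rfl hp) 1).1
    simpa using this
  let L : ℝ[X] →ₗ[ℝ] C(Icc a b, ℝ) := (toContinuousMapOnAlgHom (Icc a b)).toLinearMap
  have hL : ∀ p (x : Icc a b), L p x = p.eval (x : ℝ) := fun p x => rfl
  have hinj : Function.Injective L := by
    intro p q hpq
    refine eq_of_infinite_eval_eq p q ((Icc_infinite hab).mono fun t ht => ?_)
    have := congrArg (fun f : C(Icc a b, ℝ) => f ⟨t, ht⟩) hpq
    exact this
  let eqv := LinearEquiv.ofInjective L hinj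
  let f : C(Icc a b, ℝ) →ₗ.[ℝ] ℝ := ⟨LinearMap.range L, Λ.comp eqv.symm.toLinearMap⟩
  let s : PointedCone ℝ C(Icc a b, ℝ) := PointedCone.positive ℝ C(Icc a b, ℝ)
  have hs : ∀ g, g ∈ s ↔ 0 ≤ g := fun g => by simp [s]
  have hf : ∀ p, f ⟨L p, ⟨p, rfl⟩⟩ = Λ p := by
    intro p
    change Λ (eqv.symm ⟨L p, ⟨p, rfl⟩⟩) = Λ p
    congr 1
    rw [LinearEquiv.symm_apply_eq]
    rfl
  obtain ⟨g, hg, hgs⟩ := riesz_extension s f (by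
      rintro ⟨x, ⟨p, rfl⟩⟩ hx
      rw [hf]
      refine hpos p fun t ht => ?_
      have := (hs _).1 hx
      exact this ⟨t, ht⟩)
    (by
      intro y
      refine ⟨⟨L (C ‖y‖), ⟨_, rfl⟩⟩, (hs _).2 fun x => ?_⟩
      have : -‖y‖ ≤ y x := (abs_le.1 (y.norm_coe_le_norm x)).1
      change (0:ℝ) ≤ L (C ‖y‖) x + y x
      rw [hL, eval_C]
      linarith)
  let Λ' : CompactlySupportedContinuousMap (Icc a b) ℝ →ₚ[ℝ] ℝ := PositiveLinearMap.mk₀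
    { toFun := fun u => g u.toContinuousMap
      map_add' := fun u v => by rw [← map_add]; rfl
      map_smul' := fun c u => by rw [RingHom.id_apply, ← map_smul]; rfl }
    (fun u hu => hgs _ ((hs _).2 fun x => hu x))
  let τ0 := RealRMK.rieszMeasure Λ'
  refine ⟨τ0.map Subtype.val, inferInstance, ?_, fun p => ?_⟩
  · rw [Measure.map_apply measurable_subtype_coe measurableSet_Icc.compl]
    convert measure_empty (μ := τ0)
    ext x; simpa using x.2
  · rw [integral_map measurable_subtype_coe.aemeasurable p.continuous.aestronglyMeasurable]
    have := RealRMK.integral_rieszMeasure Λ' ⟨L p, HasCompactSupport.of_compactSpace _⟩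
    have h4 : Λ' ⟨L p, HasCompactSupport.of_compactSpace _⟩ = Λ p := by
      change g (L p) = Λ p
      rw [← hf p, ← hg]
    rw [← h4, ← this]
    rfl

end Nik

namespace Nik
open scoped Topology

lemma GM.lt {κ : Measure ℝ} {a b : ℝ} (h : GM κ a b) : a < b := by
  obtain ⟨x, hx⟩ := h.nonempty
  have hab : a ≤ b := hx.1.trans hx.2
  refine lt_of_le_of_ne hab ?_
  rintro rfl
  have := h.null
  rw [Icc_self] at this
  exact h.inf {a} (by simpa using this)

section LemT
variable {β : Measure ℝ} {a b : ℝ}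

lemma GM.poly_int (h : GM β a b) (p : ℝ[X]) : Integrable (fun t => p.eval t) β :=
  h.integrable p.continuous.continuousOn

/-- integration functional -/
def If (h : GM β a b) : ℝ[X] →ₗ[ℝ] ℝ where
  toFun p := ∫ t, p.eval t ∂β
  map_add' p q := by
    simp only [eval_add]
    exact integral_add (h.poly_int p) (h.poly_int q)
  map_smul' c p := by
    simp only [eval_smul, smul_eq_mul, RingHom.id_apply]
    exact integral_const_mul _ _

lemma If_C_mul (h : GM β a b) (c : ℝ) (p : ℝ[X]) : If h (C c * p) = c * If h p := by
  rw [← smul_eq_C_mul, map_smul, smul_eq_mul]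

lemma If_mul_C (h : GM β a b) (c : ℝ) (p : ℝ[X]) : If h (p * C c) = c * If h p := by
  rw [mul_comm, If_C_mul]

lemma If_C (h : GM β a b) (c : ℝ) : If h (C c) = c * If h 1 := by
  rw [← If_C_mul, mul_one]

lemma If_one_pos (h : GM β a b) : 0 < If h 1 := by
  have h1 : If h 1 = ∫ t, (1:ℝ[X]).eval t ∂β := rfl
  have h2 : 0 ≤ If h 1 := by rw [h1]; exact integral_nonneg fun t => by simp
  refine lt_of_le_of_ne h2 (Ne.symm ?_)
  rw [h1]
  exact h.integral_ne_zero (Polynomial.continuous _).continuousOn (fun t _ => by simp) ∅ (by simp)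

/-- shift operator -/
def Aop (h : GM β a b) : Module.End ℝ ℝ[X] where
  toFun Q := X * Q - C (If h (X * Q) / If h 1)
  map_add' p q := by
    rw [mul_add, map_add, add_div, C_add]; ring
  map_smul' c p := by
    rw [mul_smul_comm, map_smul, RingHom.id_apply, smul_sub, smul_eq_mul, mul_div_assoc, C_mul,
      smul_eq_C_mul, smul_eq_C_mul]

lemma Aop_apply (h : GM β a b) (Q : ℝ[X]) : Aop h Q = X * Q - C (If h (X * Q) / If h 1) := rfl

def T0 (h : GM β a b) : ℝ[X] := C (1 / If h 1) * (X - C (If h X / If h 1))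

def Top (h : GM β a b) (q : ℝ[X]) : ℝ[X] := (aeval (Aop h) q) (T0 h)

lemma Top_add (h : GM β a b) (p q : ℝ[X]) : Top h (p + q) = Top h p + Top h q := by
  simp [Top]

lemma Top_sub (h : GM β a b) (p q : ℝ[X]) : Top h (p - q) = Top h p - Top h q := by
  simp [Top]

lemma Top_C_mul (h : GM β a b) (c : ℝ) (q : ℝ[X]) : Top h (C c * q) = C c * Top h q := by
  rw [← smul_eq_C_mul, ← smul_eq_C_mul]; simp only [Top, map_smul, LinearMap.smul_apply]

lemma Top_one (h : GM β a b) : Top h 1 = T0 h := by simp [Top]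

lemma Top_C (h : GM β a b) (c : ℝ) : Top h (C c) = C c * T0 h := by
  rw [← Top_one, ← Top_C_mul, mul_one]

lemma Top_X_mul (h : GM β a b) (q : ℝ[X]) : Top h (X * q) = Aop h (Top h q) := by
  simp only [Top, map_mul, aeval_X, Module.End.mul_apply]

lemma If_A (h : GM β a b) (Q : ℝ[X]) : If h (Aop h Q) = 0 := by
  rw [Aop_apply, map_sub, If_C, div_mul_cancel₀ _ (If_one_pos h).ne', sub_self]

lemma If_T0 (h : GM β a b) : If h (T0 h) = 0 := by
  rw [T0, If_C_mul, map_sub, If_C, div_mul_cancel₀ _ (If_one_pos h).ne', sub_self, mul_zero]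

lemma If_T (h : GM β a b) (q : ℝ[X]) : If h (Top h q) = 0 := by
  conv_lhs => rw [← X_mul_divX_add q]
  rw [Top_add, Top_X_mul, Top_C, map_add, If_A, If_C_mul, If_T0]; simp

lemma If_A_mul (h : GM β a b) (P Q : ℝ[X]) (hQ : If h Q = 0) :
    If h (Aop h P * Q) = If h (X * P * Q) := by
  rw [Aop_apply, sub_mul, map_sub, If_C_mul, hQ, mul_zero, sub_zero]

/-- the functional of the inverse measure -/
def Lop (h : GM β a b) : ℝ[X] →ₗ[ℝ] ℝ where
  toFun p := If h (X * Top h p) / If h 1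
  map_add' p q := by rw [Top_add, mul_add, map_add, add_div]
  map_smul' c p := by
    rw [smul_eq_C_mul, Top_C_mul, mul_left_comm, If_C_mul, mul_div_assoc]; rfl

lemma Lop_apply (h : GM β a b) (p : ℝ[X]) : Lop h p = If h (X * Top h p) / If h 1 := rfl

lemma Lop_mul (h : GM β a b) (p : ℝ[X]) : ∀ q, If h (Top h p * Top h q) = Lop h (p * q) := by
  have h1 : ∀ q, If h (T0 h * Top h q) = Lop h q := by
    intro q
    rw [T0, mul_assoc, If_C_mul, sub_mul, map_sub, If_C_mul, If_T, Lop_apply]; ring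
  have key : ∀ p : ℝ[X], (∀ q, If h (Top h p * Top h q) = Lop h (p * q)) →
      (∀ q, If h (Top h (X * p) * Top h q) = Lop h (X * p * q)) := by
    intro p hp q
    rw [Top_X_mul, If_A_mul _ _ _ (If_T h q)]
    have := hp (X * q)
    rw [Top_X_mul, mul_comm, If_A_mul _ _ _ (If_T h p)] at this
    rw [show X * p * q = p * (X * q) by ring, ← this]; congr 1; ring
  have h2 : ∀ n : ℕ, ∀ q, If h (Top h (X ^ n) * Top h q) = Lop h (X ^ n * q) := by
    intro n
    induction n with
    | zero => intro q; rw [pow_zero, Top_one, one_mul, h1]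
    | succ n ih => rw [pow_succ']; exact key _ ih
  induction p using Polynomial.induction_on' with
  | add p q hp hq => intro r; rw [Top_add, add_mul, add_mul, map_add, map_add, hp, hq]
  | monomial n c =>
    intro q
    rw [← C_mul_X_pow_eq_monomial, Top_C_mul, mul_assoc, If_C_mul, h2, mul_assoc,
      ← smul_eq_C_mul, map_smul, smul_eq_mul]

lemma Top_natDegree (h : GM β a b) (n : ℕ) : ∀ q : ℝ[X], q ≠ 0 → q.natDegree = n →
    (Top h q).natDegree = n + 1 := by
  have hT0 : (T0 h).natDegree = 1 := by
    rw [T0, natDegree_C_mul (one_div_ne_zero (If_one_pos h).ne'), natDegree_X_sub_C]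
  induction n with
  | zero =>
    intro q hq hn
    rw [eq_C_of_natDegree_eq_zero hn] at hq ⊢
    rw [Top_C, natDegree_C_mul (by simpa using hq), hT0]
  | succ n ih =>
    intro q hq hn
    have hd : q.divX.natDegree = n := by rw [natDegree_divX_eq_natDegree_tsub_one]; omega
    have hd0 : q.divX ≠ 0 := by
      intro h0
      rw [divX_eq_zero_iff] at h0
      rw [h0, natDegree_C] at hn; omega
    have h3 := ih _ hd0 hd
    have h4 : Top h q.divX ≠ 0 := by intro h0; rw [h0] at h3; simp at h3
    rw [← X_mul_divX_add q, Top_add, Top_X_mul, Top_C, Aop_apply]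
    have h5 : (X * Top h q.divX).natDegree = n + 2 := by rw [natDegree_X_mul h4, h3]
    rw [sub_add, natDegree_sub_eq_left_of_natDegree_lt, h5]
    rw [h5]
    refine lt_of_le_of_lt (natDegree_sub_le _ _) ?_
    rw [natDegree_C]
    have := natDegree_C_mul_le (q.coeff 0) (T0 h)
    omega

lemma If_nonneg (h : GM β a b) (p : ℝ[X]) (hp : ∀ t ∈ Icc a b, 0 ≤ p.eval t) : 0 ≤ If h p :=
  integral_nonneg_of_ae (h.ae_mem.mono fun t ht => hp t ht)

lemma lemT_aux (h : GM β a b) : ∃ τ : Measure ℝ, GM τ a b ∧ ∀ p, Lop h p = ∫ t, p.eval t ∂τ := by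
  obtain ⟨τ, h1, h2, h3⟩ := hausdorff h.lt (Lop h)
    (by
      intro q
      rw [pow_two, ← Lop_mul]
      exact If_nonneg h _ fun t _ => by simpa using mul_self_nonneg _)
    (by
      intro q
      have : q ^ 2 * (X - C a) = q * (X * q) - C a * (q * q) := by ring
      rw [this, map_sub, ← smul_eq_C_mul, map_smul, smul_eq_mul, ← Lop_mul, ← Lop_mul, Top_X_mul,
        mul_comm (Top h q) (Aop h _), If_A_mul _ _ _ (If_T h q), ← If_C_mul, ← map_sub]
      refine If_nonneg h _ fun t ht => ?_
      simp only [eval_sub, eval_mul, eval_X, eval_C]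
      nlinarith [mul_self_nonneg ((Top h q).eval t), ht.1,
        mul_nonneg (sub_nonneg.2 ht.1) (mul_self_nonneg ((Top h q).eval t))])
    (by
      intro q
      have : q ^ 2 * (C b - X) = C b * (q * q) - q * (X * q) := by ring
      rw [this, map_sub, ← smul_eq_C_mul, map_smul, smul_eq_mul, ← Lop_mul, ← Lop_mul, Top_X_mul,
        mul_comm (Top h q) (Aop h _), If_A_mul _ _ _ (If_T h q), ← If_C_mul, ← map_sub]
      refine If_nonneg h _ fun t ht => ?_
      simp only [eval_sub, eval_mul, eval_X, eval_C]
      nlinarith [mul_nonneg (sub_nonneg.2 ht.2) (mul_self_nonneg ((Top h q).eval t))])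
  refine ⟨τ, ⟨h1, h2, fun Z hZ => ?_⟩, h3⟩
  set q : ℝ[X] := ∏ y ∈ Z, (X - C y) with hq
  have hq0 : q ≠ 0 := by
    rw [hq, Finset.prod_ne_zero_iff]; intro y _; exact X_sub_C_ne_zero y
  have hT : Top h q ≠ 0 := by
    intro h0
    have := Top_natDegree h _ q hq0 rfl
    rw [h0] at this; simp at this
  have h4 : Lop h (q * q) = 0 := by
    rw [h3]
    have : ∀ᵐ t ∂τ, t ∈ Z := by rw [ae_iff]; exact hZ
    rw [integral_congr_ae (g := fun _ => (0:ℝ)), integral_zero]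
    filter_upwards [this] with t ht
    rw [eval_mul, hq, eval_prod, Finset.prod_eq_zero ht (by simp), zero_mul]
  rw [← Lop_mul] at h4
  refine h.integral_ne_zero (Polynomial.continuous (Top h q * Top h q)).continuousOn
    (fun t _ => by simpa using mul_self_nonneg _) (Top h q).roots.toFinset (fun t _ ht => ?_) h4
  simp at ht
  simp [hT, ht]

/-- the real identity for `x > b` -/
lemma lemT_real (h : GM β a b) {τ : Measure ℝ} (hτ : GM τ a b)
    (h3 : ∀ p, Lop h p = ∫ t, p.eval t ∂τ) {x : ℝ} (hx : b < x) :
    (∫ t, 1 / (x - t) ∂β) * ((x - If h X / If h 1) / If h 1 - ∫ t, 1 / (x - t) ∂τ) = 1 := by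
  have hab := h.lt
  have hg : ContinuousOn (fun t : ℝ => 1 / (x - t)) (Icc a b) :=
    continuousOn_const.div (continuousOn_const.sub continuousOn_id)
      (fun t ht => (by have := ht.2; change x - t ≠ 0; linarith))
  set g : ℝ → ℝ := fun t => 1 / (x - t) with hgdef
  have hm0 := If_one_pos h
  set m0 := If h 1
  set c := If h X / m0 with hc
  set B := ∫ t, g t ∂β with hB
  set G := ∫ t, g t ^ 2 ∂β with hG
  set M := ∫ _t, (1:ℝ) ∂τ with hM
  set W := ∫ t, g t ∂τ with hW
  have hxt : ∀ t ∈ Icc a b, 0 < x - t := fun t ht => by have := ht.2; linarith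
  have hpint : ∀ p : ℝ[X], Integrable (fun t => p.eval t * g t) β := fun p =>
    h.integrable (p.continuous.continuousOn.mul hg)
  have hT0 : ∫ t, (T0 h).eval t * g t ∂β = ((x - c) * B - m0) / m0 := by
    have : ∀ t ∈ Icc a b, (T0 h).eval t * g t = (x - c) / m0 * g t - 1 / m0 * (1:ℝ[X]).eval t := by
      intro t ht
      have := hxt t ht
      simp only [T0, eval_mul, eval_sub, eval_X, eval_C, hgdef, eval_one]
      change 1 / m0 * (t - c) * (1 / (x - t)) = _
      field_simp
      ring
    rw [h.integral_congr this, integral_sub ((h.integrable hg).const_mul _)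
      ((h.poly_int 1).const_mul _), integral_const_mul, integral_const_mul]
    change (x - c) / m0 * B - 1 / m0 * m0 = _
    field_simp
  have hmain : ∀ δ : ℝ, 0 < δ → |(x - c) / m0 * B - 1 - B * W| ≤
      δ * (|B| * M + ((x - a) ^ 2 * M + G) / 2) := by
    intro δ hδ
    obtain ⟨p, hp⟩ := exists_polynomial_near_of_continuousOn a b g hg δ hδ
    set r : ℝ[X] := 1 - (C x * p - X * p) with hr
    have hTr : Top h r = T0 h - (C x - X) * Top h p - C (Lop h p) := by
      rw [hr, Top_sub, Top_sub, Top_one, Top_C_mul, Top_X_mul, Aop_apply, Lop_apply]; ring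
    have h5 : ∫ t, (Top h r).eval t * g t ∂β = ((x - c) * B - m0) / m0 - Lop h p * B := by
      have : ∀ t ∈ Icc a b, (Top h r).eval t * g t =
          (T0 h).eval t * g t - (Top h p).eval t - Lop h p * g t := by
        intro t ht
        have := hxt t ht
        simp only [hTr, eval_mul, eval_sub, eval_X, eval_C, hgdef]
        field_simp
      have i3 : Integrable (fun t => (T0 h).eval t * g t - (Top h p).eval t) β :=
        (hpint _).sub (h.poly_int _)
      rw [h.integral_congr this, integral_sub i3
        ((h.integrable hg).const_mul _), integral_sub (hpint _) (h.poly_int _), hT0,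
        integral_const_mul]
      have : ∫ t, (Top h p).eval t ∂β = 0 := If_T h p
      rw [this, sub_zero]
    have h6 : ∫ t, (Top h r).eval t ^ 2 ∂β ≤ (x - a) ^ 2 * δ ^ 2 * M := by
      have e1 : ∫ t, (Top h r).eval t ^ 2 ∂β = If h (Top h r * Top h r) := by
        change _ = ∫ t, _ ∂β
        congr 1; ext t; rw [eval_mul, pow_two]
      rw [e1, Lop_mul, h3, hM, ← integral_const_mul]
      refine integral_mono_ae (hτ.poly_int _)
        (hτ.integrable continuousOn_const) (hτ.ae_mem.mono fun t ht => ?_)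
      have h7 := hxt t ht
      have h8 : r.eval t = (x - t) * (g t - p.eval t) := by
        simp only [hr, eval_mul, eval_sub, eval_X, eval_C, hgdef, eval_one]
        field_simp
      have h9 := (hp t ht).le
      simp only [eval_mul, mul_one]
      rw [← pow_two, h8, mul_pow]
      refine mul_le_mul ?_ ?_ (sq_nonneg _) (sq_nonneg _)
      · exact pow_le_pow_left₀ h7.le (by have := ht.1; linarith) 2
      · rw [← sq_abs, abs_sub_comm]; exact pow_le_pow_left₀ (abs_nonneg _) h9 2
    have h7 : |∫ t, (Top h r).eval t * g t ∂β| ≤ δ * (((x - a) ^ 2 * M + G) / 2) := by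
      have i1 : Integrable (fun t => (Top h r).eval t ^ 2) β :=
        h.integrable ((Polynomial.continuous _).continuousOn.pow 2)
      have i2 : Integrable (fun t => g t ^ 2) β := h.integrable (hg.pow 2)
      calc |∫ t, (Top h r).eval t * g t ∂β| ≤ ∫ t, |(Top h r).eval t * g t| ∂β :=
            abs_integral_le_integral_abs
        _ ≤ ∫ t, (1 / (2 * δ) * (Top h r).eval t ^ 2 + δ / 2 * g t ^ 2) ∂β := by
            refine integral_mono (hpint _).abs ((i1.const_mul _).add (i2.const_mul _)) fun t => ?_
            simp only
            have : 1 / (2 * δ) * (Top h r).eval t ^ 2 + δ / 2 * g t ^ 2 =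
              ((Top h r).eval t ^ 2 + (δ * g t) ^ 2) / (2 * δ) := by field_simp
            rw [this, le_div_iff₀ (by positivity)]
            rcases abs_cases ((Top h r).eval t * g t) with ⟨h1, _⟩ | ⟨h1, _⟩ <;> rw [h1] <;>
              nlinarith [sq_nonneg ((Top h r).eval t - δ * g t),
                sq_nonneg ((Top h r).eval t + δ * g t)]
        _ = 1 / (2 * δ) * (∫ t, (Top h r).eval t ^ 2 ∂β) + δ / 2 * G := by
            rw [integral_add (i1.const_mul _) (i2.const_mul _), integral_const_mul,
              integral_const_mul]
        _ ≤ 1 / (2 * δ) * ((x - a) ^ 2 * δ ^ 2 * M) + δ / 2 * G := by gcongr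
        _ = _ := by field_simp
    have h8 : |Lop h p - W| ≤ δ * M := by
      rw [h3, hW, ← integral_sub (hτ.poly_int _) (hτ.integrable hg), hM, ← integral_const_mul]
      refine (abs_integral_le_integral_abs).trans (integral_mono_ae
        ((hτ.poly_int _).sub (hτ.integrable hg)).abs
        (hτ.integrable continuousOn_const) (hτ.ae_mem.mono fun t ht => ?_))
      simp only [mul_one]
      exact (hp t ht).le
    have h9 : (x - c) / m0 * B - 1 - B * W =
        (∫ t, (Top h r).eval t * g t ∂β) + B * (Lop h p - W) := by
      rw [h5]; field_simp; ring
    rw [h9]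
    calc _ ≤ |∫ t, (Top h r).eval t * g t ∂β| + |B * (Lop h p - W)| := abs_add_le _ _
      _ ≤ δ * (((x - a) ^ 2 * M + G) / 2) + |B| * (δ * M) := by
          rw [abs_mul]; gcongr
      _ = _ := by ring
  have h0 : |(x - c) / m0 * B - 1 - B * W| ≤ 0 := by
    set R := |B| * M + ((x - a) ^ 2 * M + G) / 2
    refine le_of_forall_pos_le_add fun ε hε => ?_
    have hR : 0 < |R| + 1 := by positivity
    refine (hmain (ε / (|R| + 1)) (by positivity)).trans ?_
    rw [zero_add, div_mul_eq_mul_div, div_le_iff₀ hR]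
    have := le_abs_self R
    nlinarith
  have := abs_nonpos_iff.1 h0
  linarith [this]

end LemT

lemma isPreconnected_KKc (a b : ℝ) : IsPreconnected (KK a b)ᶜ := by
  by_cases hab : a ≤ b
  swap
  · have : (KK a b)ᶜ = univ := by
      rw [KK, Icc_eq_empty hab]; simp [cpx]
    rw [this]; exact isPreconnected_univ
  have e : (KK a b)ᶜ = (({z : ℂ | 0 < z.im} ∪ {z : ℂ | b < z.re}) ∪ {z : ℂ | z.im < 0}) ∪
      {z : ℂ | z.re < a} := by
    ext z
    simp only [mem_compl_iff, mem_union, mem_ofPred_eq]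
    constructor
    · intro hz
      by_contra hc
      push Not at hc
      obtain ⟨⟨⟨h1, h2⟩, h3⟩, h4⟩ := hc
      exact hz ⟨z.re, ⟨h4, h2⟩, Complex.ext (by simp) (by simp; linarith)⟩
    · rintro h ⟨t, ht, rfl⟩
      simp at h
      rcases h with h | h <;> [exact absurd ht.2 (not_le.2 h); exact absurd ht.1 (not_le.2 h)]
  rw [e]
  have c1 : IsPreconnected {z : ℂ | 0 < z.im} := (convex_halfSpace_im_gt 0).isPreconnected
  have c2 : IsPreconnected {z : ℂ | z.im < 0} := (convex_halfSpace_im_lt 0).isPreconnected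
  have c3 : IsPreconnected {z : ℂ | b < z.re} := (convex_halfSpace_re_gt b).isPreconnected
  have c4 : IsPreconnected {z : ℂ | z.re < a} := (convex_halfSpace_re_lt a).isPreconnected
  refine IsPreconnected.union ⟨a - 1, 1⟩ ?_ (by simp) ?_ c4
  · left; left; simp
  refine IsPreconnected.union ⟨b + 1, -1⟩ ?_ (by simp) ?_ c2
  · right; simp
  exact IsPreconnected.union ⟨b + 1, 1⟩ (by simp) (by simp) c1 c3

lemma lemT {β : Measure ℝ} {a b : ℝ} (h : GM β a b) : ∃ τ : Measure ℝ, GM τ a b ∧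
    ∃ c m : ℝ, ∀ z ∉ KK a b, CT β (fun _ => 1) z * ((z - c) / m - CT τ (fun _ => 1) z) = 1 := by
  obtain ⟨τ, hτ, h3⟩ := lemT_aux h
  refine ⟨τ, hτ, If h X / If h 1, If h 1, ?_⟩
  have hd : DifferentiableOn ℂ (fun z => CT β (fun _ => 1) z *
      ((z - (If h X / If h 1 : ℝ)) / (If h 1 : ℝ) - CT τ (fun _ => 1) z)) (KK a b)ᶜ := by
    refine (CT_diff h continuousOn_const).mul (DifferentiableOn.sub ?_
      (CT_diff hτ continuousOn_const))
    fun_prop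
  have ha := hd.analyticOnNhd (isOpen_KKc a b)
  have hb : ((b + 1 : ℝ) : ℂ) ∈ (KK a b)ᶜ := by
    intro hm
    have := (ofReal_mem_KK.1 hm).2
    linarith
  refine fun z hz => ha.eqOn_of_preconnected_of_frequently_eq
    (g := fun _ => (1:ℂ)) analyticOnNhd_const (isPreconnected_KKc a b) hb ?_ hz
  have ht : Tendsto (fun x : ℝ => (x : ℂ)) (𝓝[≠] (b + 1)) (𝓝[≠] ((b + 1 : ℝ) : ℂ)) := by
    refine tendsto_nhdsWithin_iff.2 ⟨(Complex.continuous_ofReal.tendsto _).mono_left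
      nhdsWithin_le_nhds, ?_⟩
    filter_upwards [self_mem_nhdsWithin] with x hx
    intro h0
    exact hx (by simpa using Complex.ofReal_injective h0)
  refine ht.frequently (Eventually.frequently ?_)
  have : ∀ᶠ x : ℝ in 𝓝[≠] (b + 1), b < x :=
    nhdsWithin_le_nhds (lt_mem_nhds (by linarith))
  filter_upwards [this] with x hx
  have := lemT_real h hτ h3 hx
  have e : ∀ κ : Measure ℝ, CT κ (fun _ => 1) (x : ℂ) = ((∫ t, 1 / (x - t) ∂κ : ℝ) : ℂ) := by
    intro κ
    rw [CT, ← integral_complex_ofReal]; congr 1; ext t; push_cast; rfl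
  rw [e, e]
  exact_mod_cast this

lemma sign_const {a b : ℝ} {f : ℝ → ℝ} (hf : ContinuousOn f (Icc a b)) (h0 : ∀ t ∈ Icc a b, f t ≠ 0) :
    ∃ s : ℝ, s ≠ 0 ∧ s * s = 1 ∧ ∀ t ∈ Icc a b, f t = s * |f t| := by
  have hc := isPreconnected_Icc (a := a) (b := b)
  by_cases hp : ∀ t ∈ Icc a b, 0 ≤ f t
  · exact ⟨1, one_ne_zero, by norm_num, fun t ht => by rw [abs_of_nonneg (hp t ht), one_mul]⟩
  · push Not at hp
    obtain ⟨u, hu, hfu⟩ := hp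
    refine ⟨-1, by norm_num, by norm_num, fun t ht => ?_⟩
    have : f t ≤ 0 := by
      by_contra hft
      push Not at hft
      obtain ⟨w, hw, hw0⟩ := hc.intermediate_value hu ht hf ⟨hfu.le, hft.le⟩
      exact h0 w hw hw0
    rw [abs_of_nonpos this]; ring

lemma lemT' {κ : Measure ℝ} {a b : ℝ} (h : GM κ a b) {ψ : ℝ → ℂ} (hψ : ContinuousOn ψ (Icc a b))
    (hr : ∀ t ∈ Icc a b, (ψ t).im = 0) (h0 : ∀ t ∈ Icc a b, ψ t ≠ 0) :
    ∃ τ : Measure ℝ, GM τ a b ∧ ∃ p : ℝ[X], p.natDegree ≤ 1 ∧ ∃ s : ℝ, s ≠ 0 ∧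
      ∀ z ∉ KK a b, CT κ ψ z * (aeval z p + CT τ (fun _ => (s : ℂ)) z) = 1 := by
  have hab := h.lt.le
  have hre : ContinuousOn (fun t => (ψ t).re) (Icc a b) := Complex.continuous_re.comp_continuousOn hψ
  obtain ⟨s, hs, hss, hsp⟩ := sign_const hre (fun t ht h1 => h0 t ht (Complex.ext h1 (hr t ht)))
  let ρ : ℝ → NNReal := fun t => Real.nnabs ((ψ (projIcc a b hab t)).re)
  have hρc : Continuous ρ := by
    have : Continuous fun t : ℝ => (ψ (projIcc a b hab t)).re :=
      (continuousOn_iff_continuous_domRestrict.1 hre).comp continuous_projIcc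
    exact continuous_induced_rng.2 this.abs
  have hρ0 : ∀ t, ρ t ≠ 0 := by
    intro t h1
    have h2 := (projIcc a b hab t).2
    have : (ψ (projIcc a b hab t)).re = 0 := by simpa [ρ] using h1
    exact h0 _ h2 (Complex.ext this (hr _ h2))
  have hρe : ∀ t ∈ Icc a b, ψ t = s * (ρ t : ℝ) := by
    intro t ht
    have h1 : (ρ t : ℝ) = |(ψ t).re| := by
      simp only [ρ]; rw [projIcc_of_mem hab ht]; simp
    rw [h1, ← Complex.ofReal_mul, ← hsp t ht]
    exact Complex.ext (by simp) (by simp [hr t ht])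
  let β := κ.withDensity (fun t => (ρ t : ENNReal))
  have hIntg : Integrable (fun t => (ρ t : ℝ)) κ :=
    h.integrable ((NNReal.continuous_coe.comp hρc).continuousOn)
  have hβ : GM β a b := by
    refine ⟨?_, ?_, fun Z hZ => ?_⟩
    · refine isFiniteMeasure_withDensity ?_
      have := hIntg.2
      rw [hasFiniteIntegral_iff_enorm] at this
      refine ne_of_lt (lt_of_le_of_lt (lintegral_mono fun t => ?_) this)
      simp
    · exact withDensity_absolutelyContinuous _ _ h.null
    · rw [withDensity_apply_eq_zero (hρc.measurable.coe_nnreal_ennreal)] at hZ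
      apply h.inf Z
      convert hZ using 2
      ext t; simp [hρ0]
  obtain ⟨τ, hτ, c, m, hT⟩ := lemT hβ
  refine ⟨τ, hτ, C (s / m) * (X - C c), ?_, -s, neg_ne_zero.2 hs, fun z hz => ?_⟩
  · refine (natDegree_C_mul_le _ _).trans ?_
    rw [natDegree_X_sub_C]
  have e1 : CT κ ψ z = s * CT β (fun _ => 1) z := by
    rw [CT, CT, integral_withDensity_eq_integral_smul hρc.measurable, ← integral_const_mul]
    refine h.integral_congr fun t ht => ?_
    rw [hρe t ht, NNReal.smul_def, Complex.real_smul]; ring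
  have e2 : CT τ (fun _ => ((-s : ℝ) : ℂ)) z = -s * CT τ (fun _ => 1) z := by
    have := CT_const_mul (κ := τ) (-s : ℂ) (fun _ => 1) z
    rw [← this]; simp
  rw [e1, e2]
  have hss' : (s : ℂ) * s = 1 := by exact_mod_cast hss
  have e3 : aeval z (C (s / m) * (X - C c)) = (s : ℂ) * ((z - c) / m) := by
    simp only [map_mul, map_sub, aeval_X, aeval_C, Complex.coe_algebraMap]
    push_cast; ring
  rw [e3]
  linear_combination hT z hz + (CT β (fun _ => 1) z * ((z - c) / m - CT τ (fun _ => 1) z)) * hss'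

end Nik

namespace Nik
open scoped Topology

lemma GM.integrable_prod {κ η : Measure ℝ} {a b c d : ℝ} (h : GM κ a b) (h' : GM η c d)
    {F : ℝ × ℝ → ℂ} (hF : ContinuousOn F (Icc a b ×ˢ Icc c d)) : Integrable F (κ.prod η) := by
  have := h.fin
  have := h'.fin
  have := hF.integrableOn_compact (μ := κ.prod η) (isCompact_Icc.prod isCompact_Icc)
  rwa [IntegrableOn, ← Measure.prod_restrict, h.restrict_eq, h'.restrict_eq] at this

lemma Fub {κ η : Measure ℝ} {a b c d : ℝ} (h : GM κ a b) (h' : GM η c d)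
    (hdj : Disjoint (Icc a b) (Icc c d)) {f g : ℝ → ℂ} (hf : ContinuousOn f (Icc a b))
    (hg : ContinuousOn g (Icc c d)) {z : ℂ} (hz : z ∉ KK a b) (hz' : z ∉ KK c d) :
    CT η (fun t => CT κ f t * g t) z =
      CT κ f z * CT η g z - CT κ (fun s => f s * CT η g s) z := by
  have := h.fin
  have := h'.fin
  have hts : ∀ t ∈ Icc c d, ∀ s ∈ Icc a b, (t : ℂ) - s ≠ 0 := by
    intro t ht s hs h0
    have : t = s := by exact_mod_cast sub_eq_zero.1 h0
    exact Set.disjoint_left.1 hdj hs (this ▸ ht)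
  have hfz : ContinuousOn (fun s : ℝ => f s / (z - s)) (Icc a b) := continuousOn_kernel hf hz
  have hgz : ContinuousOn (fun s : ℝ => g s / (z - s)) (Icc c d) := continuousOn_kernel hg hz'
  let F : ℝ × ℝ → ℂ := fun p => f p.2 / (z - p.2) * (g p.1 / (p.1 - p.2))
  have hF : ContinuousOn F (Icc c d ×ˢ Icc a b) := by
    refine ContinuousOn.mul ?_ (ContinuousOn.div ?_ ?_ ?_)
    · exact hfz.comp continuousOn_snd fun p hp => hp.2
    · exact hg.comp continuousOn_fst fun p hp => hp.1
    · fun_prop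
    · exact fun p hp => hts _ hp.1 _ hp.2
  have hI : Integrable F (η.prod κ) := h'.integrable_prod h hF
  have e1 : CT η (fun t => CT κ f t * g t) z =
      ∫ t, (CT κ f z * (g t / (z - t)) + ∫ s, F (t, s) ∂κ) ∂η := by
    refine h'.integral_congr fun t ht => ?_
    have hzt := sub_ne_of_notMem hz' ht
    have htK : (t : ℂ) ∉ KK a b := notMem_KK_of_disjoint hdj.symm ht
    have e2 : CT κ f t * g t / (z - t) = ∫ s, f s / (t - s) * (g t / (z - t)) ∂κ := by
      rw [integral_mul_const, CT]; ring
    have e3 : CT κ f z * (g t / (z - t)) = ∫ s, f s / (z - s) * (g t / (z - t)) ∂κ := by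
      rw [integral_mul_const, CT]
    rw [e2, e3, ← integral_add]
    · refine h.integral_congr fun s hs => ?_
      have h1 := sub_ne_of_notMem hz hs
      have h2 := hts t ht s hs
      simp only [F]
      field_simp
      ring
    · exact (h.integrable hfz).mul_const _
    · refine h.integrable (hF.comp (by fun_prop) fun s hs => ⟨ht, hs⟩)
  rw [e1, integral_add, integral_const_mul, integral_integral_swap (f := fun t s => F (t, s)) hI]
  · rw [sub_eq_add_neg]
    congr 1
    rw [CT, ← integral_neg]
    refine h.integral_congr fun s hs => ?_
    simp only [F]
    rw [integral_const_mul, CT]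
    have : ∫ t, g t / ((t : ℂ) - s) ∂η = - ∫ t, g t / ((s : ℂ) - t) ∂η := by
      rw [← integral_neg]
      congr 1; ext t
      rw [← neg_sub, div_neg]
    rw [this]; ring
  · exact (h'.integrable hgz).const_mul _
  · exact hI.integral_prod_left

/-- a Nikishin system with infinitely many generators -/
structure Sys where
  ν : ℕ → Measure ℝ
  e : ℕ → ℝ
  a : ℕ → ℝ
  b : ℕ → ℝ
  gm : ∀ l, GM (ν l) (a l) (b l)
  sg : ∀ l, e l ≠ 0
  dj : ∀ l, Disjoint (Icc (a l) (b l)) (Icc (a (l + 1)) (b (l + 1)))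

namespace Sys
variable (S : Sys)

def K (r : ℕ) : Set ℂ := KK (S.a r) (S.b r)

def I (r : ℕ) : Set ℝ := Icc (S.a r) (S.b r)

def u (i k : ℕ) (z : ℂ) : ℂ :=
  if i ≤ k then NU (k - i) (fun l => S.ν (i + l)) (fun l => S.e (i + l)) z else 0

def v (j i : ℕ) (z : ℂ) : ℂ := NU (j - i) (fun l => S.ν (j - 1 - l)) (fun l => S.e (j - 1 - l)) z

def ra (j l : ℕ) : ℝ := if l < j then S.a (j - 1 - l) else 1
def rb (j l : ℕ) : ℝ := if l < j then S.b (j - 1 - l) else 0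

lemma ns (i M : ℕ) : NS M (fun l => S.ν (i + l)) (fun l => S.e (i + l)) (fun l => S.a (i + l))
    (fun l => S.b (i + l)) :=
  ⟨fun _ _ => S.gm _, fun _ _ => S.sg _, fun _ _ => S.dj _⟩

lemma nsr (j : ℕ) : NS j (fun l => S.ν (j - 1 - l)) (fun l => S.e (j - 1 - l)) (S.ra j)
    (S.rb j) := by
  refine ⟨fun l hl => ?_, fun l _ => S.sg _, fun l hl => ?_⟩
  · simp only [ra, rb, hl, if_true]; exact S.gm _
  · simp only [ra, rb, hl, if_true]
    by_cases h : l + 1 < j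
    · simp only [h, if_true]
      have := (S.dj (j - 1 - (l + 1))).symm
      rwa [show j - 1 - (l + 1) + 1 = j - 1 - l by omega] at this
    · simp [h]

lemma notMem_rK (j : ℕ) {t : ℝ} (ht : t ∈ S.I j) : (t : ℂ) ∉ KK (S.ra j 0) (S.rb j 0) := by
  rw [ofReal_mem_KK]
  rcases j with _ | j
  · simp only [ra, rb, lt_irrefl, if_false]; intro h; have := h.1.trans h.2; norm_num at this
  · simp only [ra, rb, Nat.zero_lt_succ, if_true, Nat.add_sub_cancel, Nat.sub_zero]
    exact fun h => Set.disjoint_left.1 (S.dj j) h ht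

lemma notMem_K_succ {r : ℕ} {t : ℝ} (ht : t ∈ S.I r) : (t : ℂ) ∉ S.K (r + 1) :=
  notMem_KK_of_disjoint (S.dj r) ht

lemma notMem_K_pred {r : ℕ} {t : ℝ} (ht : t ∈ S.I (r + 1)) : (t : ℂ) ∉ S.K r :=
  notMem_KK_of_disjoint (S.dj r).symm ht

lemma u_self (i : ℕ) (z : ℂ) : S.u i i z = 1 := by simp [u, NU_zero]
lemma u_lt {i k : ℕ} (h : k < i) (z : ℂ) : S.u i k z = 0 := by simp [u, not_le.2 h]
lemma u_rec {i k : ℕ} (h : i < k) (z : ℂ) :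
    S.u i k z = S.e i * CT (S.ν i) (fun t => S.u (i + 1) k t) z := by
  obtain ⟨g, rfl⟩ : ∃ g, k = i + 1 + g := ⟨k - (i + 1), by omega⟩
  have h1 : i ≤ i + 1 + g := by omega
  have h2 : i + 1 ≤ i + 1 + g := by omega
  simp only [u, h1, h2, if_true]
  rw [show i + 1 + g - i = g + 1 by omega, show i + 1 + g - (i + 1) = g by omega, NU_succ]
  have e1 : (fun l => S.ν (i + (l + 1))) = fun l => S.ν (i + 1 + l) := by
    funext l; congr 1; omega
  have e2 : (fun l => S.e (i + (l + 1))) = fun l => S.e (i + 1 + l) := by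
    funext l; congr 1; omega
  rw [e1, e2]; rfl

lemma v_self (i : ℕ) (z : ℂ) : S.v i i z = 1 := by simp [v, NU_zero]
lemma v_rec {j i : ℕ} (h : i ≤ j) (z : ℂ) :
    S.v (j + 1) i z = S.e j * CT (S.ν j) (fun t => S.v j i t) z := by
  simp only [v]
  rw [show j + 1 - i = j - i + 1 by omega, NU_succ]
  have e1 : (fun l => S.ν (j + 1 - 1 - (l + 1))) = fun l => S.ν (j - 1 - l) := by
    funext l; congr 1; omega
  have e2 : (fun l => S.e (j + 1 - 1 - (l + 1))) = fun l => S.e (j - 1 - l) := by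
    funext l; congr 1; omega
  rw [e1, e2]; simp

lemma u_CS (i k : ℕ) : CS (S.u i k) := by
  intro z
  unfold u
  split_ifs
  · exact NU_CS _ _ _ z
  · simp

lemma v_CS (i k : ℕ) : CS (S.v i k) := NU_CS _ _ _

lemma u_diff (i k : ℕ) : DifferentiableOn ℂ (S.u i k) (S.K i)ᶜ := by
  by_cases h : i ≤ k
  · have := NU_diff (k - i) _ _ _ _ _ (S.ns i (k - i)) le_rfl
    refine this.congr fun z _ => by simp [u, h]
  · exact (differentiableOn_const (0:ℂ)).congr fun z _ => S.u_lt (not_le.1 h) z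

lemma u_cont (r k : ℕ) : ContinuousOn (fun t : ℝ => S.u (r + 1) k t) (Icc (S.a r) (S.b r)) :=
  (S.u_diff (r + 1) k).continuousOn.comp Complex.continuous_ofReal.continuousOn
    fun t ht => S.notMem_K_succ ht

lemma v_cont (r i : ℕ) : ContinuousOn (fun t : ℝ => S.v r i t) (Icc (S.a r) (S.b r)) :=
  (NU_diff (r - i) _ _ _ _ _ (S.nsr r) (by omega)).continuousOn.comp
    Complex.continuous_ofReal.continuousOn fun t ht => S.notMem_rK r ht

lemma vu_cont (r i k : ℕ) : ContinuousOn (fun t : ℝ => S.v r i t * S.u (r + 1) k t)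
    (Icc (S.a r) (S.b r)) := (S.v_cont r i).mul (S.u_cont r k)

def Y (r i k : ℕ) (z : ℂ) : ℂ :=
  if k ≤ r then (if i = k then 1 else 0) else
    (-1) ^ (r - i) * S.e r * CT (S.ν r) (fun t => S.v r i t * S.u (r + 1) k t) z

lemma Y_last (r k : ℕ) (z : ℂ) : S.Y (r + 1) (r + 1) k z = S.u (r + 1) k z := by
  unfold Y
  rcases lt_trichotomy k (r + 1) with h | rfl | h
  · rw [if_pos h.le, if_neg h.ne', S.u_lt h]
  · simp [u_self]
  · rw [if_neg (not_le.2 h), S.u_rec h]; simp [v_self]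

lemma Y_succ {r l : ℕ} (hl : l ≤ r) (z : ℂ) : S.Y r l (r + 1) z = (-1) ^ (r - l) * S.v (r + 1) l z := by
  unfold Y
  rw [if_neg (by omega), S.v_rec hl]
  simp only [u_self, mul_one]; ring

lemma Y_rec {r l : ℕ} (hl : l ≤ r) (k : ℕ) {z : ℂ} (hz : z ∉ S.K r) (hz' : z ∉ S.K (r + 1)) :
    S.Y (r + 1) l k z = S.Y r l k z - S.Y r l (r + 1) z * S.u (r + 1) k z := by
  rcases lt_trichotomy k (r + 1) with h | rfl | h
  · unfold Y
    rw [if_pos h.le, if_pos (show k ≤ r by omega), S.u_lt h]; simp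
  · rw [u_self, mul_one, sub_self, Y, if_pos le_rfl, if_neg (by omega)]
  · rw [S.Y_succ hl]
    unfold Y
    rw [if_neg (by omega), if_neg (by omega)]
    have e1 : (fun t : ℝ => S.v (r + 1) l t * S.u (r + 1 + 1) k t) = fun t : ℝ =>
        (S.e r : ℂ) * (CT (S.ν r) (fun t => S.v r l t) t * S.u (r + 1 + 1) k t) := by
      funext t; rw [S.v_rec hl]; ring
    have e2 : (fun t : ℝ => S.v r l t * S.u (r + 1) k t) = fun t : ℝ =>
        (S.e (r + 1) : ℂ) * (S.v r l t * CT (S.ν (r + 1)) (fun t => S.u (r + 1 + 1) k t) t) := by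
      funext t; rw [S.u_rec h]; ring
    rw [e1, e2, CT_const_mul, CT_const_mul, Fub (S.gm r) (S.gm (r + 1)) (S.dj r) (S.v_cont r l)
      (S.u_cont (r + 1) k) hz hz', S.u_rec h, S.v_rec hl, show r + 1 - l = r - l + 1 by omega]
    ring

lemma Y_CS (r i k : ℕ) : CS (S.Y r i k) := by
  intro z
  unfold Y
  split_ifs
  · simp
  · simp
  · rw [CT_CS fun t => by
      rw [Complex.mul_im, (S.v_CS r i).im, (S.u_CS (r + 1) k).im]; ring]
    simp

lemma Y_diff (r i k : ℕ) : DifferentiableOn ℂ (S.Y r i k) (S.K r)ᶜ := by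
  unfold Y
  split_ifs
  · exact differentiableOn_const _
  · exact differentiableOn_const _
  · exact (CT_diff (S.gm r) (S.vu_cont r i k)).const_mul _

/-- the determinants -/
def D (r : ℕ) (P : Fin (r + 1) → ℕ) (z : ℂ) : ℂ :=
  Matrix.det (Matrix.of fun i j : Fin (r + 1) => S.Y r i (P j) z)

lemma D_diff (r : ℕ) (P : Fin (r + 1) → ℕ) : DifferentiableOn ℂ (S.D r P) (S.K r)ᶜ := by
  unfold D
  simp only [Matrix.det_apply]
  refine DifferentiableOn.fun_sum fun σ _ => DifferentiableOn.const_smul ?_ _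
  exact DifferentiableOn.fun_finsetProd fun i _ => S.Y_diff _ _ _

lemma D_CS (r : ℕ) (P : Fin (r + 1) → ℕ) : CS (S.D r P) := by
  intro z
  unfold D
  rw [RingHom.map_det]
  congr 1
  ext i j
  simp only [Matrix.of_apply, RingHom.mapMatrix_apply, Matrix.map_apply]
  exact S.Y_CS _ _ _ z

lemma D_swap (r : ℕ) (P : Fin (r + 1) → ℕ) (i j : Fin (r + 1)) (h : i ≠ j) (z : ℂ) :
    S.D r (P ∘ Equiv.swap i j) z = - S.D r P z := by
  have := Matrix.det_permute' (Equiv.swap i j) (Matrix.of fun i j : Fin (r + 1) => S.Y r i (P j) z)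
  rw [Equiv.Perm.sign_swap h] at this
  simp only [Units.val_neg, Units.val_one, Int.cast_neg, Int.cast_one, neg_mul, one_mul] at this
  exact this

lemma D_perm (r : ℕ) (P : Fin (r + 1) → ℕ) (σ : Equiv.Perm (Fin (r + 1))) :
    ∃ s : ℤ, (s = 1 ∨ s = -1) ∧ ∀ z : ℂ, S.D r (P ∘ σ) z = s * S.D r P z := by
  refine ⟨(Equiv.Perm.sign σ : ℤˣ), Int.isUnit_iff.1 (Units.isUnit _), fun z => ?_⟩
  exact Matrix.det_permute' σ (Matrix.of fun i j : Fin (r + 1) => S.Y r i (P j) z)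

end Sys

end Nik

namespace Nik
open scoped Topology
namespace Sys
variable (S : Sys)

def W (r : ℕ) (i k : ℕ) (z : ℂ) : ℂ := if i ≤ r then S.Y r i k z else S.u (r + 1) k z

lemma D_eq_W (r : ℕ) (Q : Fin (r + 2) → ℕ) {z : ℂ} (hz : z ∉ S.K r) (hz' : z ∉ S.K (r + 1)) :
    S.D (r + 1) Q z = Matrix.det (Matrix.of fun i j : Fin (r + 2) => S.W r i (Q j) z) := by
  unfold D
  refine Matrix.det_eq_of_forall_row_eq_smul_add_const
    (fun i => if (i : ℕ) ≤ r then - S.Y r i (r + 1) z else 0) (Fin.last _) (by simp) fun i j => ?_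
  simp only [Matrix.of_apply, W, Fin.val_last]
  rw [if_neg (show ¬ (r + 1 ≤ r) by omega)]
  by_cases h : (i : ℕ) ≤ r
  · simp only [h, if_true]; rw [S.Y_rec h _ hz hz']; ring
  · have : (i : ℕ) = r + 1 := by omega
    rw [this]; simp [Y_last]

lemma D_eq_zero (r : ℕ) (P : Fin (r + 1) → ℕ) (i j : Fin (r + 1)) (hij : i ≠ j) (h : P i = P j)
    (z : ℂ) : S.D r P z = 0 :=
  Matrix.det_zero_of_column_eq hij fun k => by simp [h]

lemma plucker (r : ℕ) (P : Fin r → ℕ) (x y w : ℕ) {z : ℂ} (hz : z ∉ S.K r)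
    (hz' : z ∉ S.K (r + 1)) :
    S.D r (Fin.cons x P : Fin (r + 1) → ℕ) z *
      S.D (r + 1) (Fin.cons y (Fin.cons w P : Fin (r + 1) → ℕ) : Fin (r + 2) → ℕ) z =
    S.D r (Fin.cons y P : Fin (r + 1) → ℕ) z *
      S.D (r + 1) (Fin.cons x (Fin.cons w P : Fin (r + 1) → ℕ) : Fin (r + 2) → ℕ) z +
    S.D r (Fin.cons w P : Fin (r + 1) → ℕ) z *
      S.D (r + 1) (Fin.cons y (Fin.cons x P : Fin (r + 1) → ℕ) : Fin (r + 2) → ℕ) z := by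
  let Q : Fin (r + 3) → ℕ := Fin.cons x (Fin.cons y (Fin.cons w P : Fin (r + 1) → ℕ) :
    Fin (r + 2) → ℕ)
  let φ : ℕ → ℂ := fun c => S.D r (Fin.cons c P : Fin (r + 1) → ℕ) z
  let N : Matrix (Fin (r + 3)) (Fin (r + 3)) ℂ :=
    Matrix.of (Fin.cons (fun j => φ (Q j)) (fun i j => S.W r (i : ℕ) (Q j) z))
  let cof : Fin (r + 1) → ℂ := fun i => (-1) ^ (i : ℕ) * Matrix.det
    (Matrix.of fun (k l : Fin r) => S.Y r (i.succAbove k) (P l) z)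
  have hφ : ∀ c, φ c = ∑ i : Fin (r + 1), cof i * S.Y r i c z := by
    intro c
    simp only [φ, D]
    rw [Matrix.det_succ_column_zero]
    refine Finset.sum_congr rfl fun i _ => ?_
    simp only [Matrix.of_apply, Fin.cons_zero, cof]
    rw [mul_right_comm]
    rfl
  have hdet : N.det = 0 := by
    rw [← Matrix.exists_vecMul_eq_zero_iff]
    refine ⟨Fin.cons 1 (Fin.snoc (fun i => - cof i) 0 : Fin (r + 2) → ℂ), ?_, ?_⟩
    · intro h0
      have := congrFun h0 0
      simp at this
    · funext j
      simp only [Matrix.vecMul, dotProduct, N, Matrix.of_apply, Pi.zero_apply]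
      rw [Fin.sum_univ_succ]
      simp only [Fin.cons_zero, Fin.cons_succ, one_mul]
      rw [Fin.sum_univ_castSucc]
      simp only [Fin.snoc_castSucc, Fin.snoc_last, zero_mul, add_zero]
      rw [hφ, ← Finset.sum_add_distrib]
      refine Finset.sum_eq_zero fun i _ => ?_
      simp only [W, Fin.val_castSucc]
      rw [if_pos (by omega)]; ring
  rw [Matrix.det_succ_row_zero, Fin.sum_univ_succ, Fin.sum_univ_succ, Fin.sum_univ_succ,
    Finset.sum_eq_zero (s := Finset.univ (α := Fin r))] at hdet
  · have hs : ∀ j, (N.submatrix Fin.succ (Fin.succAbove j)).det =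
        S.D (r + 1) (Q ∘ Fin.succAbove j) z := by
      intro j
      rw [S.D_eq_W _ _ hz hz']
      rfl
    rw [hs, hs, hs] at hdet
    have q0 : Q ∘ Fin.succAbove 0 = Fin.cons y (Fin.cons w P : Fin (r + 1) → ℕ) := by
      funext i; simp [Q]
    have q1 : Q ∘ Fin.succAbove (Fin.succ 0) = Fin.cons x (Fin.cons w P : Fin (r + 1) → ℕ) := by
      funext i
      refine Fin.cases ?_ (fun i => ?_) i <;> simp [Q]
    have q2 : Q ∘ Fin.succAbove (Fin.succ (Fin.succ 0)) =
        Fin.cons x (Fin.cons y P : Fin (r + 1) → ℕ) := by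
      funext i
      refine Fin.cases ?_ (fun i => Fin.cases ?_ (fun i => ?_) i) i
      · rw [Function.comp, Fin.succ_succAbove_zero]; rfl
      · rw [Function.comp, Fin.succ_succAbove_succ, Fin.succ_succAbove_zero]; rfl
      · rw [Function.comp, Fin.succ_succAbove_succ, Fin.succ_succAbove_succ, Fin.zero_succAbove]; rfl
    have q3 : S.D (r + 1) (Fin.cons x (Fin.cons y P : Fin (r + 1) → ℕ) : Fin (r + 2) → ℕ) z =
        - S.D (r + 1) (Fin.cons y (Fin.cons x P : Fin (r + 1) → ℕ) : Fin (r + 2) → ℕ) z := by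
      rw [← S.D_swap (r + 1) _ 0 1 (by simp)]
      congr 1
      funext i
      refine Fin.cases ?_ (fun i => Fin.cases ?_ (fun i => ?_) i) i
      · simp
      · simp
      · simp only [Function.comp]
        rw [Equiv.swap_apply_of_ne_of_ne]
        · simp
        · exact Fin.succ_ne_zero _
        · rw [← Fin.succ_zero_eq_one, Ne, Fin.succ_inj]; exact Fin.succ_ne_zero _
    rw [q0, q1, q2, q3] at hdet
    have n0 : N 0 0 = φ x := rfl
    have n1 : N 0 (Fin.succ 0) = φ y := rfl
    have n2 : N 0 (Fin.succ (Fin.succ 0)) = φ w := rfl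
    rw [n0, n1, n2] at hdet
    simp only [Fin.val_succ, Fin.val_zero, φ] at hdet
    linear_combination hdet
  · intro j _
    have : N 0 (Fin.succ (Fin.succ (Fin.succ j))) = 0 := by
      simp only [N, Matrix.of_apply, Fin.cons_zero, Q, Fin.cons_succ, φ]
      exact S.D_eq_zero r _ 0 j.succ (Fin.succ_ne_zero _).symm (by simp) z
    rw [this]; ring

end Sys

end Nik

namespace Nik
open scoped Topology
namespace Sys
variable (S : Sys)

def vr (r i : ℕ) (t : ℝ) : ℝ := (S.v r i t).re
def ur (i k : ℕ) (t : ℝ) : ℝ := (S.u i k t).re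

lemma v_ofReal (r i : ℕ) (t : ℝ) : S.v r i t = (S.vr r i t : ℂ) :=
  Complex.ext (by simp [vr]) (by simpa using (S.v_CS r i).im t)
lemma u_ofReal (r i : ℕ) (t : ℝ) : S.u r i t = (S.ur r i t : ℂ) :=
  Complex.ext (by simp [ur]) (by simpa using (S.u_CS r i).im t)

lemma vr_cont (r i : ℕ) : ContinuousOn (S.vr r i) (Icc (S.a r) (S.b r)) :=
  Complex.continuous_re.comp_continuousOn (S.v_cont r i)
lemma ur_cont (r i : ℕ) : ContinuousOn (S.ur (r + 1) i) (Icc (S.a r) (S.b r)) :=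
  Complex.continuous_re.comp_continuousOn (S.u_cont r i)

def mm (r : ℕ) (ω : ℝ → ℝ) (i k : ℕ) : ℝ :=
  if k ≤ r then (if i = k then 1 else 0) else
    (-1) ^ (r - i) * S.e r * ∫ t, S.vr r i t * S.ur (r + 1) k t * ω t ∂(S.ν r)

lemma NV0 (r : ℕ) (J : Finset ℕ) (hJ : J.card = r + 1) (ω : ℝ → ℝ)
    (hω : ContinuousOn ω (Icc (S.a r) (S.b r))) (hω0 : ∀ t ∈ Icc (S.a r) (S.b r), ω t ≠ 0)
    (c : ℕ → ℝ) (hc : ∀ i ≤ r, ∑ k ∈ J, S.mm r ω i k * c k = 0) : ∀ k ∈ J, c k = 0 := by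
  by_contra hcon
  push Not at hcon
  obtain ⟨k0, hk0, hck0⟩ := hcon
  set B := J.filter (r < ·) with hB
  set F := Finset.range (r + 1) \ J with hF
  have hcard : F.card = B.card := by
    have h1 := Finset.card_filter_add_card_filter_not (s := J) (fun k => r < k)
    have h2 := Finset.card_sdiff_add_card_inter (Finset.range (r + 1)) J
    have h3 : Finset.range (r + 1) ∩ J = J.filter (fun k => ¬ r < k) := by
      ext k; simp [and_comm]
    rw [h3, Finset.card_range, ← hF] at h2
    rw [← hB, hJ] at h1
    omega
  set G : ℝ → ℝ := fun t => ∑ k ∈ B, c k * S.ur (r + 1) k t with hG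
  have hGc : ContinuousOn G (Icc (S.a r) (S.b r)) :=
    continuousOn_finsetSum _ fun k _ => continuousOn_const.mul (S.ur_cont r k)
  have hrow : ∀ i ≤ r, (if i ∈ J then c i else 0) +
      (-1) ^ (r - i) * S.e r * ∫ t, S.vr r i t * (G t * ω t) ∂(S.ν r) = 0 := by
    intro i hi
    refine Eq.trans ?_ (hc i hi)
    rw [← Finset.sum_filter_add_sum_filter_not J (fun k => r < k), add_comm]
    congr 1
    · have e1 : (fun t => S.vr r i t * (G t * ω t)) = fun t => ∑ k ∈ B,
          (c k * (S.vr r i t * S.ur (r + 1) k t * ω t)) := by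
        funext t
        rw [hG, Finset.sum_mul, Finset.mul_sum]
        exact Finset.sum_congr rfl fun k _ => by ring
      rw [e1, integral_finsetSum, Finset.mul_sum]
      · refine Finset.sum_congr rfl fun k hk => ?_
        have : r < k := (Finset.mem_filter.1 hk).2
        rw [integral_const_mul, mm, if_neg (not_le.2 this)]; ring
      · intro k _
        exact ((S.gm r).integrable (((S.vr_cont r i).mul (S.ur_cont r k)).mul hω)).const_mul _
    · have : ∀ k ∈ J.filter (fun k => ¬ r < k), S.mm r ω i k * c k = if i = k then c k else 0 := by
        intro k hk
        have : k ≤ r := not_lt.1 (Finset.mem_filter.1 hk).2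
        rw [mm, if_pos this]; split_ifs <;> simp
      rw [Finset.sum_congr rfl this, Finset.sum_ite_eq]
      simp [hi]
  have hFo : ∀ i ∈ F, ∫ t, S.vr r i t * (G t * ω t) ∂(S.ν r) = 0 := by
    intro i hi
    obtain ⟨h1, h2⟩ := Finset.mem_sdiff.1 hi
    have := hrow i (by simpa [Nat.lt_succ_iff] using h1)
    rw [if_neg h2, zero_add] at this
    have hs : (-1 : ℝ) ^ (r - i) * S.e r ≠ 0 := mul_ne_zero (by simp) (S.sg r)
    exact (mul_eq_zero.1 this).resolve_left hs
  have hBne : ∃ k ∈ B, c k ≠ 0 := by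
    by_contra hno
    push Not at hno
    have hG0 : ∀ t, G t = 0 := fun t => Finset.sum_eq_zero fun k hk => by rw [hno k hk, zero_mul]
    by_cases hk : r < k0
    · exact hck0 (hno k0 (Finset.mem_filter.2 ⟨hk0, hk⟩))
    · have := hrow k0 (not_lt.1 hk)
      rw [if_pos hk0] at this
      simp [hG0] at this
      exact hck0 this
  -- zeros of G
  have hzer : ∀ T : Finset ℝ, (∀ t ∈ T, t ∈ Icc (S.a r) (S.b r)) → (∀ t ∈ T, G t = 0) →
      T.card < B.card := by
    intro T hT hT0
    have hinj : Set.InjOn (fun k => k - (r + 1)) (B : Set ℕ) := by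
      intro x hx y hy hxy
      have h1 : r < x := (Finset.mem_filter.1 hx).2
      have h2 : r < y := (Finset.mem_filter.1 hy).2
      simp only at hxy
      omega
    rw [← Finset.card_image_of_injOn hinj]
    set Q := B.image (fun k => k - (r + 1)) with hQ
    have := lemC_zeros (S.ns (r + 1) (Q.sup id)) Q
      (fun k hk => Finset.mem_range.2 (Nat.lt_succ_of_le (Finset.le_sup (f := id) hk)))
      (fun k => c (k + (r + 1))) ?_ T ?_ ?_
    · exact this
    · obtain ⟨k, hk, hck⟩ := hBne
      have h1 : r < k := (Finset.mem_filter.1 hk).2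
      refine ⟨k - (r + 1), Finset.mem_image_of_mem _ hk, ?_⟩
      rwa [Nat.sub_add_cancel h1]
    · intro t ht
      exact S.notMem_K_succ (hT t ht)
    · intro t ht
      rw [hQ, Finset.sum_image hinj]
      have : ((G t : ℝ) : ℂ) = 0 := by rw [hT0 t ht]; simp
      rw [← this, hG]
      push_cast
      refine Finset.sum_congr rfl fun k hk => ?_
      have h1 : r < k := (Finset.mem_filter.1 hk).2
      rw [Nat.sub_add_cancel h1, ← u_ofReal, u, if_pos (show r + 1 ≤ k from h1)]
  have hZfin : {t ∈ Icc (S.a r) (S.b r) | G t = 0}.Finite := by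
    by_contra hinf
    obtain ⟨T, hT, hTc⟩ := Set.Infinite.exists_subset_card_eq hinf B.card
    have := hzer T (fun t ht => (hT ht).1) (fun t ht => (hT ht).2)
    omega
  set Z := hZfin.toFinset with hZ
  have hZmem : ∀ t, t ∈ Z ↔ t ∈ Icc (S.a r) (S.b r) ∧ G t = 0 := fun t => by simp [hZ]
  have hZcard : Z.card < B.card := hzer Z (fun t ht => ((hZmem t).1 ht).1)
    (fun t ht => ((hZmem t).1 ht).2)
  obtain ⟨Yy, hYZ, ε, hε, hpos⟩ := sign_lemma Z (Icc (S.a r) (S.b r)) ordConnected_Icc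
    (fun t => G t * ω t) (hGc.mul hω)
    (fun x hx h0 => (hZmem x).2 ⟨hx, (mul_eq_zero.1 h0).resolve_right (hω0 x hx)⟩)
    (fun x hx hxZ => by rw [((hZmem x).1 hxZ).2, zero_mul])
  have hYF : Yy.card + 1 ≤ F.card := by
    have := Finset.card_le_card hYZ
    omega
  obtain ⟨J', hJ'F, hJ'c⟩ := Finset.exists_subset_card_eq hYF
  -- linear algebra
  obtain ⟨d, hd0, hd⟩ : ∃ d : ℕ → ℝ, (∃ i ∈ J', d i ≠ 0) ∧
      ∀ y ∈ Yy, ∑ i ∈ J', d i * S.vr r i y = 0 := by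
    let L : (J' → ℝ) →ₗ[ℝ] (Yy → ℝ) :=
      { toFun := fun d y => ∑ i, d i * S.vr r i y
        map_add' := fun x y => by
          funext t; simp only [Pi.add_apply, add_mul, Finset.sum_add_distrib]
        map_smul' := fun x y => by
          funext t
          simp only [Pi.smul_apply, smul_eq_mul, RingHom.id_apply, Finset.mul_sum, mul_assoc] }
    have hk := LinearMap.ker_ne_bot_of_finrank_lt (f := L) (by simp [hJ'c])
    obtain ⟨x, hx, hx0⟩ := (Submodule.ne_bot_iff _).1 hk
    refine ⟨fun i => if h : i ∈ J' then x ⟨i, h⟩ else 0, ?_, ?_⟩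
    · by_contra hno
      push Not at hno
      apply hx0
      funext i
      have := hno i i.2
      simpa using this
    · intro y hy
      have := congrFun (LinearMap.mem_ker.1 hx) ⟨y, hy⟩
      change ∑ i, x i * S.vr r i y = 0 at this
      rw [← this, ← Finset.sum_coe_sort J']
      simp
  have hJr : ∀ i ∈ J', i ≤ r := fun i hi => by
    have := (Finset.mem_sdiff.1 (hJ'F hi)).1
    simpa [Nat.lt_succ_iff] using this
  have hinj : Set.InjOn (fun k => r - k) (J' : Set ℕ) := by
    intro x hx y hy hxy
    have h1 := hJr x hx
    have h2 := hJr y hy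
    simp only at hxy
    omega
  have hsum : ∀ t : ℝ, ∑ k ∈ J'.image (fun k => r - k), ((d (r - k) : ℝ) : ℂ) *
      NU k (fun l => S.ν (r - 1 - l)) (fun l => S.e (r - 1 - l)) t =
      ((∑ i ∈ J', d i * S.vr r i t : ℝ) : ℂ) := by
    intro t
    rw [Finset.sum_image hinj]
    push_cast
    refine Finset.sum_congr rfl fun k hk => ?_
    rw [Nat.sub_sub_self (hJr k hk), ← v_ofReal, v]
  obtain ⟨g, hgc, hg⟩ := lemC_quot (S.nsr r) (J'.image (fun k => r - k))
    (fun k hk => by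
      obtain ⟨i, _, rfl⟩ := Finset.mem_image.1 hk
      exact Finset.mem_range.2 (by omega))
    (fun k => d (r - k))
    (by
      obtain ⟨i, hi, hdi⟩ := hd0
      exact ⟨r - i, Finset.mem_image_of_mem _ hi, by rwa [Nat.sub_sub_self (hJr i hi)]⟩)
    Yy (fun t ht => S.notMem_rK r ((hZmem t).1 (hYZ ht)).1)
    (by rw [Finset.card_image_of_injOn hinj, hJ'c])
    (fun t ht => by rw [hsum, hd t ht]; simp)
  have hgc' : ContinuousOn g (Icc (S.a r) (S.b r)) := hgc.mono fun t ht => S.notMem_rK r ht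
  obtain ⟨s, hs0, hss, hs⟩ := sign_const hgc' fun t ht => (hg t (S.notMem_rK r ht)).1
  have hav : ∀ t ∈ Icc (S.a r) (S.b r), ∑ i ∈ J', d i * S.vr r i t = (∏ y ∈ Yy, (t - y)) * g t := by
    intro t ht
    have := (hg t (S.notMem_rK r ht)).2
    rw [hsum] at this
    exact_mod_cast this
  have hzero : ∫ t, (∑ i ∈ J', d i * S.vr r i t) * (G t * ω t) ∂(S.ν r) = 0 := by
    have e1 : (fun t => (∑ i ∈ J', d i * S.vr r i t) * (G t * ω t)) = fun t => ∑ i ∈ J',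
        d i * (S.vr r i t * (G t * ω t)) := by
      funext t; rw [Finset.sum_mul]; exact Finset.sum_congr rfl fun k _ => by ring
    rw [e1, integral_finsetSum]
    · refine Finset.sum_eq_zero fun i hi => ?_
      rw [integral_const_mul, hFo i (hJ'F hi), mul_zero]
    · intro k _
      exact ((S.gm r).integrable ((S.vr_cont r k).mul (hGc.mul hω))).const_mul _
  refine (S.gm r).integral_ne_zero
    (f := fun t => |g t| * (ε * (∏ y ∈ Yy, (t - y)) * (G t * ω t))) ?_ ?_ Z ?_ ?_
  · refine hgc'.abs.mul (ContinuousOn.mul (Continuous.continuousOn ?_) (hGc.mul hω))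
    exact continuous_const.mul (continuous_finsetProd _ fun y _ => by fun_prop)
  · intro t ht
    exact mul_nonneg (abs_nonneg _) (hpos t ht)
  · intro t ht h0
    have hg0 := (hg t (S.notMem_rK r ht)).1
    have hε0 : ε ≠ 0 := by rcases hε with rfl | rfl <;> norm_num
    by_cases htY : t ∈ Yy
    · exact hYZ htY
    have hp0 : ∏ y ∈ Yy, (t - y) ≠ 0 :=
      Finset.prod_ne_zero_iff.2 fun y hy h => htY (by rw [sub_eq_zero.1 h]; exact hy)
    rw [mul_eq_zero, or_iff_right (abs_ne_zero.2 hg0), mul_eq_zero,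
      or_iff_right (mul_ne_zero hε0 hp0), mul_eq_zero, or_iff_left (hω0 t ht)] at h0
    exact (hZmem t).2 ⟨ht, h0⟩
  · have e2 : ∀ t ∈ Icc (S.a r) (S.b r), |g t| * (ε * (∏ y ∈ Yy, (t - y)) * (G t * ω t)) =
        (s * ε) * ((∑ i ∈ J', d i * S.vr r i t) * (G t * ω t)) := by
      intro t ht
      rw [hav t ht]
      have := hs t ht
      have : |g t| = s * g t := by rw [this, ← mul_assoc, hss, one_mul, abs_mul, abs_abs, show |s| = 1 by
        rcases mul_self_eq_one_iff.1 hss with rfl | rfl <;> simp, one_mul]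
      rw [this]; ring
    rw [(S.gm r).integral_congr e2, integral_const_mul, hzero, mul_zero]

lemma NV (r : ℕ) (P : Fin (r + 1) → ℕ) (hP : Function.Injective P) (ω : ℝ → ℝ)
    (hω : ContinuousOn ω (Icc (S.a r) (S.b r))) (hω0 : ∀ t ∈ Icc (S.a r) (S.b r), ω t ≠ 0) :
    Matrix.det (Matrix.of fun i j : Fin (r + 1) => ((S.mm r ω i (P j) : ℝ) : ℂ)) ≠ 0 := by
  have e : Matrix.det (Matrix.of fun i j : Fin (r + 1) => ((S.mm r ω i (P j) : ℝ) : ℂ)) =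
      ((Matrix.det (Matrix.of fun i j : Fin (r + 1) => S.mm r ω i (P j)) : ℝ) : ℂ) := by
    have := RingHom.map_det Complex.ofRealHom (Matrix.of fun i j : Fin (r + 1) => S.mm r ω i (P j))
    exact this.symm
  rw [e, Ne, Complex.ofReal_eq_zero]
  intro h0
  obtain ⟨x, hx0, hx⟩ := Matrix.exists_mulVec_eq_zero_iff.2 h0
  have key := S.NV0 r (Finset.univ.image P) (by rw [Finset.card_image_of_injective _ hP]; simp) ω hω
    hω0 (Function.extend P x 0) (fun i hi => by
      rw [Finset.sum_image hP.injOn]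
      have := congrFun hx ⟨i, Nat.lt_succ_of_le hi⟩
      simp only [Matrix.mulVec, dotProduct, Matrix.of_apply, Pi.zero_apply] at this
      rw [← this]
      exact Finset.sum_congr rfl fun j _ => by rw [hP.extend_apply])
  apply hx0
  funext j
  have := key (P j) (Finset.mem_image_of_mem _ (Finset.mem_univ _))
  rwa [hP.extend_apply] at this
end Sys

namespace Sys
variable (S : Sys)

def bigs (r : ℕ) {n : ℕ} (P : Fin n → ℕ) : ℕ := ∑ j, if r < P j then 1 else 0

lemma integral_mm (r i k : ℕ) (ω : ℝ → ℝ) :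
    ∫ t, S.v r i t * S.u (r + 1) k t * (ω t : ℂ) ∂(S.ν r) =
      ((∫ t, S.vr r i t * S.ur (r + 1) k t * ω t ∂(S.ν r) : ℝ) : ℂ) := by
  rw [← integral_complex_ofReal]
  congr 1; funext t
  rw [v_ofReal, u_ofReal]; push_cast; rfl

lemma D_real_ne (r : ℕ) (P : Fin (r + 1) → ℕ) (hP : Function.Injective P) (x : ℝ)
    (hx : (x : ℂ) ∉ S.K r) : S.D r P x ≠ 0 := by
  have hx' : ∀ t ∈ Icc (S.a r) (S.b r), x - t ≠ 0 := by
    intro t ht h0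
    have := sub_ne_of_notMem hx ht
    apply this
    rw [← Complex.ofReal_sub, h0, Complex.ofReal_zero]
  have := S.NV r P hP (fun t => 1 / (x - t))
    (continuousOn_const.div (continuousOn_const.sub continuousOn_id) hx')
    (fun t ht => one_div_ne_zero (hx' t ht))
  suffices e : (Matrix.of fun i j : Fin (r + 1) => S.Y r i (P j) (x:ℂ)) =
      Matrix.of (fun i j : Fin (r + 1) => ((S.mm r (fun t => 1 / (x - t)) i (P j)   : ℝ) : ℂ)) by
    rw [D, e]; exact this
  ext i j
  simp only [Matrix.of_apply, Y, mm]
  split_ifs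
  · simp
  · simp
  · push_cast
    rw [← integral_mm, CT]
    congr 2
    funext t
    push_cast; ring

lemma D_lim (r : ℕ) (P : Fin (r + 1) → ℕ) (hP : Function.Injective P) :
    ∃ L : ℂ, L ≠ 0 ∧ Tendsto (fun z => z ^ (bigs r P) * S.D r P z) (cocompact ℂ) (𝓝 L) := by
  refine ⟨_, S.NV r P hP (fun _ => 1) continuousOn_const (fun _ _ => one_ne_zero), ?_⟩
  have e : ∀ z : ℂ, z ^ (bigs r P) * S.D r P z = Matrix.det (Matrix.of fun i j : Fin (r + 1) =>
      (if r < P j then z else 1) * S.Y r i (P j) z) := by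
    intro z
    have := Matrix.det_mul_row (fun j => if r < P j then z else 1)
      (Matrix.of fun i j : Fin (r + 1) => S.Y r i (P j) z)
    rw [bigs, ← Finset.prod_pow_eq_pow_sum, D]
    have h2 : (∏ i, z ^ (if r < P i then 1 else 0)) = ∏ i, (if r < P i then z else 1) :=
      Finset.prod_congr rfl fun i _ => by split_ifs <;> simp
    rw [h2]; exact this.symm
  simp only [e]
  refine ((continuous_id.matrix_det).tendsto _).comp ?_
  refine tendsto_pi_nhds.2 fun i => tendsto_pi_nhds.2 fun j => ?_
  simp only [Matrix.of_apply, mm]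
  by_cases h : P j ≤ r
  · simp only [h, if_true, not_lt.2 h, if_false, Y, one_mul]
    split_ifs <;> simp
  · simp only [h, if_false, not_le.1 h, if_true, Y]
    have h1 := (CT_mul_tendsto (S.gm r) (S.vu_cont r i (P j))).const_mul ((-1) ^ (r - (i:ℕ)) * (S.e r : ℂ))
    have h2 := S.integral_mm r i (P j) (fun _ => 1)
    simp only [Complex.ofReal_one, mul_one] at h2
    rw [h2] at h1
    convert h1 using 1
    · funext z; ring
    · push_cast; simp
end Sys

end Nik

namespace Nik
open scoped Topology
namespace Sys
variable (S : Sys)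

def cn {r : ℕ} (x : ℕ) (P : Fin r → ℕ) : Fin (r + 1) → ℕ := Fin.cons x P

@[simp] lemma cn_zero {r : ℕ} (x : ℕ) (P : Fin r → ℕ) : cn x P 0 = x := rfl
@[simp] lemma cn_succ {r : ℕ} (x : ℕ) (P : Fin r → ℕ) (j : Fin r) : cn x P j.succ = P j := rfl

lemma cn_inj {r : ℕ} {x : ℕ} {P : Fin r → ℕ} (hP : Function.Injective P) (hx : x ∉ range P) :
    Function.Injective (cn x P) := Fin.cons_injective_iff.2 ⟨hx, hP⟩

lemma cn_inj_iff {r : ℕ} {x : ℕ} {P : Fin r → ℕ} :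
    Function.Injective (cn x P) ↔ x ∉ range P ∧ Function.Injective P := Fin.cons_injective_iff

lemma range_cn {r : ℕ} (x : ℕ) (P : Fin r → ℕ) : range (cn x P) = insert x (range P) :=
  Fin.range_cons x P

lemma bigs_cn (R : ℕ) {r : ℕ} (x : ℕ) (P : Fin r → ℕ) :
    bigs R (cn x P) = (if R < x then 1 else 0) + bigs R P := by
  rw [bigs, Fin.sum_univ_succ]; rfl

lemma pl (r : ℕ) (P : Fin r → ℕ) (x y w : ℕ) {z : ℂ} (hz : z ∉ S.K r) (hz' : z ∉ S.K (r + 1)) :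
    S.D r (cn x P) z * S.D (r + 1) (cn y (cn w P)) z =
    S.D r (cn y P) z * S.D (r + 1) (cn x (cn w P)) z +
    S.D r (cn w P) z * S.D (r + 1) (cn y (cn x P)) z := S.plucker r P x y w hz hz'

lemma cn_swap {r : ℕ} (x : ℕ) (P : Fin r → ℕ) (i j : Fin r) :
    cn x (P ∘ Equiv.swap i j) = cn x P ∘ Equiv.swap i.succ j.succ := by
  funext t
  refine Fin.cases ?_ (fun t => ?_) t
  · rw [Function.comp_apply, Equiv.swap_apply_of_ne_of_ne (Fin.succ_ne_zero _).symm
      (Fin.succ_ne_zero _).symm]; rfl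
  · rw [cn_succ, Function.comp_apply, Function.comp_apply, ← (Fin.succ_injective r).map_swap]; rfl

lemma cn_comm (r : ℕ) (P : Fin r → ℕ) (x y : ℕ) (z : ℂ) :
    S.D (r + 1) (cn x (cn y P)) z = - S.D (r + 1) (cn y (cn x P)) z := by
  rw [← S.D_swap (r + 1) _ 0 1 (by simp)]
  congr 1
  funext t
  refine Fin.cases ?_ (fun t => Fin.cases ?_ (fun t => ?_) t) t
  · rfl
  · simp; rfl
  · rw [Function.comp_apply, Equiv.swap_apply_of_ne_of_ne]
    · rfl
    · exact Fin.succ_ne_zero _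
    · intro h; exact Fin.succ_ne_zero t (Fin.succ_injective _ h)

lemma isOpen_O (r : ℕ) (Q : Fin (r + 1) → ℕ) : IsOpen {z | z ∉ S.K r ∧ S.D r Q z ≠ 0} := by
  have := (S.D_diff r Q).continuousOn.isOpen_inter_preimage (isOpen_KKc _ _) (isOpen_compl_singleton (x := (0:ℂ)))
  exact this

lemma ratio_diff (r : ℕ) (P Q : Fin (r + 1) → ℕ) :
    DifferentiableOn ℂ (fun z => S.D r P z / S.D r Q z) {z | z ∉ S.K r ∧ S.D r Q z ≠ 0} :=
  ((S.D_diff r P).mono fun _ h => h.1).fun_div ((S.D_diff r Q).mono fun _ h => h.1) fun _ h => h.2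

lemma D_re (r : ℕ) (P : Fin (r + 1) → ℕ) (x : ℝ) : S.D r P x = ((S.D r P x).re : ℂ) :=
  Complex.ext (by simp) (by simpa using (S.D_CS r P).im x)

lemma ratio_im (r : ℕ) (P Q : Fin (r + 1) → ℕ) (x : ℝ) : (S.D r P x / S.D r Q x).im = 0 := by
  rw [S.D_re, S.D_re r Q, ← Complex.ofReal_div, Complex.ofReal_im]

lemma im_mul {x y : ℂ} (hx : x.im = 0) (hy : y.im = 0) : (x * y).im = 0 := by simp [hx, hy]

lemma ev_ne : ∀ᶠ z : ℂ in cocompact ℂ, z ≠ 0 := by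
  filter_upwards [(tendsto_norm_cocompact_atTop (E := ℂ)).eventually_gt_atTop 0] with z hz
  exact norm_pos_iff.1 hz

lemma inv_lim : Tendsto (fun z : ℂ => z⁻¹) (cocompact ℂ) (𝓝 0) := by
  rw [← Metric.cobounded_eq_cocompact]; exact tendsto_inv₀_cobounded

lemma ratio_lim (r : ℕ) (P Q : Fin (r + 1) → ℕ) (hP : Function.Injective P)
    (hQ : Function.Injective Q) : ∃ L : ℂ, L ≠ 0 ∧
    Tendsto (fun z => z ^ (bigs r P) * (S.D r P z / S.D r Q z) / z ^ (bigs r Q)) (cocompact ℂ)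
      (𝓝 L) := by
  obtain ⟨L, hL, h1⟩ := S.D_lim r P hP
  obtain ⟨L', hL', h2⟩ := S.D_lim r Q hQ
  refine ⟨L / L', div_ne_zero hL hL', (h1.div h2 hL').congr fun z => ?_⟩
  by_cases hz : z = 0
  · subst hz
    by_cases hb : bigs r Q = 0
    · simp [hb]; ring
    · simp [hb]
  · have : z ^ bigs r Q ≠ 0 := pow_ne_zero _ hz
    by_cases hq : S.D r Q z = 0
    · simp [hq]
    · simp only [Pi.div_apply]; field_simp

def Rel (r k q : ℕ) (P : Fin r → ℕ) : Prop :=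
  ∃ κ : Measure ℝ, ∃ ψ : ℝ → ℂ, GM κ (S.a r) (S.b r) ∧ ContinuousOn ψ (Icc (S.a r) (S.b r)) ∧
    (∀ t ∈ Icc (S.a r) (S.b r), (ψ t).im = 0) ∧ (∀ t ∈ Icc (S.a r) (S.b r), ψ t ≠ 0) ∧
    ∀ z ∉ S.K r, S.D r (cn q P) z = CT κ ψ z * S.D r (cn k P) z

def AA (r k : ℕ) (P : Fin r → ℕ) : Prop :=
  (∀ z ∉ S.K r, S.D r (cn k P) z ≠ 0) ∧ ∀ q, r < q → q ∉ range P → S.Rel r k q P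

lemma AA.big {r k : ℕ} {P : Fin r → ℕ} (h : S.AA r k P) {q : ℕ} (hq : r < q) (hqP : q ∉ range P) :
    ∀ z ∉ S.K r, S.D r (cn q P) z ≠ 0 := by
  obtain ⟨h1, h2⟩ := h
  obtain ⟨κ, ψ, hκ, hc, hr, h0, he⟩ := h2 q hq hqP
  obtain ⟨τ, hτ, p, hp, s, hs, hh⟩ := lemT' hκ hc hr h0
  intro z hz
  rw [he z hz]
  exact mul_ne_zero (left_ne_zero_of_mul_eq_one (hh z hz)) (h1 z hz)

lemma AA_swap {r k : ℕ} {P : Fin r → ℕ} (i j : Fin r) (h : S.AA r k (P ∘ Equiv.swap i j)) :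
    S.AA r k P := by
  have key : ∃ s : ℂ, s ≠ 0 ∧ ∀ x z, S.D r (cn x (P ∘ Equiv.swap i j)) z = s * S.D r (cn x P) z := by
    by_cases hij : i = j
    · subst hij; exact ⟨1, one_ne_zero, fun x z => by simp⟩
    · refine ⟨-1, by simp, fun x z => ?_⟩
      rw [cn_swap, S.D_swap _ _ _ _ (fun h => hij (Fin.succ_injective _ h))]; ring
  obtain ⟨s, hs, key⟩ := key
  have hrange : range (P ∘ Equiv.swap i j) = range P := EquivLike.range_comp P (Equiv.swap i j)
  refine ⟨fun z hz h0 => h.1 z hz (by rw [key, h0, mul_zero]), fun q hq hqP => ?_⟩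
  obtain ⟨κ, ψ, hκ, hc, hr, h0, he⟩ := h.2 q hq (by rwa [hrange])
  refine ⟨κ, ψ, hκ, hc, hr, h0, fun z hz => ?_⟩
  have := he z hz
  rw [key, key] at this
  apply mul_left_cancel₀ hs
  rw [this]; ring

lemma u_ne {r q : ℕ} (h : r < q) {t : ℝ} (ht : t ∈ S.I r) : S.u (r + 1) q t ≠ 0 := by
  intro h0
  have := lemC_zeros (S.ns (r + 1) (q - (r + 1))) {q - (r + 1)} (by simp) (fun _ => 1) (by simp)
    {t} (by intro t' ht'; rw [Finset.mem_singleton.1 ht']; exact S.notMem_K_succ ht) (by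
      intro t' ht'
      rw [Finset.mem_singleton.1 ht']
      rw [u, if_pos (show r + 1 ≤ q from h)] at h0
      simpa using h0)
  simp at this

lemma v_ne {r k : ℕ} (h : k ≤ r) {t : ℝ} (ht : t ∈ S.I r) : S.v r k t ≠ 0 := by
  intro h0
  have := lemC_zeros (S.nsr r) {r - k} (by simp) (fun _ => 1) (by simp)
    {t} (by simpa using S.notMem_rK r ht) (by
      intro t' ht'
      rw [Finset.mem_singleton.1 ht']
      rw [v] at h0
      simpa using h0)
  simp at this

lemma AA_base (r k : ℕ) (P : Fin r → ℕ) (hP : Function.Injective P) (hb : bigs r P = 0)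
    (hk : k ≤ r) (hkP : k ∉ range P) : S.AA r k P := by
  have hsm : ∀ j, P j ≤ r := by
    intro j
    have := (Finset.sum_eq_zero_iff.1 hb) j (Finset.mem_univ _)
    by_contra h
    simp [not_le.1 h] at this
  let kk : Fin (r + 1) := ⟨k, Nat.lt_succ_of_le hk⟩
  obtain ⟨c, hc⟩ : ∃ c : ℂ, ∀ x z, S.D r (cn x P) z = S.Y r k x z * c := by
    refine ⟨(-1) ^ k * Matrix.det (Matrix.of fun (i j : Fin r) =>
      if ((kk.succAbove i : Fin (r + 1)) : ℕ) = P j then (1 : ℂ) else 0), fun x z => ?_⟩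
    rw [D, Matrix.det_succ_row _ kk, Fin.sum_univ_succ, Finset.sum_eq_zero, add_zero]
    · simp only [Matrix.of_apply, cn_zero]
      have : (Matrix.of fun i j : Fin (r + 1) => S.Y r i (cn x P j) z).submatrix kk.succAbove
          (Fin.succAbove 0) = Matrix.of fun (i j : Fin r) =>
            if ((kk.succAbove i : Fin (r + 1)) : ℕ) = P j then (1 : ℂ) else 0 := by
        ext i j
        change S.Y r _ (P j) z = _
        rw [Y, if_pos (hsm j)]; simp
      rw [this]
      simp only [kk, Fin.val_zero, add_zero]
      ring
    · intro j _
      simp only [Matrix.of_apply, cn_succ]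
      rw [Y, if_pos (hsm j), if_neg (fun h => hkP ⟨j, h.symm⟩)]
      simp
  have hYk : ∀ z, S.Y r k k z = 1 := fun z => by simp [Y, hk]
  have hc0 : c ≠ 0 := by
    obtain ⟨x, hx⟩ : ∃ x : ℝ, (x : ℂ) ∉ S.K r :=
      ⟨S.b r + 1, fun h => by have := (ofReal_mem_KK.1 h).2; linarith⟩
    have := S.D_real_ne r (cn k P) (cn_inj hP hkP) x hx
    rwa [hc, hYk, one_mul] at this
  refine ⟨fun z _ => by rw [hc, hYk, one_mul]; exact hc0, fun q hq hqP => ?_⟩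
  refine ⟨S.ν r, fun t => ((-1) ^ (r - k) * S.e r) * (S.v r k t * S.u (r + 1) q t), S.gm r,
    continuousOn_const.mul (S.vu_cont r k q), ?_, ?_, ?_⟩
  · intro t _
    beta_reduce
    rw [S.v_ofReal, S.u_ofReal]
    norm_cast
  · intro t ht
    have := S.sg r
    have h2 : (S.e r : ℂ) ≠ 0 := by exact_mod_cast this
    exact mul_ne_zero (mul_ne_zero (by simp) h2) (mul_ne_zero (S.v_ne hk ht) (S.u_ne hq ht))
  · intro z hz
    rw [hc, hc, hYk, one_mul, CT_const_mul, Y, if_neg (not_le.2 hq)]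
end Sys

end Nik

namespace Nik
open scoped Topology
namespace Sys
variable (S : Sys)

lemma exists_small {r : ℕ} (P : Fin r → ℕ) : ∃ l ≤ r, l ∉ range P := by
  by_contra h
  push Not at h
  have h1 : Finset.range (r + 1) ⊆ Finset.univ.image P := by
    intro l hl
    obtain ⟨j, hj⟩ := h l (Nat.lt_succ_iff.1 (Finset.mem_range.1 hl))
    exact Finset.mem_image.2 ⟨j, Finset.mem_univ _, hj⟩
  have h2 := (Finset.card_le_card h1).trans Finset.card_image_le
  simp at h2

lemma K_sub_succ (r : ℕ) (Q : Fin (r + 2) → ℕ) (hQ : Function.Injective Q) :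
    KK (S.a r) (S.b r) ⊆ {z | z ∉ S.K (r + 1) ∧ S.D (r + 1) Q z ≠ 0} := by
  rintro z ⟨t, ht, rfl⟩
  exact ⟨S.notMem_K_succ ht, S.D_real_ne _ _ hQ _ (S.notMem_K_succ ht)⟩

lemma K_sub_pred (r : ℕ) (Q : Fin (r + 1) → ℕ) (hQ : Function.Injective Q) :
    KK (S.a (r + 1)) (S.b (r + 1)) ⊆ {z | z ∉ S.K r ∧ S.D r Q z ≠ 0} := by
  rintro z ⟨t, ht, rfl⟩
  exact ⟨S.notMem_K_pred ht, S.D_real_ne _ _ hQ _ (S.notMem_K_pred ht)⟩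

lemma ratio_zero (r : ℕ) (P Q : Fin (r + 1) → ℕ) (hP : Function.Injective P)
    (hQ : Function.Injective Q) (h : bigs r P = bigs r Q + 1) :
    Tendsto (fun z => S.D r P z / S.D r Q z) (cocompact ℂ) (𝓝 0) := by
  obtain ⟨L, _, h1⟩ := S.ratio_lim r P Q hP hQ
  have := h1.mul inv_lim
  rw [mul_zero] at this
  refine this.congr' ?_
  filter_upwards [ev_ne] with z hz
  rw [h, pow_succ]; field_simp

lemma AA_step (α : ℕ) (ih : ∀ r k (P : Fin r → ℕ), Function.Injective P → bigs r P = α → k ≤ r →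
      k ∉ range P → S.AA r k P)
    (r k p : ℕ) (P0 : Fin r → ℕ) (hP : Function.Injective (cn p P0)) (hb : bigs (r + 1) (cn p P0) = α + 1)
    (hp : r + 1 < p) (hk : k ≤ r + 1) (hkP : k ∉ range (cn p P0)) : S.AA (r + 1) k (cn p P0) := by
  obtain ⟨hpP0, hP0⟩ := cn_inj_iff.1 hP
  have hkP0 : k ∉ range P0 := fun h => hkP (by rw [range_cn]; exact Or.inr h)
  have hkp : k ≠ p := by omega
  set P' := cn k P0 with hP'
  have hP'i : Function.Injective P' := cn_inj hP0 hkP0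
  have hb' : bigs (r + 1) P' = α := by
    rw [bigs_cn] at hb ⊢
    rw [if_pos hp] at hb
    rw [if_neg (by omega)]; omega
  obtain ⟨l, hl, hlP'⟩ := exists_small P'
  have A1 := ih (r + 1) l P' hP'i hb' hl hlP'
  have hpP' : p ∉ range P' := by
    rw [hP', range_cn]; rintro (h | h)
    · exact hkp h.symm
    · exact hpP0 h
  have hkD : ∀ z ∉ S.K (r + 1), S.D (r + 1) (cn k (cn p P0)) z ≠ 0 := by
    intro z hz
    rw [S.cn_comm]
    exact neg_ne_zero.2 (A1.big S hp hpP' z hz)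
  refine ⟨hkD, fun q hq hqP => ?_⟩
  have hqp : q ≠ p := fun h => hqP (by rw [range_cn]; exact Or.inl h)
  have hqP0 : q ∉ range P0 := fun h => hqP (by rw [range_cn]; exact Or.inr h)
  have hqk : q ≠ k := by omega
  have hqP' : q ∉ range P' := by
    rw [hP', range_cn]; rintro (h | h)
    · exact hqk h
    · exact hqP0 h
  have hpD := A1.big S hp hpP'
  obtain ⟨κ, ψ, hκ, hc, hr, h0, he⟩ := A1.2 p hp hpP'
  obtain ⟨τ, hτ, pp, hpp, s, hs, hh⟩ := lemT' hκ hc hr h0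
  have hlp : ∀ z ∉ S.K (r + 1), aeval z pp + CT τ (fun _ => (s : ℂ)) z =
      S.D (r + 1) (cn l P') z / S.D (r + 1) (cn p P') z := by
    intro z hz
    rw [he z hz, eq_div_iff (mul_ne_zero (left_ne_zero_of_mul_eq_one (hh z hz)) (A1.1 z hz))]
    linear_combination S.D (r + 1) (cn l P') z * hh z hz
  have hpl : Function.Injective (cn p (cn l P')) := cn_inj (cn_inj hP'i hlP') (by
    rw [range_cn]; rintro (h | h)
    · omega
    · exact hpP' h)
  have hpq : Function.Injective (cn p (cn q P')) := cn_inj (cn_inj hP'i hqP') (by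
    rw [range_cn]; rintro (h | h)
    · exact hqp h.symm
    · exact hpP' h)
  obtain ⟨E1, hE1, hE1e⟩ := Glue hτ (S.isOpen_O (r + 2) (cn p (cn l P'))) (S.K_sub_succ _ _ hpl)
    (V := fun z => S.D (r + 2) (cn p (cn q P')) z / S.D (r + 2) (cn p (cn l P')) z)
    (E := fun z => S.D (r + 2) (cn q (cn l P')) z / S.D (r + 2) (cn p (cn l P')) z)
    (ent := fun z => aeval z pp) (ψ := fun _ => (s : ℂ))
    (G := fun z => S.D (r + 1) (cn q P') z / S.D (r + 1) (cn p P') z)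
    (S.ratio_diff _ _ _) (S.ratio_diff _ _ _) (aeval_diff pp) continuousOn_const
    ((S.ratio_diff _ _ _).mono fun z hz => ⟨hz, hpD z hz⟩)
    (by
      rintro z ⟨hz1, hz2⟩ hz
      rw [hlp z hz]
      have := S.pl (r + 1) P' q p l hz hz1
      have h3 := hpD z hz
      field_simp
      linear_combination this)
  have hkP0i : Function.Injective (cn k P0) := hP'i
  set ψ2 : ℝ → ℂ := fun t => S.D (r + 2) (cn p (cn q P')) t / S.D (r + 2) (cn p (cn l P')) t * (s : ℂ)
    with hψ2
  have hψ2c : ContinuousOn ψ2 (Icc (S.a (r + 1)) (S.b (r + 1))) := by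
    refine ContinuousOn.mul ?_ continuousOn_const
    exact (S.ratio_diff (r + 2) _ _).continuousOn.comp Complex.continuous_ofReal.continuousOn
      fun t ht => S.K_sub_succ _ _ hpl (ofReal_mem_KK.2 ht)
  obtain ⟨E2, hE2, hE2e⟩ := Glue hτ (S.isOpen_O r (cn k P0)) (S.K_sub_pred _ _ hkP0i)
    (V := fun z => - (S.D r (cn p P0) z / S.D r (cn k P0) z))
    (E := fun z => S.D r (cn q P0) z / S.D r (cn k P0) z)
    (ent := E1) (ψ := ψ2)
    (G := fun z => S.D (r + 1) (cn q (cn p P0)) z / S.D (r + 1) (cn k (cn p P0)) z)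
    (S.ratio_diff _ _ _).fun_neg (S.ratio_diff _ _ _) hE1 hψ2c
    ((S.ratio_diff _ _ _).mono fun z hz => ⟨hz, hkD z hz⟩)
    (by
      rintro z ⟨hz1, hz2⟩ hz
      rw [← hE1e z hz]
      have := S.pl r P0 k p q hz1 hz
      have h3 := hpD z hz
      have h4 := S.cn_comm r P0 q p z
      have h5 := S.cn_comm r P0 k q z
      have h6 := S.cn_comm r P0 k p z
      rw [← hP'] at h5 h6 this
      rw [h4, h6]
      rw [h5] at this
      field_simp
      linear_combination this)
  refine ⟨τ, fun t => - (S.D r (cn p P0) t / S.D r (cn k P0) t) * ψ2 t, hτ, ?_, ?_, ?_, ?_⟩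
  · refine ContinuousOn.mul ?_ hψ2c
    exact (S.ratio_diff r _ _).fun_neg.continuousOn.comp Complex.continuous_ofReal.continuousOn
      fun t ht => S.K_sub_pred _ _ hkP0i (ofReal_mem_KK.2 ht)
  · intro t ht
    refine im_mul (by rw [Complex.neg_im, ratio_im, neg_zero]) (im_mul (S.ratio_im _ _ _ _) (by simp))
  · intro t ht
    have e1 := S.notMem_K_pred ht
    have e2 := S.notMem_K_succ ht
    refine mul_ne_zero (neg_ne_zero.2 (div_ne_zero (S.D_real_ne _ _ hP _ e1)
      (S.D_real_ne _ _ hP'i _ e1))) (mul_ne_zero (div_ne_zero (S.D_real_ne _ _ hpq _ e2)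
      (S.D_real_ne _ _ hpl _ e2)) (by exact_mod_cast hs))
  · have hl := S.ratio_zero (r + 1) (cn q (cn p P0)) (cn k (cn p P0)) (cn_inj hP hqP)
      (cn_inj hP hkP) (by rw [bigs_cn, bigs_cn (r + 1) k, if_pos hq, if_neg (by omega)]; omega)
    have := Engine0 hτ (w := fun _ => 1) (by fun_prop) (by simp)
      ((S.ratio_diff _ _ _).mono fun z hz => ⟨hz, hkD z hz⟩) hE2
      (φ := fun t => - (S.D r (cn p P0) t / S.D r (cn k P0) t) * ψ2 t) (by
        refine ContinuousOn.mul ?_ hψ2c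
        exact (S.ratio_diff r _ _).fun_neg.continuousOn.comp Complex.continuous_ofReal.continuousOn
          fun t ht => S.K_sub_pred _ _ hkP0i (ofReal_mem_KK.2 ht))
      (fun z hz => by rw [one_mul]; exact hE2e z hz) hl
    intro z hz
    have h1 := this z hz
    simp only [div_one] at h1
    rw [← h1, div_mul_cancel₀ _ (hkD z hz)]

lemma AA_all (α : ℕ) : ∀ r k (P : Fin r → ℕ), Function.Injective P → bigs r P = α → k ≤ r →
      k ∉ range P → S.AA r k P := by
  induction α with
  | zero => exact fun r k P hP hb hk hkP => S.AA_base r k P hP hb hk hkP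
  | succ α ih =>
    intro r k P hP hb hk hkP
    obtain ⟨j, hj⟩ : ∃ j, r < P j := by
      by_contra h
      push Not at h
      rw [bigs, Finset.sum_eq_zero (fun j _ => by rw [if_neg (not_lt.2 (h j))])] at hb
      omega
    obtain _ | r := r
    · exact j.elim0
    apply S.AA_swap 0 j
    have hc : ∀ Q : Fin (r + 1) → ℕ, Q = cn (Q 0) (fun i => Q i.succ) := by
      intro Q; funext t
      exact Fin.cases rfl (fun _ => rfl) t
    have hinj : Function.Injective (P ∘ Equiv.swap 0 j) := hP.comp (Equiv.injective _)
    have hran : range (P ∘ Equiv.swap 0 j) = range P := EquivLike.range_comp P _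
    have hbb : bigs (r + 1) (P ∘ Equiv.swap 0 j) = α + 1 := by
      rw [← hb]
      exact Equiv.sum_comp (Equiv.swap 0 j) (fun j => if r + 1 < P j then 1 else 0)
    rw [← hran] at hkP
    rw [hc (P ∘ Equiv.swap 0 j)] at hinj hbb hkP ⊢
    exact S.AA_step α ih r k _ _ hinj hbb (by simpa using hj) hk hkP

lemma AA_main {r k : ℕ} {P : Fin r → ℕ} (hP : Function.Injective P) (hk : k ≤ r)
    (hkP : k ∉ range P) : S.AA r k P := S.AA_all _ r k P hP rfl hk hkP

lemma D_ne {r k : ℕ} {P : Fin r → ℕ} (hP : Function.Injective P) (hkP : k ∉ range P) :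
    ∀ z ∉ S.K r, S.D r (cn k P) z ≠ 0 := by
  by_cases hk : k ≤ r
  · exact (S.AA_main hP hk hkP).1
  · obtain ⟨l, hl, hlP⟩ := exists_small P
    exact (S.AA_main hP hl hlP).big S (not_le.1 hk) hkP
end Sys

end Nik

namespace Nik
open scoped Topology
namespace Sys
variable (S : Sys)

lemma exists_large {r : ℕ} (P : Fin r → ℕ) : ∃ l > r, l ∉ range P := by
  refine ⟨r + 1 + ∑ j, P j, by omega, ?_⟩
  rintro ⟨j, hj⟩
  have := Finset.single_le_sum (f := P) (fun _ _ => Nat.zero_le _) (Finset.mem_univ j)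
  omega

lemma Gex {r q : ℕ} {P : Fin r → ℕ} (hP : Function.Injective P) (hq : q ∉ range P) :
    ∃ k', k' ∉ range P ∧ k' ≠ q ∧ ∃ κ : Measure ℝ, ∃ ψ : ℝ → ℂ, ∃ ent : ℂ → ℂ,
      GM κ (S.a r) (S.b r) ∧ ContinuousOn ψ (Icc (S.a r) (S.b r)) ∧
      (∀ t ∈ Icc (S.a r) (S.b r), (ψ t).im = 0) ∧ (∀ t ∈ Icc (S.a r) (S.b r), ψ t ≠ 0) ∧
      Differentiable ℂ ent ∧
      ∀ z ∉ S.K r, S.D r (cn k' P) z / S.D r (cn q P) z = ent z + CT κ ψ z := by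
  by_cases hqr : q ≤ r
  · obtain ⟨k', hk', hk'P⟩ := exists_large P
    obtain ⟨h1, h2⟩ := S.AA_main hP hqr hq
    obtain ⟨κ, ψ, hκ, hc, hr, h0, he⟩ := h2 k' hk' hk'P
    refine ⟨k', hk'P, by omega, κ, ψ, fun _ => 0, hκ, hc, hr, h0, by fun_prop, fun z hz => ?_⟩
    rw [he z hz, mul_div_cancel_right₀ _ (h1 z hz), zero_add]
  · obtain ⟨l, hl, hlP⟩ := exists_small P
    obtain ⟨h1, h2⟩ := S.AA_main hP hl hlP
    obtain ⟨κ, ψ, hκ, hc, hr, h0, he⟩ := h2 q (not_le.1 hqr) hq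
    obtain ⟨τ, hτ, pp, hpp, s, hs, hh⟩ := lemT' hκ hc hr h0
    refine ⟨l, hlP, by omega, τ, fun _ => (s : ℂ), fun z => aeval z pp, hτ, continuousOn_const,
      by simp, fun _ _ => Complex.ofReal_ne_zero.2 hs, aeval_diff pp, fun z hz => ?_⟩
    rw [he z hz, div_eq_iff (mul_ne_zero (left_ne_zero_of_mul_eq_one (hh z hz)) (h1 z hz))]
    linear_combination (-S.D r (cn l P) z) * hh z hz

lemma term_lim {r q k : ℕ} {P : Fin r → ℕ} (hP : Function.Injective P) (hq : q ∉ range P)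
    (hk : k ∉ range P) {h : ℝ[X]} {nk nq M d : ℕ} (hdeg : h.degree < nk)
    (hn : nk < nq ∨ (nk = nq ∧ q ≤ k)) (hd : M + nq ≤ d) :
    Tendsto (fun z => z ^ M * (aeval z h * (S.D r (cn k P) z / S.D r (cn q P) z)) / z ^ d)
      (cocompact ℂ) (𝓝 0) := by
  have h1 := poly_lim h nk (natDegree_le_of_degree_le hdeg.le)
  rw [coeff_eq_zero_of_degree_lt hdeg, Complex.ofReal_zero] at h1
  obtain ⟨L, _, h2⟩ := S.ratio_lim r _ _ (cn_inj hP hk) (cn_inj hP hq)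
  rw [bigs_cn, bigs_cn r q] at h2
  set bk := if r < k then 1 else 0 with hbk
  set bq := if r < q then 1 else 0 with hbq
  have hle : nk + bq + M ≤ d + bk := by
    rw [hbk, hbq]; split_ifs <;> omega
  obtain ⟨e, he⟩ := Nat.exists_eq_add_of_le hle
  have h3 := (h1.mul h2).mul (inv_lim.pow e)
  rw [zero_mul, zero_mul] at h3
  refine h3.congr' ?_
  filter_upwards [ev_ne] with z hz
  have e1 : z ^ d * z ^ bk = z ^ nk * z ^ bq * z ^ M * z ^ e := by
    rw [← pow_add, he]; simp only [pow_add]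
  rw [inv_pow, pow_add, pow_add]
  have n1 := pow_ne_zero nk hz
  have n2 := pow_ne_zero bq hz
  have n3 := pow_ne_zero (bigs r P) hz
  have n4 := pow_ne_zero e hz
  have n5 := pow_ne_zero d hz
  generalize S.D r (cn k P) z / S.D r (cn q P) z = ρ
  generalize z ^ nk = x1 at *
  generalize z ^ bq = x2 at *
  generalize z ^ bigs r P = x3 at *
  generalize z ^ e = x4 at *
  generalize z ^ d = x5 at *
  generalize z ^ bk = x6 at *
  generalize z ^ M = x7 at *
  field_simp
  linear_combination (aeval z h * ρ) * e1

lemma Main (n : ℕ → ℕ) (h : ℕ → ℝ[X]) (c : ℕ) : ∀ (Rm : Finset ℕ), Rm.card = c →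
    ∀ (r : ℕ) (P : Fin r → ℕ), Function.Injective P → (∀ k ∈ Rm, k ∉ range P) →
    (∀ k ∈ Rm, (h k).degree < n k) → (∃ k ∈ Rm, h k ≠ 0) → ∀ (w : ℝ[X]) (H : ℂ → ℂ),
    (∀ z ∈ S.K r, aeval z w ≠ 0) → DifferentiableOn ℂ H (S.K r)ᶜ →
    (∀ z ∉ S.K r, ∑ k ∈ Rm, aeval z (h k) * S.D r (cn k P) z = aeval z w * H z) →
    w.natDegree < ∑ k ∈ Rm, n k := by
  induction c with
  | zero =>
    intro Rm hc r P _ _ _ hne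
    obtain ⟨k, hk, _⟩ := hne
    rw [Finset.card_eq_zero.1 hc] at hk
    simp at hk
  | succ c ih =>
    intro Rm hc r P hP hRP hdeg hne w H hw hH heq
    by_contra hlt
    push Not at hlt
    -- choose q
    obtain ⟨q, hq, hqmax⟩ : ∃ q ∈ Rm, ∀ k ∈ Rm, n k < n q ∨ (n k = n q ∧ q ≤ k) := by
      have hRne : Rm.Nonempty := Finset.card_pos.1 (by omega)
      obtain ⟨q0, hq0, hmax⟩ := Finset.exists_max_image Rm n hRne
      obtain ⟨q, hq, hmin⟩ := Finset.exists_min_image (Rm.filter (fun k => n k = n q0)) id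
        ⟨q0, by simp [hq0]⟩
      obtain ⟨hq1, hq2⟩ := Finset.mem_filter.1 hq
      refine ⟨q, hq1, fun k hk => ?_⟩
      have := hmax k hk
      by_cases hkq : n k = n q0
      · exact Or.inr ⟨by rw [hkq, hq2], hmin k (by simp [hk, hkq])⟩
      · left; omega
    have hqP := hRP q hq
    have hDq := S.D_ne hP hqP
    set M := ∑ k ∈ Rm.erase q, n k with hM
    have hMq : M + n q = ∑ k ∈ Rm, n k := Finset.sum_erase_add _ _ hq
    set F : ℂ → ℂ := fun z => ∑ k ∈ Rm, aeval z (h k) * (S.D r (cn k P) z / S.D r (cn q P) z) with hF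
    have hFd : DifferentiableOn ℂ F (S.K r)ᶜ := DifferentiableOn.fun_sum fun k _ =>
      (aeval_diff _).differentiableOn.fun_mul
        ((S.ratio_diff _ _ _).mono fun z hz => ⟨hz, hDq z hz⟩)
    set H' : ℂ → ℂ := fun z => H z / S.D r (cn q P) z with hH'
    have hH'd : DifferentiableOn ℂ H' (S.K r)ᶜ := hH.fun_div (S.D_diff _ _) hDq
    have hwH : ∀ z ∉ S.K r, aeval z w * H' z = F z := by
      intro z hz
      rw [hH', hF]
      beta_reduce
      rw [← mul_div_assoc, ← heq z hz, Finset.sum_div]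
      exact Finset.sum_congr rfl fun k _ => by rw [mul_div_assoc]
    have hw0 : w ≠ 0 := by
      rintro rfl
      exact hw (S.a r) (ofReal_mem_KK.2 ⟨le_rfl, (S.gm r).lt.le⟩) (by simp)
    have hlimM : Tendsto (fun z => z ^ M * H' z) (cocompact ℂ) (𝓝 0) := by
      refine H_lim hw0 M ?_ ?_ (F := F)
      · filter_upwards [eventually_notMem_KK (S.a r) (S.b r)] with z hz using hwH z hz
      · have := tendsto_finsetSum (Rm) fun k hk => S.term_lim hP hqP (hRP k hk) (hdeg k hk)
          (hqmax k hk) (hMq.le.trans hlt)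
        rw [Finset.sum_const_zero] at this
        refine this.congr fun z => ?_
        rw [hF]; beta_reduce
        rw [Finset.mul_sum, Finset.sum_div]
    have hlim0 := tendsto_zero_of_pow hlimM
    by_cases hoth : ∃ k ∈ Rm.erase q, h k ≠ 0
    swap
    · push Not at hoth
      have hq0 : h q ≠ 0 := by
        obtain ⟨k, hk, hk0⟩ := hne
        by_cases hkq : k = q
        · rwa [← hkq]
        · exact absurd (hoth k (Finset.mem_erase.2 ⟨hkq, hk⟩)) hk0
      have hFq : ∀ z ∉ S.K r, F z = aeval z (h q) := by
        intro z hz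
        rw [hF]; beta_reduce
        rw [← Finset.add_sum_erase _ _ hq, div_self (hDq z hz), mul_one, Finset.sum_eq_zero, add_zero]
        intro k hk
        rw [hoth k hk]; simp
      have := Engine0 (S.gm r) (aeval_diff w) hw hH'd (aeval_diff (h q)) (φ := fun _ => 0)
        continuousOn_const (fun z hz => by
          rw [hwH z hz, hFq z hz]; simp [CT]) hlim0
      have hev : ∀ᶠ z : ℂ in cocompact ℂ, False := by
        filter_upwards [eventually_notMem_KK (S.a r) (S.b r), eventually_aeval_ne hq0] with z hz h1
        apply h1
        rw [← hFq z hz, ← hwH z hz, this z hz]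
        simp [CT]
      exact hev.exists.choose_spec
    -- general case
    obtain ⟨k', hk'P, hk'q, κ, ψ, ent, hκ, hψc, hψr, hψ0, hent, hG2⟩ := S.Gex hP hqP
    have hqk' : Function.Injective (cn q (cn k' P)) := cn_inj (cn_inj hP hk'P) (by
      rw [range_cn]; rintro (h | h)
      · exact hk'q h.symm
      · exact hqP h)
    set O := {z | z ∉ S.K (r + 1) ∧ S.D (r + 1) (cn q (cn k' P)) z ≠ 0} with hO
    have hKO := S.K_sub_succ r _ hqk'
    set V : ℂ → ℂ := fun z => ∑ k ∈ Rm, aeval z (h k) *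
      (S.D (r + 1) (cn q (cn k P)) z / S.D (r + 1) (cn q (cn k' P)) z) with hV
    have hVd : DifferentiableOn ℂ V O := DifferentiableOn.fun_sum fun k _ =>
      (aeval_diff _).differentiableOn.fun_mul (S.ratio_diff _ _ _)
    obtain ⟨E1, hE1, hE1e⟩ := Glue hκ (S.isOpen_O (r + 1) (cn q (cn k' P))) hKO (V := V)
      (E := fun z => ∑ k ∈ Rm, aeval z (h k) *
        (S.D (r + 1) (cn k (cn k' P)) z / S.D (r + 1) (cn q (cn k' P)) z)) hVd
      (DifferentiableOn.fun_sum fun k _ =>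
        (aeval_diff _).differentiableOn.fun_mul (S.ratio_diff _ _ _)) hent hψc hFd
      (by
        rintro z ⟨hz1, hz2⟩ hz
        rw [← hG2 z hz, hF, hV]
        beta_reduce
        rw [Finset.sum_mul, ← Finset.sum_add_distrib]
        refine Finset.sum_congr rfl fun k _ => ?_
        have := S.pl r P k q k' hz hz1
        have h3 := hDq z hz
        field_simp
        linear_combination (aeval z (h k)) * this)
    have hVc : ContinuousOn (fun t : ℝ => V t * ψ t) (Icc (S.a r) (S.b r)) :=
      (hVd.continuousOn.comp Complex.continuous_ofReal.continuousOn
        fun t ht => hKO (ofReal_mem_KK.2 ht)).mul hψc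
    have hVr : ∀ t : ℝ, (V t).im = 0 := by
      intro t
      rw [hV]; beta_reduce
      rw [Complex.im_sum]
      exact Finset.sum_eq_zero fun k _ => im_mul ((aeval_CS (h k)).im t) (S.ratio_im _ _ _ _)
    obtain ⟨T, hT, hTc, hT0⟩ := Engine hκ (aeval_diff w) hw (fun x => (aeval_CS w).im x) hH'd hE1
      hVc (fun x hx => im_mul (hVr x) (hψr x hx)) (fun z hz => by rw [hwH z hz]; exact hE1e z hz)
      M hlim0 hlimM
    have hΦd : DifferentiableOn ℂ (fun z => ∑ k ∈ Rm.erase q, aeval z (h k) *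
        S.D (r + 1) (cn k (cn q P)) z) (S.K (r + 1))ᶜ := DifferentiableOn.fun_sum fun k _ =>
      (aeval_diff _).differentiableOn.fun_mul (S.D_diff _ _)
    obtain ⟨H2, hH2, hH2e⟩ := Div (isOpen_KKc _ _) T _ hΦd (fun t ht => by
      refine ⟨S.notMem_K_succ (hT ht), ?_⟩
      have h1 := hT0 t ht
      have h2 := (mul_eq_zero.1 h1).resolve_right (hψ0 t (hT ht))
      have h3 := (hKO (ofReal_mem_KK.2 (hT ht))).2
      rw [hV] at h2
      beta_reduce at h2
      have h4 : ∑ k ∈ Rm, aeval (t:ℂ) (h k) * S.D (r + 1) (cn q (cn k P)) t = 0 := by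
        have : (∑ k ∈ Rm, aeval (t:ℂ) (h k) * S.D (r + 1) (cn q (cn k P)) t) /
            S.D (r + 1) (cn q (cn k' P)) t = 0 := by
          rw [← h2, Finset.sum_div]
          exact Finset.sum_congr rfl fun k _ => by rw [mul_div_assoc]
        exact (div_eq_zero_iff.1 this).resolve_right h3
      rw [← Finset.add_sum_erase _ _ hq, S.D_eq_zero (r + 1) (cn q (cn q P)) 0 1 (by simp) rfl,
        mul_zero, zero_add] at h4
      rw [← neg_eq_zero, ← Finset.sum_neg_distrib, ← h4]
      exact Finset.sum_congr rfl fun k _ => by rw [S.cn_comm r P k q]; ring)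
    have := ih (Rm.erase q) (by rw [Finset.card_erase_of_mem hq, hc]; rfl) (r + 1) (cn q P)
      (cn_inj hP hqP) (fun k hk => by
        rw [range_cn]; rintro (h | h)
        · exact (Finset.mem_erase.1 hk).1 h
        · exact hRP k (Finset.mem_erase.1 hk).2 h)
      (fun k hk => hdeg k (Finset.mem_erase.1 hk).2) hoth _ H2
      (fun z hz => prodT_ne fun t ht h => S.notMem_K_succ (hT ht) (by rw [h]; exact hz)) hH2 hH2e
    rw [natDegree_prodT, hTc] at this
    exact lt_irrefl _ this
end Sys

end Nik

namespace Nik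
open scoped Topology

lemma GM_of_msupport {μ : Measure ℝ} (hf : IsFiniteMeasure μ) {a b : ℝ}
    (hh : convexHull ℝ (msupport μ) = Icc a b) (hi : (msupport μ).Infinite) : GM μ a b := by
  refine ⟨hf, ?_, ?_⟩
  · have e : msupport μ = μ.support := by
      ext x
      rw [Measure.mem_support_iff_forall]
      constructor
      · intro h U hU
        obtain ⟨V, hVU, hV, hx⟩ := mem_nhds_iff.1 hU
        exact (pos_iff_ne_zero.2 (h V hV hx)).trans_le (measure_mono hVU)
      · intro h U hU hx
        exact (h U (hU.mem_nhds hx)).ne'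
    refine measure_mono_null ?_ (Measure.measure_compl_support (μ := μ))
    rw [← e, ← hh]
    exact compl_subset_compl.2 (subset_convexHull ℝ _)
  · intro Z
    obtain ⟨x, hx, hxZ⟩ := hi.exists_notMem_finset Z
    exact hx _ Z.finite_toSet.isClosed.isOpen_compl hxZ

lemma GM_vol (x : ℝ) : GM (volume.restrict (Icc x (x + 1))) x (x + 1) := by
  refine ⟨⟨by simp⟩, ?_, ?_⟩
  · rw [Measure.restrict_apply measurableSet_Icc.compl]; simp
  · intro Z
    rw [Measure.restrict_apply Z.finite_toSet.isClosed.measurableSet.compl, inter_comm, ← diff_eq,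
      measure_diff_null (Z.finite_toSet.measure_zero _)]
    simp

lemma final
    (m : ℕ) (μ : ℕ → Measure ℝ) (e : ℕ → ℝ) (a b : ℕ → ℝ)
    (hfin : ∀ j, IsFiniteMeasure (μ j))
    (hsgn : ∀ j, e j = 1 ∨ e j = -1)
    (hhull : ∀ j, 1 ≤ j → j ≤ m → convexHull ℝ (msupport (μ j)) = Set.Icc (a j) (b j))
    (hinf : ∀ j, 1 ≤ j → j ≤ m → (msupport (μ j)).Infinite)
    (hdisj : ∀ j, 1 ≤ j → j < m →
      Set.Icc (a j) (b j) ∩ Set.Icc (a (j + 1)) (b (j + 1)) = ∅)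
    (n : ℕ → ℕ)
    (h : ℕ → Polynomial ℝ)
    (hdeg : ∀ i ≤ m, (h i).degree < (n i : WithBot ℕ))
    (hne : ∃ i ≤ m, h i ≠ 0)
    (c d : ℝ) (hcd : Set.Icc c d ∩ Set.Icc (a 1) (b 1) = ∅) :
    CZerosLT
      (fun z => Polynomial.aeval z (h 0) +
        ∑ k ∈ Finset.Icc 1 m, Polynomial.aeval z (h k) * nikhat μ e 1 (k - 1) z)
      (cpx (Set.Icc c d))
      (∑ i ∈ Finset.range (m + 1), n i) := by
  set A : ℝ := |b m| + |d| + 1 with hA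
  have hbA : b m < A := by have := le_abs_self (b m); have := abs_nonneg d; linarith
  have hdA : d < A := by have := le_abs_self d; have := abs_nonneg (b m); linarith
  let S : Sys :=
    { ν := fun l => if l < m then μ (l + 1) else volume.restrict (Icc (A + 2 * l) (A + 2 * l + 1))
      e := fun l => if l < m then e (l + 1) else 1
      a := fun l => if l < m then a (l + 1) else A + 2 * l
      b := fun l => if l < m then b (l + 1) else A + 2 * l + 1
      gm := fun l => by
        by_cases hl : l < m
        · simp only [hl, if_true]
          exact GM_of_msupport (hfin _) (hhull _ (by omega) (by omega)) (hinf _ (by omega) (by omega))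
        · simp only [hl, if_false]
          exact GM_vol _
      sg := fun l => by
        split_ifs
        · rcases hsgn (l + 1) with h | h <;> rw [h] <;> norm_num
        · exact one_ne_zero
      dj := fun l => by
        by_cases hl : l + 1 < m
        · simp only [hl, if_true, show l < m by omega]
          exact Set.disjoint_iff_inter_eq_empty.2 (hdisj (l + 1) (by omega) hl)
        · by_cases hl' : l < m
          · simp only [hl, if_false, hl', if_true]
            obtain rfl : l + 1 = m := by omega
            rw [Set.disjoint_left]
            intro x hx hx'
            have h1 := hx.2
            have h2 := hx'.1
            push_cast at h2
            have : (0:ℝ) ≤ l := Nat.cast_nonneg l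
            linarith
          · simp only [hl, if_false, hl']
            rw [Set.disjoint_left]
            intro x hx hx'
            have h1 := hx.2
            have h2 := hx'.1
            push_cast at h2
            linarith }
  have hν : ∀ l < m, S.ν l = μ (l + 1) := fun l hl => if_pos hl
  have he : ∀ l < m, S.e l = e (l + 1) := fun l hl => if_pos hl
  have hnik : ∀ g i z, i + 1 + g ≤ m → nikhat μ e (i + 1) g z = S.u i (i + 1 + g) z := by
    intro g
    induction g with
    | zero =>
      intro i z hi
      rw [S.u_rec (by omega), he i (by omega), hν i (by omega), nikhat, CT]
      simp only [add_zero, Sys.u_self]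
    | succ g ih =>
      intro i z hi
      rw [S.u_rec (by omega), he i (by omega), hν i (by omega), nikhat, CT]
      congr 2
      funext t
      rw [ih (i + 1) t (by omega), show i + 1 + 1 + g = i + 1 + (g + 1) by omega]
  have hD : ∀ k z, S.D 0 (Sys.cn k Fin.elim0) z = S.u 0 k z := by
    intro k z
    rw [Sys.D, Matrix.det_fin_one]
    simp only [Matrix.of_apply, Sys.cn_zero]
    by_cases hk : k = 0
    · subst hk; simp [Sys.Y, Sys.u_self]
    · rw [S.u_rec (Nat.pos_of_ne_zero hk)]
      simp [Sys.Y, hk, Sys.v_self]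
  have hΦ : (fun z : ℂ => Polynomial.aeval z (h 0) +
        ∑ k ∈ Finset.Icc 1 m, Polynomial.aeval z (h k) * nikhat μ e 1 (k - 1) z) =
      fun z => ∑ k ∈ Finset.range (m + 1), aeval z (h k) * S.D 0 (Sys.cn k Fin.elim0) z := by
    funext z
    rw [Finset.range_eq_Ico, Finset.sum_eq_sum_Ico_succ_bot (by omega), hD, S.u_self, mul_one]
    congr 1
    refine Finset.sum_congr ?_ fun k hk => ?_
    · ext k; simp [Nat.lt_succ_iff]
    · have := Finset.mem_Ico.1 hk
      rw [hD]
      have h2 := hnik (k - 1) 0 z (by omega)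
      rw [zero_add] at h2
      rw [h2, show 1 + (k - 1) = k by omega]
  rw [hΦ]
  intro T ord hT hT0
  have hcK : ∀ x ∈ cpx (Icc c d), x ∉ S.K 0 := by
    rintro x ⟨t, ht, rfl⟩ hx
    have hx' := ofReal_mem_KK.1 hx
    by_cases hm : 0 < m
    · have e1 : S.a 0 = a 1 := if_pos hm
      have e2 : S.b 0 = b 1 := if_pos hm
      rw [e1, e2] at hx'
      have : t ∈ Icc c d ∩ Icc (a 1) (b 1) := ⟨ht, hx'⟩
      rw [hcd] at this
      exact this
    · have e1 : S.a 0 = A + 2 * ((0:ℕ):ℝ) := if_neg hm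
      rw [e1] at hx'
      have h1 := hx'.1
      have h2 := ht.2
      simp at h1
      linarith
  obtain ⟨H, hH, hHe⟩ := DivM (isOpen_KKc (S.a 0) (S.b 0)) ord T _
    (DifferentiableOn.fun_sum fun k _ =>
      (aeval_diff (h k)).differentiableOn.fun_mul (S.D_diff 0 _))
    (fun x hx => ⟨hcK x (hT hx), hT0 x hx⟩)
  have hw : ∀ z : ℂ, aeval z (∏ x ∈ T, (X - C x.re) ^ ord x : ℝ[X]) = ∏ x ∈ T, (z - x) ^ ord x := by
    intro z
    rw [map_prod]
    refine Finset.prod_congr rfl fun x hx => ?_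
    obtain ⟨t, ht, rfl⟩ := hT hx
    simp
  have hwd : (∏ x ∈ T, (X - C x.re) ^ ord x : ℝ[X]).natDegree = ∑ x ∈ T, ord x := by
    rw [natDegree_prod_of_monic _ _ fun y _ => (monic_X_sub_C y.re).pow _]
    exact Finset.sum_congr rfl fun x _ => by rw [natDegree_pow, natDegree_X_sub_C, mul_one]
  rw [← hwd]
  refine S.Main n h _ (Finset.range (m + 1)) rfl 0 Fin.elim0 (fun x => x.elim0) (by simp)
    (fun k hk => hdeg k (Nat.lt_succ_iff.1 (Finset.mem_range.1 hk))) ?_ _ H ?_ hH ?_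
  · obtain ⟨i, hi, h0⟩ := hne
    exact ⟨i, by simp; omega, h0⟩
  · intro z hz
    rw [hw]
    refine Finset.prod_ne_zero_iff.2 fun x hx => pow_ne_zero _ (sub_ne_zero.2 ?_)
    rintro rfl
    exact hcK _ (hT hx) hz
  · intro z hz
    rw [hw]; exact hHe z hz

end Nik

/-- **AT-system property of Nikishin systems.**
If `(s_1,…,s_m) = N(σ_1,…,σ_m)` and `n ∈ ℤ₊^{m+1}(*)`, then `(1, ŝ_1, …, ŝ_m)` is an
AT-system for `n` on every closed interval `[c,d]` disjoint from `Co(supp σ_1)`: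
every nontrivial form `h_0 + ∑_{k=1}^m h_k ŝ_k` with `deg h_i ≤ n_i - 1` has at most
`|n| - 1` zeros on `[c,d]`, counting multiplicities. -/
theorem nikishin_AT_system
    (m : ℕ) (μ : ℕ → Measure ℝ) (e : ℕ → ℝ) (a b : ℕ → ℝ)
    (hfin : ∀ j, IsFiniteMeasure (μ j))
    (hsgn : ∀ j, e j = 1 ∨ e j = -1)
    (hhull : ∀ j, 1 ≤ j → j ≤ m → convexHull ℝ (msupport (μ j)) = Set.Icc (a j) (b j))
    (hinf : ∀ j, 1 ≤ j → j ≤ m → (msupport (μ j)).Infinite)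
    (hdisj : ∀ j, 1 ≤ j → j < m →
      Set.Icc (a j) (b j) ∩ Set.Icc (a (j + 1)) (b (j + 1)) = ∅)
    (n : ℕ → ℕ) (hstar : StarIdx m n)
    (h : ℕ → Polynomial ℝ)
    (hdeg : ∀ i ≤ m, (h i).degree < (n i : WithBot ℕ))
    (hne : ∃ i ≤ m, h i ≠ 0)
    (c d : ℝ) (hcd : Set.Icc c d ∩ Set.Icc (a 1) (b 1) = ∅) :
    CZerosLT
      (fun z => Polynomial.aeval z (h 0) +
        ∑ k ∈ Finset.Icc 1 m, Polynomial.aeval z (h k) * nikhat μ e 1 (k - 1) z)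
      (cpx (Set.Icc c d))
      (∑ i ∈ Finset.range (m + 1), n i) := by
  exact Nik.final m μ e a b hfin hsgn hhull hinf hdisj n h hdeg hne c d hcd

end
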